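/- arXiv:2210.09093 — 9 statements merged into one kernel-verified Lean document; each statement's English description precedes it below -/
import Mathlib

section
/- Let f(x₁,...,xₙ) be a real analytic function on a neighborhood of the origin in ℝⁿ, not identically zero. Then there exist η > 0 and a positive integer p such that for every (x₁,...,x_{n−1}) in the (n−1)-dimensional open ball B_{n−1}(0,η) and every s ∈ ℝ, either f(x₁,...,x_{n−1},xₙ) = s for all xₙ with |xₙ| < η, or the equation f(x₁,...,x_{n−1},xₙ) = s has at most p solutions xₙ with |xₙ| < η. -/
open Set MeasureTheory

/-!
The level `s` is treated as one more parameter: with `y = (x', s)` recentred at `(0, f 0)`, the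
question becomes a uniform bound for the number of small zeros `t` of an analytic germ `Φ (y, t)`
(levels far from `f 0` are not attained near the origin). This is Bautin's argument, and it rests on
a form of the Noether property of the ring of germs that keeps track of convergence.

Expanding in the last variable, `Φ (y, t) = ∑ c_k(y) (t / ρ) ^ k`, turns `Φ` into an analytic germ
`Ψ` with values in the Banach space `ℕ →ᵇ ℝ` of bounded coefficient sequences (`exists_curry`). The
key point (`finGen`) is that there are finitely many indices `k_j` and analytic germs `h_j` with
values in `ℕ →ᵇ ℝ` such that `Ψ y = ∑ c_{k_j}(y) • h_j(y)`. Hence `‖Ψ y‖ ≤ C max_j |c_{k_j}(y)|` near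
the origin: either `Ψ y = 0`, and `Φ (y, ·)` vanishes identically, or some coefficient of index `k_j`
dominates. In the latter case the `k_j`-th derivative in `t` has no zero in a fixed neighbourhood,
and Rolle's theorem gives at most `k_j` zeros (`card_zeros_le`).

`finGen` is proved for germs with values in any Banach space `B` with a separating family of
functionals, by induction on the dimension. Some component `ℓ ∘ Φ` of a nonzero germ is nonzero, and
it may be assumed not to vanish identically on the last axis. Weierstrass division, carried out for
`B`-valued germs (`exists_division`), gives `Φ = (ℓ ∘ Φ) • Q + ∑_{i < e} t ^ i • r_i` with `r_i` germs
in one variable less, to which the induction hypothesis applies; applying the functionals to the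
division formula expresses the components of the `r_i` through those of `Φ` (`finGen_prod`). The
division itself amounts to inverting an operator on `ℕ →ᵇ B` which, after a rescaling of the
variable, is close to the identity.
-/

namespace BautinBound

open Filter Topology
open scoped BoundedContinuousFunction NNReal ENNReal

universe u

/-! ### Power series with bounded coefficient sequences -/

variable {B : Type*} [NormedAddCommGroup B] [NormedSpace ℝ B]

/-- The bounded linear operator on bounded sequences given by a coefficientwise formula `φ` with
`‖φ c k‖ ≤ ‖c‖`. -/
noncomputable def seqOp (φ : (ℕ →ᵇ B) →ₗ[ℝ] (ℕ → B)) (hφ : ∀ c k, ‖φ c k‖ ≤ ‖c‖) :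
    (ℕ →ᵇ B) →L[ℝ] (ℕ →ᵇ B) :=
  LinearMap.mkContinuous
    { toFun := fun c => BoundedContinuousFunction.ofNormedAddCommGroupDiscrete (φ c) ‖c‖ (hφ c)
      map_add' := fun c d => by ext k; simp
      map_smul' := fun a c => by ext k; simp } 1
    (fun c => by
      rw [one_mul]
      exact (BoundedContinuousFunction.norm_le (norm_nonneg _)).2 (hφ c))

theorem seqOp_apply (φ : (ℕ →ᵇ B) →ₗ[ℝ] (ℕ → B)) (hφ : ∀ c k, ‖φ c k‖ ≤ ‖c‖) (c : ℕ →ᵇ B)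
    (k : ℕ) : seqOp φ hφ c k = φ c k := rfl

theorem norm_seqOp_le (φ : (ℕ →ᵇ B) →ₗ[ℝ] (ℕ → B)) (hφ : ∀ c k, ‖φ c k‖ ≤ ‖c‖) :
    ‖seqOp φ hφ‖ ≤ 1 := LinearMap.mkContinuous_norm_le _ zero_le_one _

/-- The right shift on coefficient sequences, i.e. multiplication by the variable. -/
noncomputable def rshift : (ℕ →ᵇ B) →L[ℝ] (ℕ →ᵇ B) :=
  seqOp
    { toFun := fun c k => Nat.casesOn k 0 (fun n => c n)
      map_add' := fun c d => by ext k; cases k <;> simp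
      map_smul' := fun a c => by ext k; cases k <;> simp }
    (fun c k => by
      cases k with
      | zero => simp
      | succ n => exact c.norm_coe_le_norm n)

/-- The left shift on coefficient sequences. -/
noncomputable def lshift : (ℕ →ᵇ B) →L[ℝ] (ℕ →ᵇ B) :=
  seqOp
    { toFun := fun c k => c (k + 1)
      map_add' := fun c d => by ext k; simp
      map_smul' := fun a c => by ext k; simp }
    (fun c k => c.norm_coe_le_norm (k + 1))

/-- The dilation `c_k ↦ q ^ k c_k` on coefficient sequences, i.e. rescaling the variable by `q`. -/
noncomputable def dil (q : ℝ) (hq : |q| ≤ 1) : (ℕ →ᵇ B) →L[ℝ] (ℕ →ᵇ B) :=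
  seqOp
    { toFun := fun c k => q ^ k • c k
      map_add' := fun c d => by ext k; simp
      map_smul' := fun a c => by ext k; exact smul_comm _ _ _ }
    (fun c k => by
      change ‖q ^ k • c k‖ ≤ ‖c‖
      rw [norm_smul, norm_pow, Real.norm_eq_abs]
      calc |q| ^ k * ‖c k‖ ≤ 1 * ‖c k‖ := by
            gcongr
            exact pow_le_one₀ (abs_nonneg q) hq
        _ ≤ ‖c‖ := by rw [one_mul]; exact c.norm_coe_le_norm k)

@[simp] theorem rshift_zero (c : ℕ →ᵇ B) : rshift c 0 = 0 := rfl
@[simp] theorem rshift_succ (c : ℕ →ᵇ B) (k : ℕ) : rshift c (k + 1) = c k := rfl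
@[simp] theorem lshift_apply (c : ℕ →ᵇ B) (k : ℕ) : lshift c k = c (k + 1) := rfl
@[simp] theorem dil_apply (q : ℝ) (hq : |q| ≤ 1) (c : ℕ →ᵇ B) (k : ℕ) :
    dil q hq c k = q ^ k • c k := rfl

theorem norm_rshift_le : ‖(rshift : (ℕ →ᵇ B) →L[ℝ] (ℕ →ᵇ B))‖ ≤ 1 := norm_seqOp_le _ _
theorem norm_lshift_le : ‖(lshift : (ℕ →ᵇ B) →L[ℝ] (ℕ →ᵇ B))‖ ≤ 1 := norm_seqOp_le _ _

theorem norm_pow_le_one {A : Type*} [NormedAddCommGroup A] [NormedSpace ℝ A] (T : A →L[ℝ] A)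
    (hT : ‖T‖ ≤ 1) (k : ℕ) : ‖T ^ k‖ ≤ 1 := by
  induction k with
  | zero => exact ContinuousLinearMap.norm_id_le
  | succ n ih =>
    rw [pow_succ]
    exact (norm_mul_le _ _).trans (mul_le_one₀ ih (norm_nonneg _) hT)

@[simp] theorem lshift_pow_apply (e : ℕ) (c : ℕ →ᵇ B) (k : ℕ) : (lshift ^ e) c k = c (k + e) := by
  induction e generalizing c k with
  | zero => rfl
  | succ n ih =>
    rw [pow_succ, mul_apply_eq_comp, ih, lshift_apply]
    rfl

/-- The `k`-th coefficient functional. -/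
noncomputable def coef (k : ℕ) : (ℕ →ᵇ B) →L[ℝ] B := BoundedContinuousFunction.evalCLM ℝ k

@[simp] theorem coef_apply (k : ℕ) (c : ℕ →ᵇ B) : coef k c = c k := rfl

theorem norm_coef_le (k : ℕ) : ‖(coef k : (ℕ →ᵇ B) →L[ℝ] B)‖ ≤ 1 :=
  ContinuousLinearMap.opNorm_le_bound _ zero_le_one fun c => by
    rw [one_mul]; exact c.norm_coe_le_norm k

variable [CompleteSpace B]

/-- The sum `∑ τ ^ k c_k` of the power series with coefficient sequence `c`, as a bounded linear
functional of `c`; meaningful for `|τ| < 1`. -/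
noncomputable def ev (τ : ℝ) : (ℕ →ᵇ B) →L[ℝ] B := ∑' k, τ ^ k • coef k

theorem hasSum_ev {τ : ℝ} (hτ : |τ| < 1) :
    HasSum (fun k => τ ^ k • (coef k : (ℕ →ᵇ B) →L[ℝ] B)) (ev τ) := by
  refine Summable.hasSum (Summable.of_norm_bounded
    (summable_geometric_of_lt_one (abs_nonneg τ) hτ) fun k => ?_)
  rw [norm_smul, norm_pow, Real.norm_eq_abs]
  exact mul_le_of_le_one_right (by positivity) (norm_coef_le k)

theorem hasSum_ev_apply {τ : ℝ} (hτ : |τ| < 1) (c : ℕ →ᵇ B) :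
    HasSum (fun k => τ ^ k • c k) (ev τ c) := by
  have h := (ContinuousLinearMap.apply ℝ B c).hasSum (hasSum_ev (B := B) hτ)
  simpa only [ContinuousLinearMap.apply_apply, smul_apply, coef_apply] using h

theorem ev_eq_lshift {τ : ℝ} (hτ : |τ| < 1) (c : ℕ →ᵇ B) :
    ev τ c = c 0 + τ • ev τ (lshift c) := by
  have h1 := (hasSum_nat_add_iff' 1).2 (hasSum_ev_apply hτ c)
  have h2 := (hasSum_ev_apply hτ (lshift c)).const_smul τ
  have h3 : (fun k => τ • τ ^ k • (lshift c) k) = fun k => τ ^ (k + 1) • c (k + 1) := by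
    ext k; rw [lshift_apply, smul_smul, pow_succ, mul_comm]
  rw [h3] at h2
  have := h1.unique h2
  rw [← this]; simp

theorem ev_rshift {τ : ℝ} (hτ : |τ| < 1) (c : ℕ →ᵇ B) : ev τ (rshift c) = τ • ev τ c := by
  rw [ev_eq_lshift hτ]
  have : lshift (rshift c) = c := by ext k; rfl
  rw [this]; simp

theorem ev_rshift_pow {τ : ℝ} (hτ : |τ| < 1) (e : ℕ) (c : ℕ →ᵇ B) :
    ev τ ((rshift ^ e) c) = τ ^ e • ev τ c := by
  induction e generalizing c with
  | zero => simp
  | succ n ih =>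
    rw [pow_succ, mul_apply_eq_comp, ih, ev_rshift hτ, smul_smul, pow_succ]

theorem ev_lshift_pow {τ : ℝ} (hτ : |τ| < 1) (e : ℕ) (c : ℕ →ᵇ B) :
    ev τ c = ∑ i : Fin e, τ ^ (i : ℕ) • c i + τ ^ e • ev τ ((lshift ^ e) c) := by
  induction e with
  | zero => simp
  | succ n ih =>
    rw [ih, Fin.sum_univ_castSucc, ev_eq_lshift hτ ((lshift ^ n) c), pow_succ' lshift n,
      mul_apply_eq_comp, smul_add, smul_smul, pow_succ, add_assoc, lshift_pow_apply]
    simp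

theorem ev_dil {q τ : ℝ} (hq : |q| ≤ 1) (hτ : |τ| < 1) (c : ℕ →ᵇ B) :
    ev τ (dil q hq c) = ev (q * τ) c := by
  have hqτ : |q * τ| < 1 := by
    rw [abs_mul]; exact mul_lt_one_of_nonneg_of_lt_one_right hq (abs_nonneg _) hτ
  refine (hasSum_ev_apply hτ _).unique ?_
  convert hasSum_ev_apply hqτ c using 2 with k
  rw [dil_apply, smul_smul, mul_pow, mul_comm]

/-- The power series of `ev` at the origin, with coefficients the functionals `coef k`. -/
noncomputable def evSeries : FormalMultilinearSeries ℝ ℝ ((ℕ →ᵇ B) →L[ℝ] B) :=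
  fun k => ContinuousMultilinearMap.mkPiRing ℝ (Fin k) (coef k)

theorem ev_hasFPowerSeriesAt :
    HasFPowerSeriesAt (ev : ℝ → (ℕ →ᵇ B) →L[ℝ] B) evSeries 0 := by
  refine hasFPowerSeriesAt_iff.2 ?_
  filter_upwards [Metric.ball_mem_nhds (0 : ℝ) one_pos] with τ hτ
  rw [Metric.mem_ball, dist_zero_right, Real.norm_eq_abs] at hτ
  rw [zero_add]
  have h : (fun k => τ ^ k • (evSeries : FormalMultilinearSeries ℝ ℝ ((ℕ →ᵇ B) →L[ℝ] B)).coeff k)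
      = fun k => τ ^ k • coef k := by
    ext k : 1
    simp [FormalMultilinearSeries.coeff, evSeries]
  rw [h]
  exact hasSum_ev hτ

theorem ev_analyticAt : AnalyticAt ℝ (ev : ℝ → (ℕ →ᵇ B) →L[ℝ] B) 0 :=
  ev_hasFPowerSeriesAt.analyticAt

/-! ### Expansion of a germ in the last variable -/

variable {E : Type*} [NormedAddCommGroup E] [NormedSpace ℝ E]

/-- Cauchy estimates, jointly in both degrees, for the series recentred at a nearby point. -/
theorem norm_changeOriginSeries_mul_le (p : FormalMultilinearSeries ℝ E B) {r r' : ℝ≥0}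
    (hr : (r + r' : ℝ≥0∞) < p.radius) :
    ∃ K : ℝ, 0 ≤ K ∧ ∀ k l, ‖p.changeOriginSeries k l‖ * r ^ l * r' ^ k ≤ K := by
  have h := p.changeOriginSeries_summable_aux₁ hr
  refine ⟨((∑' s : Σ k l : ℕ, { s : Finset (Fin (k + l)) // s.card = l },
    ‖p (s.1 + s.2.1)‖₊ * r ^ s.2.1 * r' ^ s.1 : ℝ≥0) : ℝ), NNReal.coe_nonneg _, fun k l => ?_⟩
  have h1 : ‖p.changeOriginSeries k l‖₊ * r ^ l * r' ^ k ≤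
      ∑' s : Σ k l : ℕ, { s : Finset (Fin (k + l)) // s.card = l },
        ‖p (s.1 + s.2.1)‖₊ * r ^ s.2.1 * r' ^ s.1 := by
    calc ‖p.changeOriginSeries k l‖₊ * r ^ l * r' ^ k
        ≤ (∑' _ : { s : Finset (Fin (k + l)) // s.card = l }, ‖p (k + l)‖₊) * r ^ l * r' ^ k := by
          gcongr
          exact p.nnnorm_changeOriginSeries_le_tsum k l
      _ = ∑' _ : { s : Finset (Fin (k + l)) // s.card = l }, ‖p (k + l)‖₊ * r ^ l * r' ^ k := by
          rw [NNReal.tsum_mul_right, NNReal.tsum_mul_right]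
      _ ≤ ∑' x : Σ l : ℕ, { s : Finset (Fin (k + l)) // s.card = l },
            ‖p (k + x.1)‖₊ * r ^ x.1 * r' ^ k := by
          have hk : Summable fun x : Σ l : ℕ, { s : Finset (Fin (k + l)) // s.card = l } =>
            ‖p (k + x.1)‖₊ * r ^ x.1 * r' ^ k := (NNReal.summable_sigma.1 h).1 k
          exact NNReal.tsum_comp_le_tsum_of_inj hk
            (i := fun x : { s : Finset (Fin (k + l)) // s.card = l } => ⟨l, x⟩)
            (fun a b hab => eq_of_heq (Sigma.mk.inj hab).2)
      _ ≤ _ := NNReal.tsum_comp_le_tsum_of_inj h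
            (i := fun x : Σ l : ℕ, { s : Finset (Fin (k + l)) // s.card = l } => ⟨k, x⟩)
            (fun a b hab => eq_of_heq (Sigma.mk.inj hab).2)
  exact_mod_cast h1

/-- An analytic germ on `E × ℝ` is an analytic germ on `E` with values in a space of power series
in the last variable. -/
theorem exists_curry {Φ : E × ℝ → B} (hΦ : AnalyticAt ℝ Φ 0) :
    ∃ ρ : ℝ, 0 < ρ ∧ ∃ Ψ : E → (ℕ →ᵇ B), AnalyticAt ℝ Ψ 0 ∧
      ∀ᶠ z in 𝓝 (0 : E × ℝ), Φ z = ev (z.2 / ρ) (Ψ z.1) := by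
  obtain ⟨p, R, hp⟩ := hΦ
  obtain ⟨ρ₂, hρ₂, hρR⟩ := ENNReal.lt_iff_exists_nnreal_btwn.1 hp.r_pos
  have hρ₂' : 0 < ρ₂ := by exact_mod_cast hρ₂
  set ρ : ℝ≥0 := ρ₂ / 2 with hρdef
  have hρ : 0 < ρ := by positivity
  have hsum : ((ρ : ℝ≥0∞) + ρ) < R := by
    have : ρ + ρ = ρ₂ := add_halves ρ₂
    rw [← ENNReal.coe_add, this]; exact hρR
  obtain ⟨K, hK0, hK⟩ := norm_changeOriginSeries_mul_le p (hsum.trans_le hp.r_le)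
  -- the `k`-th coefficient of the degree `l` part of the curried series
  have hbd : ∀ (l : ℕ) (y : Fin l → E) (k : ℕ),
      ‖(ρ : ℝ) ^ k • p.changeOriginSeries k l (fun i => (y i, (0 : ℝ))) (fun _ => ((0 : E), (1 : ℝ)))‖
        ≤ K / ρ ^ l * ∏ i, ‖y i‖ := by
    intro l y k
    have h1 := ((p.changeOriginSeries k l) (fun i => (y i, (0 : ℝ)))).le_opNorm
      (fun _ => ((0 : E), (1 : ℝ)))
    have h2 := (p.changeOriginSeries k l).le_opNorm (fun i => (y i, (0 : ℝ)))
    have h3 : ‖p.changeOriginSeries k l‖ * ρ ^ k ≤ K / ρ ^ l := by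
      rw [le_div_iff₀ (by positivity)]
      calc _ = ‖p.changeOriginSeries k l‖ * ρ ^ l * ρ ^ k := by ring
        _ ≤ K := hK k l
    simp only [Prod.norm_mk, norm_zero, norm_one, Finset.prod_const, max_eq_left (norm_nonneg _),
      zero_le_one, max_eq_right, one_pow, mul_one] at h1 h2
    rw [norm_smul, norm_pow, Real.norm_eq_abs, NNReal.abs_eq]
    calc (ρ : ℝ) ^ k * _ ≤ (ρ : ℝ) ^ k * (‖p.changeOriginSeries k l‖ * ∏ i, ‖y i‖) := by
          gcongr; exact h1.trans h2
      _ = (‖p.changeOriginSeries k l‖ * ρ ^ k) * ∏ i, ‖y i‖ := by ring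
      _ ≤ _ := by gcongr
  let P : FormalMultilinearSeries ℝ E (ℕ →ᵇ B) := fun l =>
    MultilinearMap.mkContinuous
      { toFun := fun y => BoundedContinuousFunction.ofNormedAddCommGroupDiscrete
          (fun k => (ρ : ℝ) ^ k • p.changeOriginSeries k l (fun i => (y i, (0 : ℝ)))
            (fun _ => ((0 : E), (1 : ℝ)))) _ (hbd l y)
        map_update_add' := fun y i a b => by
          ext k
          have h (x : E) : (fun j => (Function.update y i x j, (0 : ℝ))) =
              Function.update (fun j => (y j, (0 : ℝ))) i (x, 0) := by
            ext j : 1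
            by_cases hj : j = i
            · subst hj; simp
            · simp [hj]
          have h0 : ((a + b, (0 : ℝ)) : E × ℝ) = (a, 0) + (b, 0) := by simp
          simp only [BoundedContinuousFunction.coe_ofNormedAddCommGroupDiscrete, h,
            BoundedContinuousFunction.coe_add, Pi.add_apply]
          rw [h0, ContinuousMultilinearMap.map_update_add, _root_.add_apply,
            smul_add]
        map_update_smul' := fun y i a b => by
          ext k
          have h (x : E) : (fun j => (Function.update y i x j, (0 : ℝ))) =
              Function.update (fun j => (y j, (0 : ℝ))) i (x, 0) := by
            ext j : 1
            by_cases hj : j = i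
            · subst hj; simp
            · simp [hj]
          have h0 : ((a • b, (0 : ℝ)) : E × ℝ) = a • (b, 0) := by simp
          simp only [BoundedContinuousFunction.coe_ofNormedAddCommGroupDiscrete, h,
            BoundedContinuousFunction.coe_smul]
          rw [h0, ContinuousMultilinearMap.map_update_smul, _root_.smul_apply,
            smul_comm] }
      (K / ρ ^ l)
      (fun y => (BoundedContinuousFunction.norm_le (by positivity)).2 (hbd l y))
  have hPapply : ∀ l (y : Fin l → E) k, P l y k = (ρ : ℝ) ^ k •
      p.changeOriginSeries k l (fun i => (y i, (0 : ℝ))) (fun _ => ((0 : E), (1 : ℝ))) :=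
    fun _ _ _ => rfl
  have hPr : (ρ : ℝ≥0∞) ≤ P.radius := by
    refine P.le_radius_of_bound K fun l => ?_
    have : ‖P l‖ ≤ K / ρ ^ l := MultilinearMap.mkContinuous_norm_le _ (by positivity) _
    calc ‖P l‖ * ρ ^ l ≤ K / ρ ^ l * ρ ^ l := by gcongr
      _ = K := div_mul_cancel₀ _ (by positivity)
  have hρ' : (0 : ℝ≥0∞) < ρ := by exact_mod_cast hρ
  have hPs := P.hasFPowerSeriesOnBall (hρ'.trans_le hPr)
  refine ⟨ρ, by exact_mod_cast hρ, P.sum, hPs.analyticAt, ?_⟩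
  filter_upwards [Metric.ball_mem_nhds (0 : E × ℝ) (NNReal.coe_pos.2 hρ)] with z hz
  obtain ⟨y, t⟩ := z
  rw [mem_ball_zero_iff, Prod.norm_mk, max_lt_iff, Real.norm_eq_abs] at hz
  obtain ⟨hy, ht⟩ := hz
  have hyρ : ‖y‖ₑ < ρ := by
    rw [enorm_lt_coe]; exact_mod_cast hy
  have htρ : ‖t‖ₑ < ρ := by
    rw [enorm_lt_coe]; exact_mod_cast ht
  have hy0 : ‖((y, 0) : E × ℝ)‖ₑ = ‖y‖ₑ := by
    simp [enorm_eq_nnnorm, Prod.nnnorm_def]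
  have ht0 : ‖((0, t) : E × ℝ)‖ₑ = ‖t‖ₑ := by
    simp [enorm_eq_nnnorm, Prod.nnnorm_def]
  -- the coefficients of `P.sum y` are those of the recentred series in the vertical direction
  have hcoef : ∀ k, P.sum y k = (ρ : ℝ) ^ k •
      p.changeOrigin (y, 0) k (fun _ => ((0 : E), (1 : ℝ))) := by
    intro k
    have h1 := hPs.hasSum (y := y) (by
      rw [mem_eball_zero_iff]; exact hyρ.trans_le hPr)
    have h2 := (coef k).hasSum h1
    have h3 := (p.hasFPowerSeriesOnBall_changeOrigin k (hp.r_pos.trans_le hp.r_le)).hasSum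
      (y := (y, 0)) (by
        rw [mem_eball_zero_iff, hy0]
        exact hyρ.trans (lt_of_le_of_lt le_self_add (hsum.trans_le hp.r_le)))
    have h4 := (ContinuousMultilinearMap.hasSum_eval h3
      (fun _ => ((0 : E), (1 : ℝ)))).const_smul ((ρ : ℝ) ^ k)
    simp only [zero_add, coef_apply] at h2 h4
    exact h2.unique h4
  have h5 := (hp.changeOrigin (y := (y, 0)) (by
    rw [← enorm_eq_nnnorm, hy0]; exact hyρ.trans (lt_of_le_of_lt le_self_add hsum))).hasSum (y := (0, t)) (by
      rw [mem_eball_zero_iff, ← enorm_eq_nnnorm, hy0, ht0]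
      rw [lt_tsub_iff_right]
      exact (ENNReal.add_lt_add htρ hyρ).trans hsum)
  have hτ : |t / ρ| < 1 := by
    rw [abs_div, NNReal.abs_eq, div_lt_one (by exact_mod_cast hρ)]; exact ht
  have h6 := hasSum_ev_apply hτ (P.sum y)
  have h7 : (fun k => (t / ρ) ^ k • P.sum y k) =
      fun k => p.changeOrigin (y, 0) k (fun _ => ((0 : E), t)) := by
    ext k
    have h8 : (fun _ : Fin k => ((0 : E), t)) = fun i => (fun _ => t) i • ((0 : E), (1 : ℝ)) := by
      simp
    rw [hcoef, h8, ContinuousMultilinearMap.map_smul_univ, smul_smul, ← mul_pow,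
      div_mul_cancel₀ _ (by exact_mod_cast hρ.ne')]
    simp
  rw [h7] at h6
  have h9 := h5.unique h6
  simpa using h9

/-! ### Weierstrass division -/

theorem hasSum_smulRight {X A : Type*} [NormedAddCommGroup X] [NormedSpace ℝ X]
    [NormedAddCommGroup A] [NormedSpace ℝ A] [CompleteSpace A] (φ : ℕ → X →L[ℝ] ℝ) (a : ℕ → A)
    {b : ℕ → ℝ} (hb : Summable b) (h : ∀ k, ‖φ k‖ * ‖a k‖ ≤ b k) (c : X) :
    HasSum (fun k => φ k c • a k) ((∑' k, (φ k).smulRight (a k)) c) := by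
  have h1 : Summable fun k => (φ k).smulRight (a k) := by
    refine Summable.of_norm_bounded hb fun k => ?_
    rw [ContinuousLinearMap.norm_smulRight_apply]
    exact h k
  have h2 := (ContinuousLinearMap.apply ℝ A c).hasSum h1.hasSum
  simpa only [ContinuousLinearMap.apply_apply, ContinuousLinearMap.smulRight_apply] using h2

theorem analyticAt_one_add_mul {A : Type*} [NormedRing A] [NormedAlgebra ℝ A]
    {u : E → A} (hu : AnalyticAt ℝ u 0) (lam : ℝ) (s t : A) :
    AnalyticAt ℝ (fun y => 1 + (lam • u y - s) * t) 0 :=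
  analyticAt_const.fun_add
    (((analyticAt_const.fun_smul hu).fun_sub analyticAt_const).fun_mul analyticAt_const)

theorem analyticAt_clm_apply {X Y : Type*} [NormedAddCommGroup X] [NormedSpace ℝ X]
    [NormedAddCommGroup Y] [NormedSpace ℝ Y] {T : E → X →L[ℝ] Y} {u : E → X} {x : E}
    (hT : AnalyticAt ℝ T x) (hu : AnalyticAt ℝ u x) : AnalyticAt ℝ (fun y => T y (u y)) x :=
  AnalyticAt.fun_comp (g := fun p : (X →L[ℝ] Y) × X => p.1 p.2) (f := fun y => (T y, u y))
    ((ContinuousLinearMap.id ℝ (X →L[ℝ] Y)).analyticAt_bilinear (T x, u x)) (hT.prod hu)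

/-- A germ in a Banach algebra whose value at the origin is at distance less than `1` from the
identity has an analytic inverse. -/
theorem analyticAt_inverse_of_norm_lt {A : Type*} [NormedRing A] [NormedAlgebra ℝ A]
    [CompleteSpace A] {u : E → A} (hu : AnalyticAt ℝ u 0) (h : ‖1 - u 0‖ < 1) :
    AnalyticAt ℝ (fun y => Ring.inverse (u y)) 0 ∧
      ∀ᶠ y in 𝓝 (0 : E), u y * Ring.inverse (u y) = 1 := by
  have h0 : ((Units.oneSub _ h : Aˣ) : A) = u 0 := by simp
  constructor
  · have h1 := analyticAt_inverse (𝕜 := ℝ) (Units.oneSub _ h)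
    rw [h0] at h1
    exact h1.comp hu
  · filter_upwards [hu.continuousAt.eventually (Units.isOpen.mem_nhds ⟨_, h0⟩)] with y hy
    exact Ring.mul_inverse_cancel _ hy

/-- For a scalar functional `ℓ`, the operator `symbol q ℓ c = ∑ q ^ k ℓ(c_k) S ^ k`, with `S` the
right shift: multiplication by the scalar power series `ℓ ∘ c` rescaled by `q`. -/
noncomputable def symbol (q : ℝ) (ℓ : B →L[ℝ] ℝ) :
    (ℕ →ᵇ B) →L[ℝ] ((ℕ →ᵇ B) →L[ℝ] (ℕ →ᵇ B)) :=
  ∑' k, (q ^ k • ℓ.comp (coef k)).smulRight (rshift ^ k : (ℕ →ᵇ B) →L[ℝ] (ℕ →ᵇ B))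

theorem hasSum_symbol {q : ℝ} (hq : |q| < 1) (ℓ : B →L[ℝ] ℝ) (c : ℕ →ᵇ B) :
    HasSum (fun k => (q ^ k * ℓ (c k)) • (rshift ^ k : (ℕ →ᵇ B) →L[ℝ] (ℕ →ᵇ B)))
      (symbol q ℓ c) := by
  refine hasSum_smulRight (fun k => q ^ k • ℓ.comp (coef k)) _
    ((summable_geometric_of_lt_one (abs_nonneg q) hq).mul_right ‖ℓ‖) (fun k => ?_) c
  rw [norm_smul, norm_pow, Real.norm_eq_abs]
  calc |q| ^ k * ‖ℓ.comp (coef k)‖ * ‖(rshift ^ k : (ℕ →ᵇ B) →L[ℝ] (ℕ →ᵇ B))‖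
      ≤ |q| ^ k * (‖ℓ‖ * 1) * 1 := by
        gcongr
        · exact (ContinuousLinearMap.opNorm_comp_le _ _).trans
            (mul_le_mul_of_nonneg_left (norm_coef_le k) (norm_nonneg _))
        · exact norm_pow_le_one _ norm_rshift_le k
    _ = |q| ^ k * ‖ℓ‖ := by ring

theorem ev_symbol {q τ : ℝ} (hq : |q| < 1) (hτ : |τ| < 1) (ℓ : B →L[ℝ] ℝ) (c x : ℕ →ᵇ B) :
    ev τ (symbol q ℓ c x) = ℓ (ev (q * τ) c) • ev τ x := by
  have h1 := (ContinuousLinearMap.apply ℝ (ℕ →ᵇ B) x).hasSum (hasSum_symbol hq ℓ c)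
  have h2 := (ev τ).hasSum h1
  have hqτ : |q * τ| < 1 := by
    rw [abs_mul]; exact mul_lt_one_of_nonneg_of_lt_one_right hq.le (abs_nonneg _) hτ
  have h3 := (ℓ.hasSum (hasSum_ev_apply hqτ c)).smul_const (ev τ x)
  refine h2.unique ?_
  convert h3 using 2 with k
  rw [ContinuousLinearMap.apply_apply, smul_apply, map_smul, ev_rshift_pow hτ,
    map_smul, smul_smul, smul_eq_mul]
  congr 1
  ring

/-- If `e` is the order of vanishing of the scalar series `ℓ ∘ c`, then after rescaling by a small
`q` multiplication by it is close to its leading term. -/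
theorem norm_symbol_sub_lt {ℓ : B →L[ℝ] ℝ} {c : ℕ →ᵇ B} {e : ℕ} (he : ℓ (c e) ≠ 0)
    (hlt : ∀ k < e, ℓ (c k) = 0) :
    ∃ q : ℝ, 0 < q ∧ q < 1 ∧
      ‖(ℓ (c e) * q ^ e)⁻¹ • symbol q ℓ c - (rshift ^ e : (ℕ →ᵇ B) →L[ℝ] (ℕ →ᵇ B))‖ < 1 := by
  set a := ℓ (c e) with ha
  set C := ‖ℓ‖ * ‖c‖ with hC
  have hCk : ∀ k, |ℓ (c k)| ≤ C := fun k =>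
    (ℓ.le_opNorm _).trans (mul_le_mul_of_nonneg_left (c.norm_coe_le_norm k) (norm_nonneg _))
  have ha0 : 0 < |a| := abs_pos.2 he
  have hC0 : 0 < C := ha0.trans_le (hCk e)
  -- with this `q` the tail `∑_{k > e} q ^ k |ℓ (c k)|` is at most `q ^ e |a| / 3`
  set q := |a| / (4 * C) with hq
  have hq0 : 0 < q := by positivity
  have hq4 : q ≤ 1 / 4 := by
    rw [hq, div_le_div_iff₀ (by positivity) (by norm_num)]
    linarith [hCk e]
  have hq1 : |q| < 1 := by rw [abs_of_pos hq0]; linarith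
  refine ⟨q, hq0, by linarith, ?_⟩
  have h1 := (hasSum_nat_add_iff' (e + 1)).2 (hasSum_symbol hq1 ℓ c)
  rw [Finset.sum_range_succ, Finset.sum_eq_zero (fun k hk => by
    rw [hlt k (Finset.mem_range.1 hk), mul_zero, zero_smul]), zero_add, ← ha] at h1
  have h2 : HasSum (fun k => q ^ (e + 1) * C * q ^ k) (q ^ (e + 1) * C * (1 - q)⁻¹) :=
    (hasSum_geometric_of_lt_one hq0.le (by linarith)).mul_left _
  have h3 : ‖symbol q ℓ c - (q ^ e * a) • (rshift ^ e : (ℕ →ᵇ B) →L[ℝ] (ℕ →ᵇ B))‖ ≤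
      q ^ (e + 1) * C * (1 - q)⁻¹ := by
    rw [← h1.tsum_eq]
    refine tsum_of_norm_bounded h2 fun k => ?_
    rw [norm_smul, norm_mul, norm_pow, Real.norm_eq_abs, Real.norm_eq_abs, abs_of_pos hq0]
    calc q ^ (k + (e + 1)) * |ℓ (c (k + (e + 1)))| *
          ‖(rshift ^ (k + (e + 1)) : (ℕ →ᵇ B) →L[ℝ] (ℕ →ᵇ B))‖
        ≤ q ^ (k + (e + 1)) * C * 1 := by
          gcongr
          · exact hCk _
          · exact norm_pow_le_one _ norm_rshift_le _
      _ = _ := by rw [pow_add]; ring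
  have hne : a * q ^ e ≠ 0 := mul_ne_zero he (by positivity)
  have h4 : (a * q ^ e)⁻¹ • symbol q ℓ c - (rshift ^ e : (ℕ →ᵇ B) →L[ℝ] (ℕ →ᵇ B)) =
      (a * q ^ e)⁻¹ •
        (symbol q ℓ c - (q ^ e * a) • (rshift ^ e : (ℕ →ᵇ B) →L[ℝ] (ℕ →ᵇ B))) := by
    rw [smul_sub, smul_smul, mul_comm (q ^ e) a, inv_mul_cancel₀ hne, one_smul]
  rw [h4, norm_smul, norm_inv, norm_mul, norm_pow, Real.norm_eq_abs, Real.norm_eq_abs,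
    abs_of_pos hq0, inv_mul_lt_iff₀ (by positivity), mul_one]
  refine h3.trans_lt ?_
  have h5 : q * C = |a| / 4 := by rw [hq]; field_simp
  have h6 : (1 - q)⁻¹ ≤ 4 / 3 := by
    rw [inv_le_comm₀ (by linarith) (by norm_num)]; linarith
  calc q ^ (e + 1) * C * (1 - q)⁻¹ = q ^ e * (q * C) * (1 - q)⁻¹ := by ring
    _ ≤ q ^ e * (|a| / 4) * (4 / 3) := by rw [h5]; gcongr
    _ < |a| * q ^ e := by
      have : 0 < |a| * q ^ e := by positivity
      nlinarith

/-- Weierstrass division of a Banach-valued germ `Φ` by one of its scalar components `ℓ ∘ Φ`, when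
the latter does not vanish identically on the vertical line through the origin. -/
theorem exists_division {Φ : E × ℝ → B} (hΦ : AnalyticAt ℝ Φ 0) (ℓ : B →L[ℝ] ℝ)
    (hw : ¬ ∀ᶠ t in 𝓝 (0 : ℝ), ℓ (Φ (0, t)) = 0) :
    ∃ (e : ℕ) (Q : E × ℝ → B) (r : Fin e → E → B), AnalyticAt ℝ Q 0 ∧
      (∀ i, AnalyticAt ℝ (r i) 0) ∧
      ∀ᶠ z in 𝓝 (0 : E × ℝ), Φ z = ℓ (Φ z) • Q z + ∑ i : Fin e, z.2 ^ (i : ℕ) • r i z.1 := by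
  obtain ⟨ρ, hρ, Ψ, hΨ, hΦΨ⟩ := exists_curry hΦ
  have hex : ∃ k, ℓ (Ψ 0 k) ≠ 0 := by
    by_contra! hall
    refine hw ?_
    have ht : Tendsto (fun t : ℝ => ((0 : E), t)) (𝓝 0) (𝓝 0) :=
      (Continuous.prodMk_right (0 : E)).tendsto' _ _ rfl
    have hlt : ∀ᶠ t in 𝓝 (0 : ℝ), |t / ρ| < 1 := by
      have : ContinuousAt (fun t : ℝ => |t / ρ|) 0 := by fun_prop
      exact this.eventually_lt_const (by simp)
    filter_upwards [ht.eventually hΦΨ, hlt] with t h1 h2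
    rw [h1]
    have h3 := ℓ.hasSum (hasSum_ev_apply h2 (Ψ 0))
    refine h3.unique ?_
    simp [hall, hasSum_zero]
  classical
  set e := Nat.find hex with he
  have he0 : ℓ (Ψ 0 e) ≠ 0 := Nat.find_spec hex
  have hlt : ∀ k < e, ℓ (Ψ 0 k) = 0 := fun k hk => not_not.1 (Nat.find_min hex hk)
  obtain ⟨q, hq0, hq1, hq⟩ := norm_symbol_sub_lt he0 hlt
  have hqabs : |q| < 1 := by rwa [abs_of_pos hq0]
  set lam := (ℓ (Ψ 0 e) * q ^ e)⁻¹ with hlam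
  -- `M y` sends the sequence `c`, read as remainder `c_0, …, c_{e-1}` and quotient
  -- `lshift ^ e c`, to (normalized divisor) * quotient + remainder
  let M : E → ((ℕ →ᵇ B) →L[ℝ] (ℕ →ᵇ B)) := fun y =>
    1 + (lam • symbol q ℓ (Ψ y) - rshift ^ e) * lshift ^ e
  have hM : AnalyticAt ℝ M 0 := by
    have h1 : AnalyticAt ℝ (fun y => symbol q ℓ (Ψ y)) 0 :=
      ((symbol q ℓ).analyticAt _).comp hΨ
    exact analyticAt_one_add_mul h1 lam _ _
  have hM0 : ‖1 - M 0‖ < 1 := by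
    have : 1 - M 0 = -((lam • symbol q ℓ (Ψ 0) - rshift ^ e) * lshift ^ e) := by
      simp only [M]; abel
    rw [this, norm_neg]
    refine (norm_mul_le _ _).trans_lt ?_
    exact (mul_le_of_le_one_right (norm_nonneg _) (norm_pow_le_one _ norm_lshift_le e)).trans_lt hq
  obtain ⟨hinv, hunit⟩ := analyticAt_inverse_of_norm_lt hM hM0
  let c : E → (ℕ →ᵇ B) := fun y => Ring.inverse (M y) (dil q hqabs.le (Ψ y))
  have hc : AnalyticAt ℝ c 0 :=
    analyticAt_clm_apply hinv (((dil q hqabs.le).analyticAt _).fun_comp hΨ)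
  have hMc : ∀ᶠ y in 𝓝 (0 : E), M y (c y) = dil q hqabs.le (Ψ y) := by
    filter_upwards [hunit] with y hy
    rw [← mul_apply_eq_comp, hy]
    rfl
  refine ⟨e, fun z => lam • ev (z.2 / (q * ρ)) ((lshift ^ e) (c z.1)),
    fun i y => ((q * ρ) ^ (i : ℕ))⁻¹ • c y i, ?_, fun i => ?_, ?_⟩
  · have h1 : AnalyticAt ℝ (fun z : E × ℝ => z.2 / (q * ρ)) 0 := analyticAt_snd.div_const
    have h2 : AnalyticAt ℝ (fun z : E × ℝ =>
        (ev (z.2 / (q * ρ)) : (ℕ →ᵇ B) →L[ℝ] B)) 0 :=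
      AnalyticAt.fun_comp (by simpa using ev_analyticAt) h1
    have h3 : AnalyticAt ℝ (fun z : E × ℝ => (lshift ^ e) (c z.1)) 0 :=
      ((lshift ^ e : (ℕ →ᵇ B) →L[ℝ] (ℕ →ᵇ B)).analyticAt _).comp
        (AnalyticAt.fun_comp (g := c) hc analyticAt_fst)
    exact analyticAt_const.fun_smul (analyticAt_clm_apply h2 h3)
  · exact analyticAt_const.fun_smul (((coef (i : ℕ)).analyticAt _).fun_comp hc)
  · have hτ : ∀ᶠ z in 𝓝 (0 : E × ℝ), |z.2 / (q * ρ)| < 1 := by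
      have : ContinuousAt (fun z : E × ℝ => |z.2 / (q * ρ)|) 0 := by fun_prop
      exact this.eventually_lt_const (by simp)
    have hfst : Tendsto (Prod.fst : E × ℝ → E) (𝓝 0) (𝓝 0) := continuous_fst.tendsto' _ _ rfl
    filter_upwards [hτ, hΦΨ, hfst.eventually hMc] with z h1 h2 h3
    set τ := z.2 / (q * ρ) with hτdef
    have hqτ : q * τ = z.2 / ρ := by rw [hτdef]; field_simp
    have h4 := congrArg (ev τ) h3
    have h5 : M z.1 (c z.1) = c z.1 + (lam • symbol q ℓ (Ψ z.1) ((lshift ^ e) (c z.1))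
        - (rshift ^ e) ((lshift ^ e) (c z.1))) := rfl
    rw [ev_dil _ h1, hqτ, ← h2, h5, map_add, map_sub, map_smul, ev_symbol hqabs h1, hqτ, ← h2,
      ev_rshift_pow h1] at h4
    have h6 := ev_lshift_pow h1 e (c z.1)
    have h7 : ∀ i : Fin e, z.2 ^ (i : ℕ) • ((q * ρ) ^ (i : ℕ))⁻¹ • c z.1 i =
        τ ^ (i : ℕ) • c z.1 i := by
      intro i
      rw [smul_smul, hτdef, div_pow, div_eq_mul_inv]
    rw [Finset.sum_congr rfl fun i _ => h7 i]
    nth_rewrite 1 [← h4]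
    rw [h6, smul_comm lam]
    abel

/-! ### Finite generation -/

/-- `FinGen L Φ`: the germs `Φ i` are recovered, by coefficients `h j` that do not depend on `i`,
from finitely many of their scalar components `L k ∘ Φ i`. Applying `L k` to the formula shows that
the vector of germs `(L k ∘ Φ i)_i` is a combination, with coefficients `L k ∘ h j`, of the finitely
many vectors with index `idx j`; the vectors `h j` provide all these combinations at once, on a
neighbourhood of the origin independent of `k`. -/
def FinGen {ι α : Type*} (L : ι → B →L[ℝ] ℝ) (Φ : α → E → B) : Prop :=
  ∃ (κ : Type) (_ : Fintype κ) (idx : κ → ι) (h : κ → E → B), (∀ j, AnalyticAt ℝ (h j) 0) ∧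
    ∀ i, ∀ᶠ y in 𝓝 (0 : E), Φ i y = ∑ j, L (idx j) (Φ i y) • h j y

theorem analyticAt_clm_comp_smul (ℓ : B →L[ℝ] ℝ) {u v : E → B} (hu : AnalyticAt ℝ u 0)
    (hv : AnalyticAt ℝ v 0) : AnalyticAt ℝ (fun y => ℓ (u y) • v y) 0 :=
  ((ℓ.analyticAt _).fun_comp hu).fun_smul hv

/-- Finite generation for vectors of germs follows from that for single germs: subtracting the
combination that represents `Φ 0` kills the first germ, and the remaining ones form a shorter
vector. -/
theorem finGen_of_single {ι : Type*} {L : ι → B →L[ℝ] ℝ}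
    (h1 : ∀ Φ : E → B, AnalyticAt ℝ Φ 0 → FinGen L (fun _ : Unit => Φ)) (e : ℕ)
    (Φ : Fin e → E → B) (hΦ : ∀ i, AnalyticAt ℝ (Φ i) 0) : FinGen L Φ := by
  induction e with
  | zero => exact ⟨Empty, inferInstance, Empty.elim, Empty.elim, fun j => j.elim, fun i => i.elim0⟩
  | succ n ih =>
    obtain ⟨κ₁, _, idx₁, h, hh, hΦ0⟩ := h1 (Φ 0) (hΦ 0)
    have hΦ' : ∀ i : Fin n, AnalyticAt ℝ
        (fun y => Φ i.succ y - ∑ j, L (idx₁ j) (Φ i.succ y) • h j y) 0 := fun i =>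
      (hΦ _).fun_sub (Finset.analyticAt_fun_sum _ fun j _ =>
        analyticAt_clm_comp_smul _ (hΦ _) (hh j))
    obtain ⟨κ₂, _, idx₂, g, hg, hΦs⟩ := ih _ hΦ'
    refine ⟨κ₁ ⊕ κ₂, inferInstance, Sum.elim idx₁ idx₂,
      Sum.elim (fun j y => h j y - ∑ k, L (idx₂ k) (h j y) • g k y) g, ?_, ?_⟩
    · rintro (j | k)
      · exact (hh j).fun_sub (Finset.analyticAt_fun_sum _ fun k _ =>
          analyticAt_clm_comp_smul _ (hh j) (hg k))
      · exact hg k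
    · -- the remainder after removing the first batch of generators is handled by the second
      have key : ∀ i : Fin (n + 1), ∀ᶠ y in 𝓝 (0 : E),
          Φ i y - ∑ j, L (idx₁ j) (Φ i y) • h j y =
            ∑ k, L (idx₂ k) (Φ i y - ∑ j, L (idx₁ j) (Φ i y) • h j y) • g k y := by
        intro i
        induction i using Fin.cases with
        | zero =>
          filter_upwards [hΦ0 ()] with y hy
          rw [← hy]; simp
        | succ i => exact hΦs i
      intro i
      filter_upwards [key i] with y hy
      rw [sub_eq_iff_eq_add] at hy
      rw [Fintype.sum_sum_type]
      simp only [Sum.elim_inl, Sum.elim_inr]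
      nth_rewrite 1 [hy]
      simp only [map_sub, map_sum, map_smul, smul_eq_mul, sub_smul, smul_sub,
        Finset.sum_sub_distrib, Finset.sum_smul, Finset.smul_sum, smul_smul]
      rw [Finset.sum_comm (s := Finset.univ (α := κ₂))]
      abel

theorem FinGen.comp_equiv {E' : Type*} [NormedAddCommGroup E'] [NormedSpace ℝ E']
    (T : E' ≃L[ℝ] E) {ι α : Type*} {L : ι → B →L[ℝ] ℝ} {Φ : α → E → B}
    (h : FinGen L (fun i y => Φ i (T y))) : FinGen L Φ := by
  obtain ⟨κ, hκ, idx, g, hg, hΦ⟩ := h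
  refine ⟨κ, hκ, idx, fun j y => g j (T.symm y), fun j => ?_, fun i => ?_⟩
  · refine AnalyticAt.fun_comp (g := g j) (f := T.symm) ?_ (T.symm.analyticAt 0)
    rw [map_zero]; exact hg j
  · have ht : Tendsto T.symm (𝓝 0) (𝓝 0) := T.symm.continuous.tendsto' _ _ (map_zero _)
    filter_upwards [ht.eventually (hΦ i)] with y hy
    simpa using hy

/-- A nonzero germ has a nonzero restriction to some line through the origin. -/
theorem exists_line {w : E → ℝ} (hw : AnalyticAt ℝ w 0) (h0 : ¬ ∀ᶠ y in 𝓝 (0 : E), w y = 0) :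
    ∃ v : E, ¬ ∀ᶠ t in 𝓝 (0 : ℝ), w (t • v) = 0 := by
  obtain ⟨r, hr, hwr⟩ := hw.exists_ball_analyticOnNhd
  by_contra! hall
  refine h0 ?_
  filter_upwards [Metric.ball_mem_nhds (0 : E) hr] with v hv
  rw [mem_ball_zero_iff] at hv
  have hmem : ∀ t ∈ Icc (0 : ℝ) 1, t • v ∈ Metric.ball (0 : E) r := by
    intro t ht
    rw [mem_ball_zero_iff, norm_smul, Real.norm_eq_abs, abs_of_nonneg ht.1]
    exact (mul_le_of_le_one_left (norm_nonneg _) ht.2).trans_lt hv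
  have han : AnalyticOnNhd ℝ (fun t : ℝ => w (t • v)) (Icc 0 1) := fun t ht =>
    AnalyticAt.fun_comp (g := w) (f := fun t : ℝ => t • v) (hwr _ (hmem t ht))
      (analyticAt_id.fun_smul analyticAt_const)
  have := han.eqOn_zero_of_preconnected_of_eventuallyEq_zero isPreconnected_Icc
    (left_mem_Icc.2 zero_le_one) (hall v) (right_mem_Icc.2 zero_le_one)
  simpa using this

/-- A nonzero germ has a nonzero component in every separating family of functionals. -/
theorem exists_component_ne_zero {ι : Type*} {L : ι → B →L[ℝ] ℝ}
    (hL : ∀ b, (∀ i, L i b = 0) → b = 0) {Φ : E → B} (hΦ : AnalyticAt ℝ Φ 0)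
    (h0 : ¬ ∀ᶠ y in 𝓝 (0 : E), Φ y = 0) : ∃ i, ¬ ∀ᶠ y in 𝓝 (0 : E), L i (Φ y) = 0 := by
  obtain ⟨r, hr, hΦr⟩ := hΦ.exists_ball_analyticOnNhd
  by_contra! hall
  refine h0 ?_
  filter_upwards [Metric.ball_mem_nhds (0 : E) hr] with y hy
  refine hL _ fun i => ?_
  have han : AnalyticOnNhd ℝ (fun y => L i (Φ y)) (Metric.ball 0 r) := fun z hz =>
    ((L i).analyticAt _).fun_comp (hΦr z hz)
  exact han.eqOn_zero_of_preconnected_of_eventuallyEq_zero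
    (convex_ball (0 : E) r).isPreconnected (Metric.mem_ball_self hr) (hall i) hy

/-- Linear coordinates in which the line spanned by `v` is the vertical axis. -/
theorem exists_prod_equiv [FiniteDimensional ℝ E] {v : E} (hv : v ≠ 0) :
    ∃ (W : Submodule ℝ E) (T : (W × ℝ) ≃L[ℝ] E),
      Module.finrank ℝ W < Module.finrank ℝ E ∧ ∀ t : ℝ, T (0, t) = t • v := by
  obtain ⟨W, hW⟩ := Submodule.exists_isCompl (ℝ ∙ v)
  let T₀ : (W × ℝ) ≃ₗ[ℝ] E :=
    ((LinearEquiv.refl ℝ W).prodCongr (LinearEquiv.toSpanNonzeroSingleton ℝ E v hv)).trans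
      (Submodule.prodEquivOfIsCompl W (ℝ ∙ v) hW.symm)
  refine ⟨W, T₀.toContinuousLinearEquiv, ?_, fun t => ?_⟩
  · have := T₀.finrank_eq
    rw [Module.finrank_prod, Module.finrank_self] at this
    omega
  · simp [T₀]

/-- The induction step: division reduces finite generation on `E × ℝ` for a germ with a component
not vanishing on the vertical axis to finite generation on `E`. -/
theorem finGen_prod {ι : Type*} {L : ι → B →L[ℝ] ℝ}
    (hE : ∀ (e : ℕ) (Φ : Fin e → E → B), (∀ i, AnalyticAt ℝ (Φ i) 0) → FinGen L Φ)
    {Φ : E × ℝ → B} (hΦ : AnalyticAt ℝ Φ 0) (i₀ : ι)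
    (h0 : ¬ ∀ᶠ t in 𝓝 (0 : ℝ), L i₀ (Φ (0, t)) = 0) : FinGen L (fun _ : Unit => Φ) := by
  obtain ⟨e, Q, r, hQ, hr, hdiv⟩ := exists_division hΦ (L i₀) h0
  obtain ⟨κ, _, idx, h, hh, hgen⟩ := hE e r hr
  have hfst : Tendsto (Prod.fst : E × ℝ → E) (𝓝 0) (𝓝 0) := continuous_fst.tendsto' _ _ rfl
  have hh' : ∀ j, AnalyticAt ℝ (fun z : E × ℝ => h j z.1) 0 := fun j =>
    AnalyticAt.fun_comp (g := h j) (hh j) analyticAt_fst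
  refine ⟨Option κ, inferInstance, fun o => o.elim i₀ idx,
    fun o => o.elim (fun z => Q z - ∑ j, L (idx j) (Q z) • h j z.1) (fun j z => h j z.1), ?_, ?_⟩
  · rintro (_ | j)
    · exact hQ.fun_sub (Finset.analyticAt_fun_sum _ fun j _ =>
        analyticAt_clm_comp_smul _ hQ (hh' j))
    · exact hh' j
  · intro _
    filter_upwards [hdiv, hfst.eventually (eventually_all.2 hgen)] with z h1 h2
    rw [Fintype.sum_option]
    simp only [Option.elim_none, Option.elim_some]
    -- the components of the remainder, by applying `L (idx j)` to the division formula
    have h3 : ∀ j, ∑ i : Fin e, z.2 ^ (i : ℕ) * L (idx j) (r i z.1) =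
        L (idx j) (Φ z) - L i₀ (Φ z) * L (idx j) (Q z) := by
      intro j
      have := congrArg (L (idx j)) h1
      rw [map_add, map_smul, map_sum] at this
      simp only [map_smul, smul_eq_mul] at this
      linarith
    have h4 : ∑ i : Fin e, z.2 ^ (i : ℕ) • r i z.1 =
        ∑ j, (L (idx j) (Φ z) - L i₀ (Φ z) * L (idx j) (Q z)) • h j z.1 := by
      calc ∑ i : Fin e, z.2 ^ (i : ℕ) • r i z.1
          = ∑ i : Fin e, ∑ j, (z.2 ^ (i : ℕ) * L (idx j) (r i z.1)) • h j z.1 := by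
            refine Finset.sum_congr rfl fun i _ => ?_
            nth_rewrite 1 [h2 i]
            rw [Finset.smul_sum]
            simp only [smul_smul]
        _ = _ := by
            rw [Finset.sum_comm]
            refine Finset.sum_congr rfl fun j _ => ?_
            rw [← h3 j, Finset.sum_smul]
    nth_rewrite 1 [h1]
    rw [h4]
    simp only [sub_smul, Finset.sum_sub_distrib, smul_sub, Finset.smul_sum, smul_smul]
    abel

/-- Noetherianity with convergence: every vector of Banach-valued analytic germs in finitely many
variables is finitely generated by its components in a separating family of functionals. The
induction is on the dimension, after a linear change of coordinates that makes some component
regular in the last variable. -/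
theorem finGen {ι : Type*} {L : ι → B →L[ℝ] ℝ} (hL : ∀ b, (∀ i, L i b = 0) → b = 0) (n : ℕ) :
    ∀ (E : Type u) [NormedAddCommGroup E] [NormedSpace ℝ E] [FiniteDimensional ℝ E],
      Module.finrank ℝ E = n → ∀ (e : ℕ) (Φ : Fin e → E → B), (∀ i, AnalyticAt ℝ (Φ i) 0) →
        FinGen L Φ := by
  induction n using Nat.strong_induction_on with
  | _ n ih =>
  intro E _ _ _ hn
  refine finGen_of_single fun Φ hΦ => ?_
  by_cases h0 : ∀ᶠ y in 𝓝 (0 : E), Φ y = 0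
  · exact ⟨Empty, inferInstance, Empty.elim, Empty.elim, fun j => j.elim, fun _ => by
      simpa using h0⟩
  obtain ⟨i₀, hi₀⟩ := exists_component_ne_zero hL hΦ h0
  have hw : AnalyticAt ℝ (fun y => L i₀ (Φ y)) 0 := ((L i₀).analyticAt _).fun_comp hΦ
  by_cases hw0 : L i₀ (Φ 0) = 0
  · obtain ⟨v, hv⟩ := exists_line hw hi₀
    have hv0 : v ≠ 0 := by
      rintro rfl
      exact hv (by simp [hw0])
    obtain ⟨W, T, hW, hT⟩ := exists_prod_equiv hv0
    refine FinGen.comp_equiv T (finGen_prod (ih _ (hn ▸ hW) W rfl) ?_ i₀ ?_)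
    · refine AnalyticAt.fun_comp (g := Φ) (f := T) ?_ (T.analyticAt 0)
      rw [map_zero]; exact hΦ
    · simpa only [hT] using hv
  · -- a nonvanishing component generates everything
    refine ⟨Unit, inferInstance, fun _ => i₀, fun _ y => (L i₀ (Φ y))⁻¹ • Φ y,
      fun _ => (hw.fun_inv hw0).fun_smul hΦ, fun _ => ?_⟩
    filter_upwards [hw.continuousAt.eventually_ne hw0] with y hy
    simp [smul_smul, mul_inv_cancel₀ hy]

/-! ### Counting zeros -/

/-- Rolle's theorem, iterated. -/
theorem exists_iteratedDeriv_eq_zero {a b : ℝ} (i : ℕ) :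
    ∀ g : ℝ → ℝ, AnalyticOnNhd ℝ g (Ioo a b) → ∀ Z : Finset ℝ, (∀ z ∈ Z, z ∈ Ioo a b) →
      (∀ z ∈ Z, g z = 0) → i < Z.card → ∃ z ∈ Ioo a b, iteratedDeriv i g z = 0 := by
  induction i with
  | zero =>
    intro g _ Z hZ h0 hc
    obtain ⟨z, hz⟩ := Finset.card_pos.1 hc
    exact ⟨z, hZ z hz, by simpa using h0 z hz⟩
  | succ n ih =>
    intro g hg Z hZ h0 hc
    obtain ⟨m, hm⟩ : ∃ m, Z.card = m + 1 := ⟨Z.card - 1, by omega⟩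
    let o := Z.orderEmbOfFin hm
    have ho : ∀ j, o j ∈ Z := Z.orderEmbOfFin_mem hm
    have hrolle : ∀ j : Fin m, ∃ c ∈ Ioo (o j.castSucc) (o j.succ), deriv g c = 0 := by
      intro j
      refine exists_deriv_eq_zero (o.strictMono j.castSucc_lt_succ) (fun x hx => ?_) ?_
      · exact (hg x ⟨(hZ _ (ho _)).1.trans_le hx.1,
          hx.2.trans_lt (hZ _ (ho _)).2⟩).continuousAt.continuousWithinAt
      · rw [h0 _ (ho _), h0 _ (ho _)]
    choose c hc1 hc2 using hrolle
    have hcm : StrictMono c := by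
      intro j k hjk
      have h1 : o j.succ ≤ o k.castSucc := o.monotone (Fin.succ_le_castSucc_iff.2 hjk)
      exact (hc1 j).2.trans_le (h1.trans (hc1 k).1.le)
    rw [iteratedDeriv_succ']
    refine ih (deriv g) hg.deriv (Finset.univ.image c) ?_ ?_ ?_
    · intro z hz
      obtain ⟨j, -, rfl⟩ := Finset.mem_image.1 hz
      exact ⟨(hZ _ (ho _)).1.trans (hc1 j).1, (hc1 j).2.trans (hZ _ (ho _)).2⟩
    · intro z hz
      obtain ⟨j, -, rfl⟩ := Finset.mem_image.1 hz
      exact hc2 j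
    · rw [Finset.card_image_of_injective _ hcm.injective, Finset.card_univ, Fintype.card_fin]
      omega

theorem iteratedDeriv_ev_zero (i : ℕ) :
    iteratedDeriv i (ev : ℝ → (ℕ →ᵇ ℝ) →L[ℝ] ℝ) 0 = (i.factorial : ℝ) • coef i := by
  obtain ⟨r, hr⟩ := ev_hasFPowerSeriesAt (B := ℝ)
  have h := hr.factorial_smul (1 : ℝ) i
  rw [iteratedDeriv_eq_iteratedFDeriv, ← h]
  simp [evSeries, Nat.cast_smul_eq_nsmul]

/-- Differentiation in `τ` commutes with evaluation at the sequence `c`. -/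
theorem iteratedDeriv_ev_apply (i : ℕ) (c : ℕ →ᵇ ℝ) {τ : ℝ}
    (h : AnalyticAt ℝ (ev : ℝ → (ℕ →ᵇ ℝ) →L[ℝ] ℝ) τ) :
    iteratedDeriv i (fun τ => ev τ c) τ = iteratedDeriv i ev τ c := by
  have h1 := (ContinuousLinearMap.apply ℝ ℝ c).iteratedFDeriv_comp_left
    (h.contDiffAt (n := i)) (i := i) le_rfl
  have hcomp : ⇑(ContinuousLinearMap.apply ℝ ℝ c) ∘ (ev : ℝ → (ℕ →ᵇ ℝ) →L[ℝ] ℝ) =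
      fun τ => ev τ c := rfl
  rw [hcomp] at h1
  rw [iteratedDeriv_eq_iteratedFDeriv, iteratedDeriv_eq_iteratedFDeriv]
  have h2 := congrArg (fun m => m (fun _ => (1 : ℝ))) h1
  simpa using h2

/-- The nonzero power series whose `i`-th coefficient is comparable to their norm have at most `i`
zeros in a common neighbourhood of the origin, where their `i`-th derivative does not vanish. -/
theorem card_zeros_le (i : ℕ) {C : ℝ} (hC : 0 < C) :
    ∃ δ > (0 : ℝ), ∀ c : ℕ →ᵇ ℝ, c ≠ 0 → ‖c‖ ≤ C * |c i| →
      ∀ Z : Finset ℝ, (∀ z ∈ Z, |z| < δ ∧ ev z c = 0) → Z.card ≤ i := by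
  have han := ev_analyticAt (B := ℝ)
  have hcont : ContinuousAt (iteratedDeriv i (ev : ℝ → (ℕ →ᵇ ℝ) →L[ℝ] ℝ)) 0 := by
    rw [iteratedDeriv_eq_iterate]
    exact (han.iterated_deriv i).continuousAt
  have hclose := Metric.continuousAt_iff.1 hcont (1 / C) (by positivity)
  obtain ⟨δ₁, hδ₁, hclose⟩ := hclose
  obtain ⟨δ₂, hδ₂, hball⟩ := han.exists_ball_analyticOnNhd
  refine ⟨min δ₁ δ₂, lt_min hδ₁ hδ₂, fun c hc0 hc Z hZ => ?_⟩
  by_contra! hcard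
  set δ := min δ₁ δ₂
  have hmem : ∀ z ∈ Ioo (-δ) δ, AnalyticAt ℝ (ev : ℝ → (ℕ →ᵇ ℝ) →L[ℝ] ℝ) z := by
    intro z hz
    refine hball z ?_
    rw [mem_ball_zero_iff, Real.norm_eq_abs]
    exact (abs_lt.2 hz).trans_le (min_le_right _ _)
  obtain ⟨z, hz, hz0⟩ := exists_iteratedDeriv_eq_zero (a := -δ) (b := δ) i (fun τ => ev τ c)
    (fun z hz => analyticAt_clm_apply (hmem z hz) analyticAt_const) Z
    (fun z hz => abs_lt.1 (hZ z hz).1) (fun z hz => (hZ z hz).2) hcard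
  rw [iteratedDeriv_ev_apply i c (hmem z hz)] at hz0
  have h1 := hclose (x := z) (by
    rw [dist_zero_right, Real.norm_eq_abs]; exact (abs_lt.2 hz).trans_le (min_le_left _ _))
  rw [dist_eq_norm] at h1
  have h2 := (iteratedDeriv i ev z - iteratedDeriv i ev 0 : (ℕ →ᵇ ℝ) →L[ℝ] ℝ).le_opNorm c
  rw [sub_apply, hz0, iteratedDeriv_ev_zero] at h2
  rw [iteratedDeriv_ev_zero] at h1
  simp only [smul_apply, coef_apply, zero_sub, norm_neg, norm_smul, Nat.abs_cast,
    Real.norm_eq_abs] at h2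
  have hcpos : 0 < ‖c‖ := norm_pos_iff.2 hc0
  have hf1 : (1 : ℝ) ≤ i.factorial := by exact_mod_cast Nat.one_le_iff_ne_zero.2 i.factorial_ne_zero
  have h3 : (i.factorial : ℝ) * |c i| < 1 / C * ‖c‖ :=
    h2.trans_lt (mul_lt_mul_of_pos_right h1 hcpos)
  have h4 : 1 / C * ‖c‖ ≤ |c i| := by
    rw [one_div, inv_mul_le_iff₀ hC]; exact hc
  nlinarith [abs_nonneg (c i)]

theorem exists_finset_of_card_le {A : Set ℝ} {p : ℕ}
    (h : ∀ Z : Finset ℝ, (∀ z ∈ Z, z ∈ A) → Z.card ≤ p) :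
    ∃ T : Finset ℝ, T.card ≤ p ∧ ∀ t ∈ A, t ∈ T := by
  have hfin : A.Finite := by
    by_contra hinf
    obtain ⟨Z, hZ, hc⟩ := Set.Infinite.exists_subset_card_eq hinf (p + 1)
    have := h Z fun z hz => hZ hz
    omega
  exact ⟨hfin.toFinset, h _ fun z hz => hfin.mem_toFinset.1 hz, fun t ht => hfin.mem_toFinset.2 ht⟩

/-- Uniform bound on the number of zeros in the last variable, for an analytic germ: near the
origin, either all coefficients in the last variable vanish or one of finitely many dominates. -/
theorem exists_uniform_bound {E : Type*} [NormedAddCommGroup E] [NormedSpace ℝ E]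
    [FiniteDimensional ℝ E] {Φ : E × ℝ → ℝ} (hΦ : AnalyticAt ℝ Φ 0) :
    ∃ η > (0 : ℝ), ∃ p : ℕ, ∀ y : E, ‖y‖ < η →
      (∀ t : ℝ, |t| < η → Φ (y, t) = 0) ∨
      ∀ Z : Finset ℝ, (∀ t ∈ Z, |t| < η ∧ Φ (y, t) = 0) → Z.card ≤ p := by
  obtain ⟨ρ, hρ, Ψ, hΨ, hΦΨ⟩ := exists_curry hΦ
  have hsep : ∀ c : ℕ →ᵇ ℝ, (∀ k, coef k c = 0) → c = 0 := fun c hc => by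
    ext k; exact hc k
  obtain ⟨κ, _, idx, h, hh, hgen⟩ :=
    finGen hsep _ E rfl 1 (fun _ => Ψ) (fun _ => hΨ)
  -- on a neighbourhood of the origin, `‖Ψ y‖` is controlled by finitely many coefficients
  set C : ℝ := ∑ j, (‖h j 0‖ + 1) + 1 with hCdef
  have hC : 0 < C := by positivity
  have hbound : ∀ᶠ y in 𝓝 (0 : E), ∀ j, ‖h j y‖ < ‖h j 0‖ + 1 :=
    eventually_all.2 fun j => (hh j).continuousAt.norm.eventually_lt_const (lt_add_one _)
  have hdom : ∀ᶠ y in 𝓝 (0 : E), Ψ y ≠ 0 → ∃ j, ‖Ψ y‖ ≤ C * |Ψ y (idx j)| := by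
    filter_upwards [hbound, hgen 0] with y hy1 hy2 hy0
    have hne : Nonempty κ := by
      by_contra hemp
      rw [not_nonempty_iff] at hemp
      exact hy0 (by rw [hy2]; simp)
    obtain ⟨j, hj⟩ := Finite.exists_max fun j => |Ψ y (idx j)|
    refine ⟨j, ?_⟩
    calc ‖Ψ y‖ ≤ ∑ k, ‖coef (idx k) (Ψ y) • h k y‖ := by
          nth_rewrite 1 [hy2]; exact norm_sum_le _ _
      _ ≤ ∑ k, |Ψ y (idx j)| * (‖h k 0‖ + 1) := by
          refine Finset.sum_le_sum fun k _ => ?_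
          rw [norm_smul, coef_apply, Real.norm_eq_abs]
          exact mul_le_mul (hj k) (hy1 k).le (norm_nonneg _) (abs_nonneg _)
      _ ≤ C * |Ψ y (idx j)| := by
          rw [← Finset.mul_sum, mul_comm]
          exact mul_le_mul_of_nonneg_right (by linarith) (abs_nonneg _)
  choose δ hδ hcount using fun j => card_zeros_le (idx j) hC
  have hδ' : ∀ᶠ z in 𝓝 (0 : E × ℝ), ∀ j, |z.2 / ρ| < δ j := by
    refine eventually_all.2 fun j => ?_
    have : ContinuousAt (fun z : E × ℝ => |z.2 / ρ|) 0 := by fun_prop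
    exact this.eventually_lt_const (by simpa using hδ j)
  have hfst : Tendsto (Prod.fst : E × ℝ → E) (𝓝 0) (𝓝 0) := continuous_fst.tendsto' _ _ rfl
  obtain ⟨η, hη, hball⟩ := Metric.eventually_nhds_iff_ball.1
    (hΦΨ.and (hδ'.and (hfst.eventually hdom)))
  have hmem : ∀ (y : E) (t : ℝ), ‖y‖ < η → |t| < η → (y, t) ∈ Metric.ball (0 : E × ℝ) η := by
    intro y t hy ht
    rw [mem_ball_zero_iff, Prod.norm_mk]
    exact max_lt hy ht
  refine ⟨η, hη, ∑ j, idx j, fun y hy => ?_⟩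
  by_cases h0 : Ψ y = 0
  · left
    intro t ht
    have := (hball _ (hmem y t hy ht)).1
    rw [this]
    simp [h0]
  · right
    intro Z hZ
    obtain ⟨j, hj⟩ := (hball _ (hmem y 0 hy (by simpa using hη))).2.2 h0
    have hinj : Function.Injective fun t : ℝ => t / ρ := fun a b hab => (div_left_inj' hρ.ne').1 hab
    rw [← Finset.card_image_of_injective Z hinj]
    refine (hcount j (Ψ y) h0 hj _ fun z hz => ?_).trans
      (Finset.single_le_sum (f := idx) (fun _ _ => Nat.zero_le _) (Finset.mem_univ j))
    obtain ⟨t, ht, rfl⟩ := Finset.mem_image.1 hz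
    have h1 := hball _ (hmem y t hy (hZ t ht).1)
    exact ⟨h1.2.1 j, by rw [← (hZ t ht).2, h1.1]⟩

end BautinBound

/-- **Corollary 2.1.1.** Let `f` be real analytic on a neighborhood `U` of the origin of
`ℝⁿ = ℝ^{n-1} × ℝ` (with `m = n - 1`), not identically zero near the origin. Then there are
`η > 0` and a positive integer `p` such that for every `x'` in the `(n-1)`-dimensional ball
`B(0,η)` and every `s ∈ ℝ`, either `f(x', xₙ) = s` for all `|xₙ| < η`, or the equation
`f(x', xₙ) = s` has at most `p` solutions `xₙ` with `|xₙ| < η`. -/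
theorem stmt4 (m : ℕ) (f : EuclideanSpace ℝ (Fin m) × ℝ → ℝ)
    (U : Set (EuclideanSpace ℝ (Fin m) × ℝ))
    (hU : U ∈ nhds (0 : EuclideanSpace ℝ (Fin m) × ℝ))
    (hf : AnalyticOnNhd ℝ f U)
    (hnz : ¬ ∀ᶠ x in nhds (0 : EuclideanSpace ℝ (Fin m) × ℝ), f x = 0) :
    ∃ η > (0 : ℝ), ∃ p : ℕ, 0 < p ∧
      ∀ x' ∈ Metric.ball (0 : EuclideanSpace ℝ (Fin m)) η, ∀ s : ℝ,
        (∀ t : ℝ, |t| < η → f (x', t) = s) ∨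
        ∃ T : Finset ℝ, T.card ≤ p ∧ ∀ t : ℝ, |t| < η → f (x', t) = s → t ∈ T := by
  have hf0 : AnalyticAt ℝ f 0 := hf 0 (mem_of_mem_nhds hU)
  -- the level `s`, recentred at `f 0`, is one more parameter
  let Φ : (EuclideanSpace ℝ (Fin m) × ℝ) × ℝ → ℝ := fun z => f (z.1.1, z.2) - f 0 - z.1.2
  have hΦ : AnalyticAt ℝ Φ 0 := by
    have h1 : AnalyticAt ℝ (fun z : (EuclideanSpace ℝ (Fin m) × ℝ) × ℝ => (z.1.1, z.2)) 0 :=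
      (analyticAt_fst.fun_comp analyticAt_fst).prod analyticAt_snd
    have h2 : AnalyticAt ℝ (fun z : (EuclideanSpace ℝ (Fin m) × ℝ) × ℝ => z.1.2) 0 :=
      analyticAt_snd.fun_comp analyticAt_fst
    exact ((AnalyticAt.fun_comp (g := f)
      (f := fun z : (EuclideanSpace ℝ (Fin m) × ℝ) × ℝ => (z.1.1, z.2)) hf0 h1).fun_sub analyticAt_const).fun_sub h2
  obtain ⟨η₁, hη₁, p, hp⟩ := BautinBound.exists_uniform_bound hΦ
  -- levels far from `f 0` are not attained
  obtain ⟨η₂, hη₂, hclose⟩ := Metric.continuousAt_iff.1 hf0.continuousAt η₁ hη₁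
  refine ⟨min η₁ η₂, lt_min hη₁ hη₂, p + 1, p.succ_pos, fun x hx s => ?_⟩
  rw [mem_ball_zero_iff] at hx
  by_cases hs : |s - f 0| < η₁
  · have hy : ‖(x, s - f 0)‖ < η₁ := by
      rw [Prod.norm_mk]; exact max_lt (hx.trans_le (min_le_left _ _)) hs
    have hΦs : ∀ t, Φ ((x, s - f 0), t) = f (x, t) - s := fun t => by simp only [Φ]; ring
    rcases hp _ hy with h | h
    · left
      intro t ht
      have := h t (ht.trans_le (min_le_left _ _))
      rw [hΦs] at this
      linarith
    · right
      obtain ⟨T, hT, hmem⟩ := BautinBound.exists_finset_of_card_le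
        (A := {t | |t| < η₁ ∧ Φ ((x, s - f 0), t) = 0}) h
      refine ⟨T, hT.trans p.le_succ, fun t ht hts => hmem t ⟨ht.trans_le (min_le_left _ _), ?_⟩⟩
      rw [hΦs, hts, sub_self]
  · right
    refine ⟨∅, by simp, fun t ht hts => absurd ?_ hs⟩
    rw [← hts, ← Real.dist_eq]
    refine hclose ?_
    rw [dist_zero_right, Prod.norm_mk]
    exact max_lt (hx.trans_le (min_le_right _ _)) (ht.trans_le (min_le_right _ _))
end

section
/- Let f₁(x₁,...,xₙ), ..., f_l(x₁,...,xₙ) be real analytic functions on a neighborhood of the origin in ℝⁿ, none identically zero. Then there exist η > 0 and a positive integer p such that for every choice of real numbers s₁,...,s_l and every (x₁,...,x_{n−1}) in the (n−1)-dimensional open ball B_{n−1}(0,η), the set {xₙ : |xₙ| < η and f_i(x₁,...,x_{n−1},xₙ) < s_i for each i = 1,...,l} is a union of at most p intervals. -/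
/-!
Write `f (x, t) = ∑ₖ bₖ(x) tᵏ` near the origin, with coefficients `bₖ` that are themselves
convergent power series in `x`. The heart of the matter is a uniform domination statement
(`core`): there are `N`, `C` and a neighbourhood of `0` on which every `|bₖ(x)|`, `k ≥ 1`, is at
most `C ‖bₖ‖ · max_{1 ≤ j ≤ N+1} |bⱼ(x)|`, where `‖·‖` is a weighted `ℓ¹` norm of the coefficients.
Since `‖bₖ‖` grows at most geometrically, for each fixed `x` either all `bₖ(x)`, `k ≥ 1`, vanish and
`f (x, ·)` is constant, or, with `j` the index where the maximum is attained, the `j`-th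
`t`-derivative of `f (x, ·)` has no zero on a fixed interval `|t| < η`. In the latter case the
interval splits into at most `2 ^ j` intervals on which `f (x, ·) - s` has constant sign: each
integration at most doubles the number of pieces, because a function is monotone on a piece where
its derivative has constant sign (`PiecesBy.of_deriv`, `pieces_ser`). The bound does not depend
on `s`, and intersecting over the finitely many `f i` multiplies the bounds.

The domination statement is a quantitative form of the noetherianity of the ring of convergent
power series, obtained by division with respect to a standard basis. Multi-indices `α` are ordered
by the integer `wt α = ∏ pᵢ ^ αᵢ`, with `pᵢ` distinct primes; this is a total order compatible with
addition, and the weights `(wt α)^(-σ)` define the norm of exponent `σ`. By Dickson's lemma the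
leading exponents of the span of all monomial multiples of the `bₖ` have finitely many minimal
elements; monic series with these leading exponents form the basis. For large `σ` the leading
term of each basis element dominates the rest of it in norm, so eliminating the leading term of a
series with a monomial multiple of a basis element lowers its norm by a fixed proportion of the
eliminated term. Repeated elimination pushes the leading exponent to infinity, at a total cost
controlled by the initial norm; as the remainder tends to `0` on a smaller polydisc, no completeness
argument is needed.
-/

open Set MeasureTheory

noncomputable section

/-! ### Sign pieces on an interval -/


/-- `J` is the union of at most `n` intervals, on each of which `h` is either negative throughout or
nonnegative throughout. -/
def PiecesBy (n : ℕ) (J : Set ℝ) (h : ℝ → ℝ) : Prop :=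
  ∃ F : Finset (Set ℝ), F.card ≤ n ∧ J = ⋃ I ∈ F, I ∧
    ∀ I ∈ F, I.OrdConnected ∧ ((∀ t ∈ I, h t < 0) ∨ ∀ t ∈ I, 0 ≤ h t)

lemma PiecesBy.mono {n n' : ℕ} {J : Set ℝ} {h : ℝ → ℝ} (H : PiecesBy n J h) (hn : n ≤ n') :
    PiecesBy n' J h := by
  obtain ⟨F, h1, h2⟩ := H
  exact ⟨F, h1.trans hn, h2⟩

lemma piecesBy_one {J : Set ℝ} {h : ℝ → ℝ} (hJ : J.OrdConnected)
    (H : (∀ t ∈ J, h t < 0) ∨ ∀ t ∈ J, 0 ≤ h t) : PiecesBy 1 J h :=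
  ⟨{J}, by simp, by simp, by simpa using ⟨hJ, H⟩⟩

/-- On a sign piece of the derivative the function is monotone, so it splits that piece into at most
two sign pieces of its own. -/
lemma PiecesBy.of_deriv {n : ℕ} {J : Set ℝ} {h h' : ℝ → ℝ} (H : PiecesBy n J h')
    (hd : ∀ t ∈ J, HasDerivAt h (h' t) t) : PiecesBy (2 * n) J h := by
  classical
  obtain ⟨F, hc, hJ, hF⟩ := H
  have key : ∀ I ∈ F, (I ∩ {t | h t < 0}).OrdConnected ∧ (I ∩ {t | 0 ≤ h t}).OrdConnected := by
    intro I hI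
    obtain ⟨ho, hs⟩ := hF I hI
    have hIJ : I ⊆ J := by rw [hJ]; exact Set.subset_biUnion_of_mem (u := fun I => I) hI
    have hcont : ContinuousOn h I := fun t ht => (hd t (hIJ ht)).continuousAt.continuousWithinAt
    have hdi : ∀ t ∈ interior I, HasDerivWithinAt h (h' t) (interior I) t := fun t ht =>
      (hd t (hIJ (interior_subset ht))).hasDerivWithinAt
    rcases hs with hs | hs
    · have hm : AntitoneOn h I := antitoneOn_of_hasDerivWithinAt_nonpos ho.convex hcont hdi
        fun t ht => (hs t (interior_subset ht)).le
      constructor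
      · refine ⟨fun x hx y hy z hz => ?_⟩
        have hzI := ho.out hx.1 hy.1 hz
        exact ⟨hzI, lt_of_le_of_lt (hm hx.1 hzI hz.1) hx.2⟩
      · refine ⟨fun x hx y hy z hz => ?_⟩
        have hzI := ho.out hx.1 hy.1 hz
        exact ⟨hzI, le_trans hy.2 (hm hzI hy.1 hz.2)⟩
    · have hm : MonotoneOn h I := monotoneOn_of_hasDerivWithinAt_nonneg ho.convex hcont hdi
        fun t ht => (hs t (interior_subset ht))
      constructor
      · refine ⟨fun x hx y hy z hz => ?_⟩
        have hzI := ho.out hx.1 hy.1 hz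
        exact ⟨hzI, lt_of_le_of_lt (hm hzI hy.1 hz.2) hy.2⟩
      · refine ⟨fun x hx y hy z hz => ?_⟩
        have hzI := ho.out hx.1 hy.1 hz
        exact ⟨hzI, le_trans hx.2 (hm hx.1 hzI hz.1)⟩
  refine ⟨F.image (fun I => I ∩ {t | h t < 0}) ∪ F.image (fun I => I ∩ {t | 0 ≤ h t}), ?_, ?_, ?_⟩
  · refine (Finset.card_union_le _ _).trans ?_
    have := Finset.card_image_le (s := F) (f := fun I => I ∩ {t | h t < 0})
    have := Finset.card_image_le (s := F) (f := fun I => I ∩ {t | 0 ≤ h t})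
    omega
  · ext t
    rw [hJ]
    simp only [Set.mem_iUnion, exists_prop, Finset.mem_union, Finset.mem_image]
    constructor
    · rintro ⟨I, hI, ht⟩
      rcases lt_or_ge (h t) 0 with h0 | h0
      · exact ⟨_, Or.inl ⟨I, hI, rfl⟩, ht, h0⟩
      · exact ⟨_, Or.inr ⟨I, hI, rfl⟩, ht, h0⟩
    · rintro ⟨_, ⟨I, hI, rfl⟩ | ⟨I, hI, rfl⟩, ht⟩
      · exact ⟨I, hI, ht.1⟩
      · exact ⟨I, hI, ht.1⟩
  · intro I hI
    simp only [Finset.mem_union, Finset.mem_image] at hI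
    rcases hI with ⟨I, hI, rfl⟩ | ⟨I, hI, rfl⟩
    · exact ⟨(key I hI).1, Or.inl fun t ht => ht.2⟩
    · exact ⟨(key I hI).2, Or.inr fun t ht => ht.2⟩

/-! ### Power series in one variable -/

/-- The sum of the power series with coefficients `d` (`0` where it diverges). -/
def ser (d : ℕ → ℝ) (t : ℝ) : ℝ := ∑' k, d k * t ^ k

lemma natCast_le_two_pow (k : ℕ) : (k : ℝ) ≤ 2 ^ k := by
  exact_mod_cast Nat.lt_two_pow_self.le

lemma succ_le_two_pow (k : ℕ) : (k : ℝ) + 1 ≤ 2 ^ k := by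
  exact_mod_cast Nat.lt_two_pow_self (n := k)

lemma term_bound {d : ℕ → ℝ} {B R t y : ℝ} (hR : 0 < R) (hd : ∀ k, |d k| ≤ B * R ^ k)
    (ht : R * |t| ≤ y) (k : ℕ) : |d k * t ^ k| ≤ B * y ^ k := by
  have hB : 0 ≤ B := by simpa using (abs_nonneg _).trans (hd 0)
  rw [abs_mul, abs_pow]
  calc |d k| * |t| ^ k ≤ (B * R ^ k) * |t| ^ k := by gcongr; exact hd k
    _ = B * (R * |t|) ^ k := by ring
    _ ≤ B * y ^ k := by gcongr

lemma summable_ser {d : ℕ → ℝ} {B R t : ℝ} (hR : 0 < R) (hd : ∀ k, |d k| ≤ B * R ^ k)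
    (ht : R * |t| < 1) : Summable fun k => d k * t ^ k :=
  Summable.of_norm_bounded ((summable_geometric_of_lt_one (by positivity) ht).mul_left B)
    (fun k => term_bound hR hd le_rfl k)

lemma hasDerivAt_ser {d : ℕ → ℝ} {B R η t : ℝ} (hR : 0 < R)
    (hd : ∀ k, |d k| ≤ B * R ^ k) (hη : 4 * R * η ≤ 1) (ht : t ∈ Ioo (-η) η) :
    HasDerivAt (ser d) (ser (fun k => (k + 1) * d (k + 1)) t) t := by
  have hB : 0 ≤ B := by simpa using (abs_nonneg _).trans (hd 0)
  have hη0 : 0 < η := by have := ht.1.trans ht.2; linarith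
  have hbd : ∀ k : ℕ, ∀ y ∈ Ioo (-η) η,
      ‖d k * (k * y ^ (k - 1))‖ ≤ 4 * B * R * (1 / 2 : ℝ) ^ k := by
    intro k y hy
    have hy' : R * |y| ≤ 1 / 4 := by
      have : |y| ≤ η := abs_le.2 ⟨hy.1.le, hy.2.le⟩
      nlinarith
    rcases k with _ | k
    · simp; positivity
    · rw [Real.norm_eq_abs, abs_mul, abs_mul, abs_pow, Nat.abs_cast, Nat.add_sub_cancel]
      calc |d (k + 1)| * (((k + 1 : ℕ) : ℝ) * |y| ^ k)
          ≤ (B * R ^ (k + 1)) * (2 ^ (k + 1) * |y| ^ k) := by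
            gcongr
            · exact hd _
            · exact natCast_le_two_pow _
        _ = 2 * B * R * 2 ^ k * (R * |y|) ^ k := by ring
        _ ≤ 2 * B * R * 2 ^ k * (1 / 4) ^ k := by gcongr
        _ = 2 * B * R * (1 / 2) ^ k := by
            rw [mul_assoc (2 * B * R), ← mul_pow]; norm_num
        _ = 4 * B * R * (1 / 2) ^ (k + 1) := by ring
  have hsum : Summable fun k : ℕ => 4 * B * R * (1 / 2 : ℝ) ^ k :=
    (summable_geometric_of_lt_one (by norm_num) (by norm_num)).mul_left _
  have h0 : (0 : ℝ) ∈ Ioo (-η) η := ⟨by linarith, hη0⟩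
  have key := hasDerivAt_tsum_of_isPreconnected (𝕜 := ℝ) (F := ℝ)
    (g := fun k y => d k * y ^ k) (g' := fun k y => d k * (k * y ^ (k - 1)))
    hsum isOpen_Ioo isPreconnected_Ioo
    (fun k y _ => (hasDerivAt_pow k y).const_mul (d k)) hbd h0
    (summable_ser hR hd (by simp)) ht
  have hs : Summable fun k : ℕ => d k * (k * t ^ (k - 1)) :=
    Summable.of_norm_bounded hsum (fun k => hbd k t ht)
  rw [hs.tsum_eq_zero_add] at key
  unfold ser
  refine key.congr_deriv ?_
  rw [Nat.cast_zero, zero_mul, mul_zero, zero_add]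
  refine tsum_congr fun k => ?_
  rw [Nat.add_sub_cancel]
  push_cast
  ring

/-- If the constant term is comparable to the majorant of all coefficients, it dictates the sign of
the sum near `0`. -/
lemma pieces_base (K R : ℝ) (hK : 0 < K) (hR : 0 < R) : ∃ η₀ > 0, ∀ η, 0 < η → η ≤ η₀ →
    ∀ (d : ℕ → ℝ) (A : ℝ), 0 < A → (∀ k, |d k| ≤ K * A * R ^ k) → A ≤ |d 0| →
      PiecesBy 1 (Ioo (-η) η) (ser d) := by
  refine ⟨min (1 / (2 * R)) (1 / (4 * K * R)), by positivity, ?_⟩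
  intro η hη hη' d A hA hd h0
  have h1 : R * η ≤ 1 / 2 := by
    have := hη'.trans (min_le_left _ _)
    rw [le_div_iff₀ (by positivity)] at this; linarith
  have h2 : K * (R * η) ≤ 1 / 4 := by
    have := hη'.trans (min_le_right _ _)
    rw [le_div_iff₀ (by positivity)] at this; linarith
  have key : ∀ t ∈ Ioo (-η) η, |ser d t - d 0| < |d 0| := by
    intro t ht
    have ht' : R * |t| ≤ R * η := by gcongr; exact abs_le.2 ⟨ht.1.le, ht.2.le⟩
    have hs := summable_ser (t := t) hR hd (by linarith)
    have hb : ∀ k, |d (k + 1) * t ^ (k + 1)| ≤ (K * A * (R * η)) * (1 / 2) ^ k := by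
      intro k
      refine (term_bound hR hd ht' (k + 1)).trans ?_
      calc K * A * (R * η) ^ (k + 1) = (K * A * (R * η)) * (R * η) ^ k := by ring
        _ ≤ _ := by gcongr
    have hg : HasSum (fun k : ℕ => (K * A * (R * η)) * (1 / 2 : ℝ) ^ k)
        ((K * A * (R * η)) * 2) := hasSum_geometric_two.mul_left _
    have := tsum_of_norm_bounded (f := fun k => d (k + 1) * t ^ (k + 1)) hg hb
    unfold ser
    rw [hs.tsum_eq_zero_add]
    simp only [pow_zero, mul_one, add_sub_cancel_left]
    rw [Real.norm_eq_abs] at this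
    nlinarith
  refine piecesBy_one ordConnected_Ioo ?_
  rcases lt_or_ge (d 0) 0 with hn | hn
  · left; intro t ht
    have := key t ht
    rw [abs_of_neg hn, abs_lt] at this
    linarith
  · right; intro t ht
    have := key t ht
    rw [abs_of_nonneg hn, abs_lt] at this
    linarith

/-- If some coefficient of index `j ≤ N` is at least `A` while all are bounded by `K A Rᵏ`, then the
sum has at most `2 ^ N` sign pieces on an interval depending only on `N`, `K`, `R`. -/
lemma pieces_ser (N : ℕ) : ∀ (K R : ℝ), 0 < K → 0 < R → ∃ η₀ > 0, ∀ η, 0 < η → η ≤ η₀ →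
    ∀ j ≤ N, ∀ (d : ℕ → ℝ) (A : ℝ), 0 < A → (∀ k, |d k| ≤ K * A * R ^ k) → A ≤ |d j| →
      PiecesBy (2 ^ N) (Ioo (-η) η) (ser d) := by
  induction N with
  | zero =>
    intro K R hK hR
    obtain ⟨η₀, h0, h⟩ := pieces_base K R hK hR
    refine ⟨η₀, h0, fun η h1 h2 j hj d A hA hd hj' => ?_⟩
    obtain rfl : j = 0 := by omega
    simpa using h η h1 h2 d A hA hd hj'
  | succ N ih =>
    intro K R hK hR
    obtain ⟨η₁, h1, H1⟩ := ih K R hK hR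
    obtain ⟨η₂, h2, H2⟩ := ih (K * R) (2 * R) (by positivity) (by positivity)
    refine ⟨min (min η₁ η₂) (1 / (4 * R)), by positivity, fun η h0 hη j hj d A hA hd hdj => ?_⟩
    have e1 : η ≤ η₁ := hη.trans ((min_le_left _ _).trans (min_le_left _ _))
    have e2 : η ≤ η₂ := hη.trans ((min_le_left _ _).trans (min_le_right _ _))
    have e3 : 4 * R * η ≤ 1 := by
      have := hη.trans (min_le_right _ _)
      rw [le_div_iff₀ (by positivity)] at this; linarith
    rcases j with _ | j
    · exact (H1 η h0 e1 0 (by omega) d A hA hd hdj).mono (by gcongr <;> omega)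
    · have := H2 η h0 e2 j (by omega) (fun k => (k + 1) * d (k + 1)) A hA ?_ ?_
      · refine (this.of_deriv fun t ht => hasDerivAt_ser hR hd e3 ht).mono ?_
        rw [pow_succ]; omega
      · intro k
        rw [abs_mul, abs_of_nonneg (by positivity)]
        calc ((k : ℝ) + 1) * |d (k + 1)| ≤ 2 ^ k * (K * A * R ^ (k + 1)) := by
              gcongr
              · exact succ_le_two_pow k
              · exact hd _
          _ = K * R * A * (2 * R) ^ k := by ring
      · rw [abs_mul, abs_of_nonneg (by positivity)]
        have : (0 : ℝ) ≤ j := by positivity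
        nlinarith [abs_nonneg (d (j + 1))]

/-! ### Weighted norms of power series in several variables -/

variable {m : ℕ}

lemma hasSum_of_eq {ι : Type*} {f g : ι → ℝ} {a : ℝ} (H : HasSum g a) (h : ∀ b, f b = g b) :
    HasSum f a := by
  rwa [funext h]

/-- The integer `∏ pᵢ ^ αᵢ`, with `pᵢ` the `i`-th prime. It orders the multi-indices totally,
compatibly with addition, because it is multiplicative and injective. -/
def wt (α : Fin m → ℕ) : ℕ := ∏ i : Fin m, Nat.nth Nat.Prime i ^ α i

/-- The weight `(wt α)^(-σ)`, that is, the value of the monomial `α` at the point `xᵢ = pᵢ^(-σ)`. -/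
def W (σ : ℕ) (α : Fin m → ℕ) : ℝ := ((wt α : ℝ) ^ σ)⁻¹

/-- The monomial `x ^ α`. -/
def monom (x : Fin m → ℝ) (α : Fin m → ℕ) : ℝ := ∏ i, x i ^ α i

/-- The value at `x` of the power series with coefficient family `c` (`0` where it diverges). -/
def ev (c : (Fin m → ℕ) → ℝ) (x : Fin m → ℝ) : ℝ := ∑' α, c α * monom x α

/-- Absolute convergence of `c` on the closed polydisc of radii `pᵢ^(-σ)`. -/
def Conv (σ : ℕ) (c : (Fin m → ℕ) → ℝ) : Prop := Summable fun α => |c α| * W σ α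

/-- The weighted `ℓ¹` norm of exponent `σ`; it is meaningful for `c` satisfying `Conv σ c`. -/
def nrm (σ : ℕ) (c : (Fin m → ℕ) → ℝ) : ℝ := ∑' α, |c α| * W σ α

open Classical in
/-- The coefficients of the product of the series `c` by the monomial `x ^ γ`. -/
def shift (γ : Fin m → ℕ) (c : (Fin m → ℕ) → ℝ) : (Fin m → ℕ) → ℝ :=
  fun α => if γ ≤ α then c (α - γ) else 0

/-- The closed polydisc of radii `pᵢ^(-σ)`. -/
def Box (σ : ℕ) (x : Fin m → ℝ) : Prop := ∀ i, |x i| ≤ ((Nat.nth Nat.Prime i : ℝ) ^ σ)⁻¹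

lemma wt_pos (α : Fin m → ℕ) : 0 < wt α :=
  Finset.prod_pos fun i _ => pow_pos (Nat.prime_nth_prime i).pos _

lemma wt_add (α β : Fin m → ℕ) : wt (α + β) = wt α * wt β := by
  simp [wt, pow_add, Finset.prod_mul_distrib]

lemma wt_injective : Function.Injective (wt : (Fin m → ℕ) → ℕ) := by
  have key : ∀ (α : Fin m → ℕ) (j : Fin m),
      (wt α).factorization (Nat.nth Nat.Prime j) = α j := by
    intro α j
    unfold wt
    rw [Nat.factorization_prod fun i _ => pow_ne_zero _ (Nat.prime_nth_prime _).ne_zero]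
    rw [Finsupp.finsetSum_apply, Finset.sum_eq_single j]
    · simp [Nat.Prime.factorization_pow (Nat.prime_nth_prime j)]
    · intro i _ hij
      rw [Nat.Prime.factorization_pow (Nat.prime_nth_prime i), Finsupp.single_apply, if_neg]
      intro h
      exact hij (Fin.ext (Nat.nth_injective Nat.infinite_setOfPred_prime h))
    · simp
  intro α β h
  funext j
  rw [← key α j, ← key β j, h]

lemma W_pos (σ : ℕ) (α : Fin m → ℕ) : 0 < W σ α := by
  have : (0 : ℝ) < wt α := by exact_mod_cast wt_pos α
  unfold W; positivity

lemma W_add (σ : ℕ) (α β : Fin m → ℕ) : W σ (α + β) = W σ α * W σ β := by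
  simp [W, wt_add, mul_pow, mul_comm]

lemma W_sigma_add (σ τ : ℕ) (α : Fin m → ℕ) : W (σ + τ) α = W σ α * W τ α := by
  simp [W, pow_add, mul_comm]

lemma W_le_one (σ : ℕ) (α : Fin m → ℕ) : W σ α ≤ 1 := by
  have : (1 : ℝ) ≤ wt α := by exact_mod_cast wt_pos α
  exact inv_le_one_of_one_le₀ (one_le_pow₀ this)

lemma W_anti {σ τ : ℕ} (h : σ ≤ τ) (α : Fin m → ℕ) : W τ α ≤ W σ α := by
  obtain ⟨k, rfl⟩ := Nat.exists_eq_add_of_le h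
  rw [W_sigma_add]
  exact mul_le_of_le_one_right (W_pos _ _).le (W_le_one _ _)

lemma Conv.anti {σ τ : ℕ} (h : σ ≤ τ) {c : (Fin m → ℕ) → ℝ} (hc : Conv σ c) : Conv τ c :=
  Summable.of_nonneg_of_le (fun _ => mul_nonneg (abs_nonneg _) (W_pos _ _).le)
    (fun α => mul_le_mul_of_nonneg_left (W_anti h α) (abs_nonneg _)) hc

lemma W_eq_prod (σ : ℕ) (α : Fin m → ℕ) :
    W σ α = ∏ i : Fin m, (((Nat.nth Nat.Prime i : ℝ) ^ σ)⁻¹) ^ α i := by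
  simp only [W, wt]
  push_cast
  rw [← Finset.prod_pow, ← Finset.prod_inv_distrib]
  refine Finset.prod_congr rfl fun i _ => ?_
  rw [inv_pow, ← pow_mul, ← pow_mul, mul_comm]

lemma Box.abs_monom_le {σ : ℕ} {x : Fin m → ℝ} (hx : Box σ x) (α : Fin m → ℕ) :
    |monom x α| ≤ W σ α := by
  rw [W_eq_prod, monom, Finset.abs_prod]
  refine Finset.prod_le_prod (fun i _ => abs_nonneg _) fun i _ => ?_
  rw [abs_pow]
  exact pow_le_pow_left₀ (abs_nonneg _) (hx i) _

lemma Box.anti {σ τ : ℕ} (h : σ ≤ τ) {x : Fin m → ℝ} (hx : Box τ x) : Box σ x := by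
  intro i
  refine (hx i).trans ?_
  have : (1 : ℝ) ≤ Nat.nth Nat.Prime i := by exact_mod_cast (Nat.prime_nth_prime i).one_le
  gcongr

lemma monom_add (x : Fin m → ℝ) (α β : Fin m → ℕ) :
    monom x (α + β) = monom x α * monom x β := by
  simp [monom, pow_add, Finset.prod_mul_distrib]

lemma Conv.summable_ev {σ : ℕ} {c : (Fin m → ℕ) → ℝ} (hc : Conv σ c) {x : Fin m → ℝ}
    (hx : Box σ x) : Summable fun α => c α * monom x α :=
  Summable.of_norm_bounded hc fun α => by
    rw [Real.norm_eq_abs, abs_mul]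
    exact mul_le_mul_of_nonneg_left (hx.abs_monom_le α) (abs_nonneg _)

lemma Conv.hasSum_ev {σ : ℕ} {c : (Fin m → ℕ) → ℝ} (hc : Conv σ c) {x : Fin m → ℝ}
    (hx : Box σ x) : HasSum (fun α => c α * monom x α) (ev c x) :=
  (hc.summable_ev hx).hasSum

lemma Conv.hasSum_nrm {σ : ℕ} {c : (Fin m → ℕ) → ℝ} (hc : Conv σ c) :
    HasSum (fun α => |c α| * W σ α) (nrm σ c) := hc.hasSum

lemma nrm_nonneg (σ : ℕ) (c : (Fin m → ℕ) → ℝ) : 0 ≤ nrm σ c :=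
  tsum_nonneg fun _ => mul_nonneg (abs_nonneg _) (W_pos _ _).le

lemma shift_add_apply (γ : Fin m → ℕ) (c : (Fin m → ℕ) → ℝ) (α : Fin m → ℕ) :
    shift γ c (γ + α) = c α := by
  simp [shift]

lemma shift_eq_zero {γ : Fin m → ℕ} (c : (Fin m → ℕ) → ℝ) {α : Fin m → ℕ}
    (h : α ∉ range (γ + ·)) : shift γ c α = 0 := by
  rw [shift, if_neg]
  intro hle
  exact h ⟨α - γ, add_tsub_cancel_of_le hle⟩

lemma Conv.hasSum_nrm_shift {σ : ℕ} {c : (Fin m → ℕ) → ℝ} (hc : Conv σ c) (γ : Fin m → ℕ) :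
    HasSum (fun α => |shift γ c α| * W σ α) (W σ γ * nrm σ c) := by
  rw [← (add_right_injective γ).hasSum_iff (fun α hα => by rw [shift_eq_zero c hα]; simp)]
  refine hasSum_of_eq (hc.hasSum_nrm.mul_left (W σ γ)) fun α => ?_
  simp only [Function.comp, shift_add_apply, W_add]
  ring

lemma Conv.ev_shift {σ : ℕ} {c : (Fin m → ℕ) → ℝ} (hc : Conv σ c) {x : Fin m → ℝ}
    (hx : Box σ x) (γ : Fin m → ℕ) : ev (shift γ c) x = monom x γ * ev c x := by
  refine HasSum.tsum_eq ?_
  rw [← (add_right_injective γ).hasSum_iff (fun α hα => by rw [shift_eq_zero c hα]; simp)]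
  refine hasSum_of_eq ((hc.hasSum_ev hx).mul_left (monom x γ)) fun α => ?_
  simp only [Function.comp, shift_add_apply, monom_add]
  ring

lemma Conv.add {σ : ℕ} {c d : (Fin m → ℕ) → ℝ} (hc : Conv σ c) (hd : Conv σ d) :
    Conv σ (c + d) :=
  Summable.of_nonneg_of_le (fun _ => mul_nonneg (abs_nonneg _) (W_pos _ _).le)
    (fun α => by
      rw [← add_mul]
      exact mul_le_mul_of_nonneg_right (abs_add_le _ _) (W_pos _ _).le) (Summable.add hc hd)

lemma Conv.smul {σ : ℕ} {c : (Fin m → ℕ) → ℝ} (hc : Conv σ c) (r : ℝ) :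
    Conv σ (r • c) := by
  refine (summable_congr fun α => ?_).mpr (Summable.mul_left |r| hc)
  simp [abs_mul, mul_assoc]

lemma Conv.ev_add {σ : ℕ} {c d : (Fin m → ℕ) → ℝ} (hc : Conv σ c) (hd : Conv σ d)
    {x : Fin m → ℝ} (hx : Box σ x) : ev (c + d) x = ev c x + ev d x := by
  refine HasSum.tsum_eq ?_
  refine hasSum_of_eq ((hc.hasSum_ev hx).add (hd.hasSum_ev hx)) fun α => ?_
  simp [add_mul]

lemma Conv.ev_smul {σ : ℕ} {c : (Fin m → ℕ) → ℝ} (hc : Conv σ c) (r : ℝ)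
    {x : Fin m → ℝ} (hx : Box σ x) : ev (r • c) x = r * ev c x := by
  refine HasSum.tsum_eq ?_
  refine hasSum_of_eq ((hc.hasSum_ev hx).mul_left r) fun α => ?_
  simp [mul_assoc]

/-! ### Division by a standard basis -/

/-- The linear span of all monomial multiples of the series `a k`, i.e. the module they generate
over the polynomial ring. -/
def mspan (a : ℕ → (Fin m → ℕ) → ℝ) : Submodule ℝ ((Fin m → ℕ) → ℝ) :=
  Submodule.span ℝ (range fun p : (Fin m → ℕ) × ℕ => shift p.1 (a p.2))

lemma shift_shift (γ δ : Fin m → ℕ) (c : (Fin m → ℕ) → ℝ) :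
    shift γ (shift δ c) = shift (γ + δ) c := by
  funext α
  by_cases h : α ∈ range (γ + ·)
  · obtain ⟨β, rfl⟩ := h
    simp only [shift_add_apply]
    by_cases h' : β ∈ range (δ + ·)
    · obtain ⟨β, rfl⟩ := h'
      simp only [shift_add_apply, ← add_assoc]
    · rw [shift_eq_zero c h', shift_eq_zero]
      rintro ⟨ε, hε⟩
      simp only [add_assoc] at hε
      exact h' ⟨ε, add_left_cancel hε⟩
  · rw [shift_eq_zero _ h, shift_eq_zero]
    rintro ⟨ε, hε⟩
    exact h ⟨δ + ε, by simpa [add_assoc] using hε⟩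

lemma shift_mem_mspan {a : ℕ → (Fin m → ℕ) → ℝ} {h : (Fin m → ℕ) → ℝ} (hh : h ∈ mspan a)
    (γ : Fin m → ℕ) : shift γ h ∈ mspan a := by
  induction hh using Submodule.span_induction with
  | mem x hx =>
    obtain ⟨⟨δ, k⟩, rfl⟩ := hx
    rw [shift_shift]
    exact Submodule.subset_span ⟨(γ + δ, k), rfl⟩
  | zero =>
    convert (mspan a).zero_mem
    funext α; simp [shift]
  | add x y _ _ hx hy =>
    convert (mspan a).add_mem hx hy
    funext α; simp only [shift, Pi.add_apply]; split_ifs <;> simp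
  | smul r x _ hx =>
    convert (mspan a).smul_mem r hx
    funext α; simp [shift]

/-- An element of the span involves finitely many `a k`, so its values are controlled by theirs. -/
lemma mspan_bound {σ : ℕ} {a : ℕ → (Fin m → ℕ) → ℝ} (ha : ∀ k, Conv σ (a k))
    {h : (Fin m → ℕ) → ℝ} (hh : h ∈ mspan a) :
    Conv σ h ∧ ∃ C : ℝ, 0 ≤ C ∧ ∃ N : ℕ, ∀ x, Box σ x → ∀ A, (∀ k ≤ N, |ev (a k) x| ≤ A) →
      |ev h x| ≤ C * A := by
  induction hh using Submodule.span_induction with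
  | mem h hx =>
    obtain ⟨⟨γ, k⟩, rfl⟩ := hx
    refine ⟨((ha k).hasSum_nrm_shift γ).summable, 1, zero_le_one, k, fun x hx A hA => ?_⟩
    simp only
    rw [(ha k).ev_shift hx, abs_mul]
    exact mul_le_mul ((hx.abs_monom_le γ).trans (W_le_one _ _)) (hA k le_rfl) (abs_nonneg _)
      zero_le_one
  | zero =>
    exact ⟨by simp [Conv], 0, le_rfl, 0, fun x hx A hA => by simp [ev]⟩
  | add f g _ _ hf hg =>
    obtain ⟨hf, C, hC, N, H⟩ := hf
    obtain ⟨hg, C', hC', N', H'⟩ := hg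
    refine ⟨hf.add hg, C + C', by positivity, max N N', fun x hx A hA => ?_⟩
    rw [hf.ev_add hg hx, add_mul]
    exact (abs_add_le _ _).trans (add_le_add
      (H x hx A fun k hk => hA k (hk.trans (le_max_left _ _)))
      (H' x hx A fun k hk => hA k (hk.trans (le_max_right _ _))))
  | smul r f _ hf =>
    obtain ⟨hf, C, hC, N, H⟩ := hf
    refine ⟨hf.smul r, |r| * C, by positivity, N, fun x hx A hA => ?_⟩
    rw [hf.ev_smul r hx, abs_mul, mul_assoc]
    exact mul_le_mul_of_nonneg_left (H x hx A hA) (abs_nonneg _)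

/-- `f` has leading exponent `γ` (the one of least `wt` in its support), with coefficient `1`. -/
def IsMonicAt (f : (Fin m → ℕ) → ℝ) (γ : Fin m → ℕ) : Prop :=
  f γ = 1 ∧ ∀ β, wt β < wt γ → f β = 0

/-- For large `σ` the leading term of a monic series carries at least two thirds of its norm: the
other exponents `β` satisfy `wt β ≥ wt γ + 1`, so their weights decay geometrically faster. -/
lemma IsMonicAt.eventually_nrm_le {σ₀ : ℕ} {f : (Fin m → ℕ) → ℝ} {γ : Fin m → ℕ}
    (hf : IsMonicAt f γ) (hc : Conv σ₀ f) :
    ∀ᶠ τ in Filter.atTop, nrm (σ₀ + τ) f ≤ 3 / 2 * W (σ₀ + τ) γ := by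
  have hg : (0 : ℝ) < wt γ := by exact_mod_cast wt_pos γ
  have hq : (wt γ : ℝ) / (wt γ + 1) < 1 := by rw [div_lt_one (by positivity)]; linarith
  have hlim := (tendsto_pow_atTop_nhds_zero_of_lt_one (by positivity) hq).mul_const
    (nrm σ₀ f)
  rw [zero_mul] at hlim
  have hW := W_pos σ₀ γ
  filter_upwards [hlim.eventually (gt_mem_nhds (show 0 < W σ₀ γ / 2 by positivity))] with τ hτ
  have hpt : ∀ β, |f β| * W (σ₀ + τ) β ≤
      (if β = γ then W (σ₀ + τ) γ else 0) + ((wt γ + 1 : ℝ) ^ τ)⁻¹ * (|f β| * W σ₀ β) := by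
    intro β
    have hnn : 0 ≤ ((wt γ + 1 : ℝ) ^ τ)⁻¹ * (|f β| * W σ₀ β) :=
      mul_nonneg (by positivity) (mul_nonneg (abs_nonneg _) (W_pos _ _).le)
    split_ifs with h
    · subst h
      rw [hf.1] at hnn ⊢
      simpa using hnn
    · rcases lt_trichotomy (wt β) (wt γ) with h' | h' | h'
      · rw [hf.2 β h']; simp
      · exact absurd (wt_injective h') h
      · rw [W_sigma_add, zero_add]
        have : W τ β ≤ ((wt γ + 1 : ℝ) ^ τ)⁻¹ := by
          unfold W
          gcongr
          exact_mod_cast h'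
        calc |f β| * (W σ₀ β * W τ β) = W τ β * (|f β| * W σ₀ β) := by ring
          _ ≤ _ := mul_le_mul_of_nonneg_right this (mul_nonneg (abs_nonneg _) (W_pos _ _).le)
  have h1 := hasSum_le hpt (hc.anti (Nat.le_add_right σ₀ τ)).hasSum_nrm
    ((hasSum_ite_eq γ (W (σ₀ + τ) γ)).add (hc.hasSum_nrm.mul_left _))
  have h2 : ((wt γ + 1 : ℝ) ^ τ)⁻¹ * nrm σ₀ f ≤ 1 / 2 * W (σ₀ + τ) γ := by
    rw [W_sigma_add, W.eq_def τ]
    rw [div_pow, div_mul_eq_mul_div, div_lt_iff₀ (by positivity)] at hτ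
    rw [inv_mul_le_iff₀ (by positivity), ← mul_le_mul_iff_right₀ (show 0 < (wt γ : ℝ) ^ τ by positivity)]
    refine hτ.le.trans (le_of_eq ?_)
    field_simp
  linarith

/-- Eliminating the term of exponent `δ + γ` of `h` with a multiple of `f` lowers the norm of `h` by
at least half of that term. -/
lemma nrm_reduce {σ : ℕ} {f h : (Fin m → ℕ) → ℝ} {γ δ : Fin m → ℕ} (hf : IsMonicAt f γ)
    (hfc : Conv σ f) (hhc : Conv σ h) (hn : nrm σ f ≤ 3 / 2 * W σ γ) :
    Conv σ (h + (-h (δ + γ)) • shift δ f) ∧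
    nrm σ (h + (-h (δ + γ)) • shift δ f) + 1 / 2 * (|h (δ + γ)| * W σ (δ + γ)) ≤ nrm σ h := by
  have hc : Conv σ (h + (-h (δ + γ)) • shift δ f) :=
    hhc.add (Conv.smul (hfc.hasSum_nrm_shift δ).summable _)
  refine ⟨hc, ?_⟩
  have hpt : ∀ β, |(h + (-h (δ + γ)) • shift δ f) β| * W σ β +
      (if β = δ + γ then 2 * (|h (δ + γ)| * W σ (δ + γ)) else 0) ≤
      |h β| * W σ β + |h (δ + γ)| * (|shift δ f β| * W σ β) := by
    intro β
    have hW := W_pos σ β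
    split_ifs with hβ
    · subst hβ
      simp only [Pi.add_apply, Pi.smul_apply, shift_add_apply, hf.1, smul_eq_mul]
      simp
      linarith
    · simp only [Pi.add_apply, Pi.smul_apply, smul_eq_mul, add_zero]
      have := abs_add_le (h β) (-h (δ + γ) * shift δ f β)
      rw [abs_mul, abs_neg] at this
      nlinarith
  have := hasSum_le hpt (hc.hasSum_nrm.add (hasSum_ite_eq (δ + γ) _))
    (hhc.hasSum_nrm.add ((hfc.hasSum_nrm_shift δ).mul_left _))
  rw [W_add] at this ⊢
  have h3 : |h (δ + γ)| * (W σ δ * nrm σ f) ≤ |h (δ + γ)| * (W σ δ * (3 / 2 * W σ γ)) :=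
    mul_le_mul_of_nonneg_left (mul_le_mul_of_nonneg_left hn (W_pos _ _).le) (abs_nonneg _)
  linarith

/-- Dickson's lemma. -/
lemma exists_finite_basis (S : Set (Fin m → ℕ)) :
    ∃ F : Set (Fin m → ℕ), F.Finite ∧ F ⊆ S ∧ ∀ α ∈ S, ∃ γ ∈ F, γ ≤ α := by
  refine ⟨{x | Minimal (· ∈ S) x}, ?_, fun x hx => hx.1, fun α hα => ?_⟩
  · exact WellQuasiOrderedLE.finite_of_isAntichain (setOfPred_minimal_antichain (· ∈ S))
  · obtain ⟨γ, h1, h2⟩ := exists_minimal_le_of_wellFoundedLT (· ∈ S) α hα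
    exact ⟨γ, h2, h1⟩

/-- Finitely many members of a sequence of convergent power series dominate all of them pointwise
near `0`, with a constant proportional to the norm. -/
theorem core {σ₀ : ℕ} {a : ℕ → (Fin m → ℕ) → ℝ} (ha : ∀ k, Conv σ₀ (a k)) :
    ∃ σ, σ₀ ≤ σ ∧ ∃ C : ℝ, 0 < C ∧ ∃ N : ℕ, ∀ x, Box (σ + 1) x → ∀ A,
      (∀ j ≤ N, |ev (a j) x| ≤ A) → ∀ k, |ev (a k) x| ≤ C * A * nrm σ (a k) := by
  classical
  obtain ⟨F, hFf, hFS, hF⟩ := exists_finite_basis {γ | ∃ f ∈ mspan a, IsMonicAt f γ}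
  have hFS' : ∀ γ ∈ F, ∃ f ∈ mspan a, IsMonicAt f γ := fun γ hγ => hFS hγ
  choose! f hfm hfγ using hFS'
  have hev : ∀ᶠ τ in Filter.atTop, ∀ γ ∈ F, nrm (σ₀ + τ) (f γ) ≤ 3 / 2 * W (σ₀ + τ) γ := by
    rw [Filter.eventually_all_finite hFf]
    exact fun γ hγ => (hfγ γ hγ).eventually_nrm_le (mspan_bound ha (hfm γ hγ)).1
  obtain ⟨τ, hτ⟩ := hev.exists
  set σ := σ₀ + τ with hσ
  have ha' : ∀ k, Conv σ (a k) := fun k => (ha k).anti (by omega)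
  have hconv : ∀ h ∈ mspan a, Conv σ h := fun h hh => (mspan_bound ha' hh).1
  have hb : ∀ γ ∈ F, ∃ C : ℝ, 0 ≤ C ∧ ∃ N : ℕ, ∀ x, Box σ x → ∀ A,
      (∀ k ≤ N, |ev (a k) x| ≤ A) → |ev (f γ) x| ≤ C * A :=
    fun γ hγ => (mspan_bound ha' (hfm γ hγ)).2
  choose! C hC N hN using hb
  obtain ⟨N₀, hN₀⟩ : ∃ N₀, ∀ γ ∈ F, N γ ≤ N₀ := by
    obtain ⟨b, hb⟩ := (hFf.image N).bddAbove
    exact ⟨b, fun γ hγ => hb ⟨γ, hγ, rfl⟩⟩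
  obtain ⟨C₀, hC₀⟩ : ∃ C₀, ∀ γ ∈ F, C γ / W σ γ ≤ C₀ := by
    obtain ⟨b, hb⟩ := (hFf.image fun γ => C γ / W σ γ).bddAbove
    exact ⟨b, fun γ hγ => hb ⟨γ, hγ, rfl⟩⟩
  refine ⟨σ, by omega, 2 * max C₀ 1, by positivity, N₀, fun x hx A hA k => ?_⟩
  have hx' : Box σ x := hx.anti (by omega)
  have hA0 : 0 ≤ A := (abs_nonneg _).trans (hA 0 (Nat.zero_le _))
  set D := 2 * max C₀ 1 * A with hD
  have hD0 : 0 ≤ D := by positivity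
  -- The invariant charges the loss in `ev` against the decrease of the norm, at rate `D`.
  have step : ∀ M : ℕ, ∃ h' ∈ mspan a, (∀ β, wt β < M → h' β = 0) ∧ nrm σ h' ≤ nrm σ (a k) ∧
      |ev (a k) x| + D * nrm σ h' ≤ D * nrm σ (a k) + |ev h' x| := by
    intro M
    induction M with
    | zero =>
      refine ⟨a k, Submodule.subset_span ⟨(0, k), ?_⟩, by simp, le_rfl, by linarith⟩
      funext α; simp [shift]
    | succ M ih =>
      obtain ⟨h, hm, hz, hnle, hb⟩ := ih
      by_cases hex : ∃ α, wt α = M ∧ h α ≠ 0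
      · obtain ⟨α, hα, hne⟩ := hex
        obtain ⟨γ, hγ, hle⟩ := hF α ⟨(h α)⁻¹ • h, (mspan a).smul_mem _ hm, by simp [hne],
          fun β hβ => by simp [hz β (hα ▸ hβ)]⟩
        obtain ⟨δ, rfl⟩ : ∃ δ, α = δ + γ := ⟨α - γ, (tsub_add_cancel_of_le hle).symm⟩
        have hred := nrm_reduce (δ := δ) (hfγ γ hγ) (hconv _ (hfm γ hγ)) (hconv _ hm) (hτ γ hγ)
        have hsc : Conv σ (shift δ (f γ)) := ((hconv _ (hfm γ hγ)).hasSum_nrm_shift δ).summable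
        refine ⟨h + (-h (δ + γ)) • shift δ (f γ),
          (mspan a).add_mem hm ((mspan a).smul_mem _ (shift_mem_mspan (hfm γ hγ) δ)), ?_, ?_, ?_⟩
        · intro β hβ
          rcases Nat.lt_succ_iff_lt_or_eq.1 hβ with hβ | hβ
          · have : shift δ (f γ) β = 0 := by
              by_cases hr : β ∈ range (δ + ·)
              · obtain ⟨ε, rfl⟩ := hr
                simp only [shift_add_apply]
                refine (hfγ γ hγ).2 ε ?_
                simp only [← hα, wt_add] at hβ
                exact lt_of_mul_lt_mul_left hβ (Nat.zero_le _)
              · exact shift_eq_zero _ hr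
            simp [this, hz β hβ]
          · obtain rfl : β = δ + γ := wt_injective (hβ.trans hα.symm)
            simp [shift_add_apply, (hfγ γ hγ).1]
        · have := mul_nonneg (abs_nonneg (h (δ + γ))) (W_pos σ (δ + γ)).le
          linarith [hred.2]
        · have e1 := (hconv _ hm).ev_add (hsc.smul (-h (δ + γ))) hx'
          rw [hsc.ev_smul _ hx', (hconv _ (hfm γ hγ)).ev_shift hx'] at e1
          have e2 : |h (δ + γ) * (monom x δ * ev (f γ) x)| ≤
              D * (1 / 2 * (|h (δ + γ)| * W σ (δ + γ))) := by
            rw [abs_mul, abs_mul]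
            have b1 := hx'.abs_monom_le δ
            have b2 := hN γ hγ x hx' A fun k hk => hA k (hk.trans (hN₀ γ hγ))
            have b3 : C γ ≤ max C₀ 1 * W σ γ := by
              have := (hC₀ γ hγ).trans (le_max_left C₀ 1)
              rwa [div_le_iff₀ (W_pos _ _)] at this
            have b4 : |ev (f γ) x| ≤ max C₀ 1 * W σ γ * A :=
              b2.trans (mul_le_mul_of_nonneg_right b3 hA0)
            calc |h (δ + γ)| * (|monom x δ| * |ev (f γ) x|)
                ≤ |h (δ + γ)| * (W σ δ * (max C₀ 1 * W σ γ * A)) :=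
                  mul_le_mul_of_nonneg_left (mul_le_mul b1 b4 (abs_nonneg _) (W_pos _ _).le)
                    (abs_nonneg _)
              _ = _ := by rw [W_add, hD]; ring
          have e3 : |ev h x| ≤ |ev (h + (-h (δ + γ)) • shift δ (f γ)) x| +
              |h (δ + γ) * (monom x δ * ev (f γ) x)| := by
            have : ev h x = ev (h + (-h (δ + γ)) • shift δ (f γ)) x +
              h (δ + γ) * (monom x δ * ev (f γ) x) := by rw [e1]; ring
            rw [this]
            exact abs_add_le _ _
          have e4 := mul_le_mul_of_nonneg_left hred.2 hD0
          linarith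
      · push Not at hex
        refine ⟨h, hm, fun β hβ => ?_, hnle, hb⟩
        rcases Nat.lt_succ_iff_lt_or_eq.1 hβ with hβ | hβ
        · exact hz β hβ
        · exact hex β hβ
  -- The remainder lives on exponents with `wt β > M`; on the polydisc of exponent `σ + 1` its value
  -- is therefore smaller than its norm of exponent `σ` by a factor `M + 1`.
  have hlim : Filter.Tendsto
      (fun M : ℕ => D * nrm σ (a k) + 1 / ((M : ℝ) + 1) * nrm σ (a k))
      Filter.atTop (nhds (D * nrm σ (a k) + 0 * nrm σ (a k))) :=
    (tendsto_one_div_add_atTop_nhds_zero_nat.mul_const _).const_add _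
  rw [zero_mul, add_zero] at hlim
  refine ge_of_tendsto' hlim fun M => ?_
  obtain ⟨h, hm, hz, hnle, hb⟩ := step (M + 1)
  have hpt : ∀ β, ‖h β * monom x β‖ ≤ 1 / ((M : ℝ) + 1) * (|h β| * W σ β) := by
    intro β
    rw [Real.norm_eq_abs, abs_mul]
    by_cases hβ : wt β < M + 1
    · simp [hz β hβ]
    · have h1 := hx.abs_monom_le β
      rw [W_sigma_add] at h1
      have h2 : W 1 β ≤ 1 / ((M : ℝ) + 1) := by
        rw [W, pow_one, one_div]
        gcongr
        exact_mod_cast not_lt.1 hβ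
      calc |h β| * |monom x β| ≤ |h β| * (W σ β * (1 / ((M : ℝ) + 1))) :=
            mul_le_mul_of_nonneg_left
              (h1.trans (mul_le_mul_of_nonneg_left h2 (W_pos _ _).le)) (abs_nonneg _)
        _ = _ := by ring
  have h3 : |ev h x| ≤ 1 / ((M : ℝ) + 1) * nrm σ h :=
    tsum_of_norm_bounded ((hconv _ hm).hasSum_nrm.mul_left _) hpt
  have h4 : 1 / ((M : ℝ) + 1) * nrm σ h ≤ 1 / ((M : ℝ) + 1) * nrm σ (a k) := by gcongr
  have h5 : 0 ≤ D * nrm σ h := mul_nonneg hD0 (nrm_nonneg _ _)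
  linarith

/-! ### Multi-index expansion of an analytic function -/

/-- Finite words in the variables, where `none` stands for `t` and `some i` for `xᵢ`: they index the
values of a multilinear series on basis vectors. -/
abbrev Word (m : ℕ) := Σ n : ℕ, Fin n → Option (Fin m)

/-- The exponents of `t` and of the `xᵢ` in the monomial spelled by a word. -/
def content (w : Word m) : ℕ × (Fin m → ℕ) :=
  (Finset.card {j | w.2 j = none}, fun i => Finset.card {j | w.2 j = some i})

lemma prod_word (w : Word m) (x : Fin m → ℝ) (t : ℝ) :
    ∏ j, (w.2 j).elim t x = t ^ (content w).1 * monom x (content w).2 := by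
  rw [← Finset.prod_fiberwise Finset.univ w.2, Fintype.prod_option]
  congr 1
  · rw [content, ← Finset.prod_const]
    refine Finset.prod_congr rfl fun j hj => ?_
    rw [(Finset.mem_filter.1 hj).2]; rfl
  · rw [monom]
    refine Finset.prod_congr rfl fun i _ => ?_
    rw [content, ← Finset.prod_const]
    refine Finset.prod_congr rfl fun j hj => ?_
    rw [(Finset.mem_filter.1 hj).2]; rfl

/-- The standard basis of `ℝᵐ × ℝ`, indexed by the variables. -/
def stdVec : Option (Fin m) → EuclideanSpace ℝ (Fin m) × ℝ
  | none => (0, 1)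
  | some i => (EuclideanSpace.single i 1, 0)

lemma norm_stdVec (o : Option (Fin m)) : ‖stdVec o‖ ≤ 1 := by
  cases o <;> simp [stdVec, Prod.norm_def]

lemma sum_stdVec (x : EuclideanSpace ℝ (Fin m)) (t : ℝ) :
    ∑ o : Option (Fin m), (o.elim t x : ℝ) • stdVec o = (x, t) := by
  rw [Fintype.sum_option]
  refine Prod.ext ?_ ?_
  · ext i
    simp [stdVec, Prod.fst_sum, Finset.sum_apply, Pi.single_apply]
  · simp [stdVec, Prod.snd_sum]

/-- Expand each homogeneous term of the Taylor series over basis vectors, then group words with the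
same content; convergence is absolute on a small polydisc. -/
theorem exists_expansion {f : EuclideanSpace ℝ (Fin m) × ℝ → ℝ} (hf : AnalyticAt ℝ f 0) :
    ∃ δ > (0 : ℝ), ∃ c : ℕ × (Fin m → ℕ) → ℝ,
      ∀ (x : EuclideanSpace ℝ (Fin m)) (t : ℝ), (∀ i, |x i| ≤ δ) → |t| ≤ δ →
        HasSum (fun P => c P * (t ^ P.1 * monom x P.2)) (f (x, t)) := by
  obtain ⟨p, r, hp⟩ := hf
  obtain ⟨ρ, hρ0, hρr⟩ := ENNReal.lt_iff_exists_nnreal_btwn.1 hp.r_pos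
  have hρ0' : 0 < (ρ : ℝ) := by exact_mod_cast hρ0
  obtain ⟨C, hC, hpC⟩ := p.norm_mul_pow_le_of_lt_radius (hρr.trans_le hp.r_le)
  -- There are `(m + 1) ^ n` words of length `n`, hence the factor `m + 1`.
  set δ : ℝ := ρ / (2 * (m + 1)) with hδ
  have hδ0 : 0 < δ := by positivity
  let q : Word m → ℝ := fun w => p w.1 fun j => stdVec (w.2 j)
  have hq : ∀ w : Word m, |q w| ≤ C / ρ ^ w.1 := by
    intro w
    rw [le_div_iff₀ (by positivity)]
    refine le_trans ?_ (hpC w.1)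
    gcongr
    refine ((p w.1).le_opNorm _).trans ?_
    exact mul_le_of_le_one_right (norm_nonneg _)
      (Finset.prod_le_one (fun _ _ => norm_nonneg _) fun _ _ => norm_stdVec _)
  have hsumm : Summable fun w : Word m => C / ρ ^ w.1 * δ ^ w.1 := by
    rw [summable_sigma_of_nonneg fun w => by positivity]
    refine ⟨fun n => (hasSum_fintype _).summable, ?_⟩
    refine ((summable_geometric_of_lt_one (r := 1 / 2) (by norm_num) (by norm_num)).mul_left
      C).congr fun n => ?_
    simp only [tsum_fintype, Finset.sum_const, Finset.card_univ, Fintype.card_pi,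
      Fintype.card_option, Fintype.card_fin, Finset.prod_const, nsmul_eq_mul]
    rw [div_mul_eq_mul_div, mul_div_assoc, ← div_pow, mul_left_comm]
    push_cast
    rw [← mul_pow]
    congr 2
    rw [hδ]
    field_simp
  have hword : ∀ (x : EuclideanSpace ℝ (Fin m)) (t : ℝ), (∀ i, |x i| ≤ δ) → |t| ≤ δ →
      HasSum (fun w : Word m => q w * ((t ^ (content w).1 * monom x (content w).2)))
        (f (x, t)) := by
    intro x t hx ht
    have ho : ∀ o : Option (Fin m), |(o.elim t x : ℝ)| ≤ δ := by
      rintro (_ | i)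
      · exact ht
      · exact hx i
    have hs : Summable (fun w : Word m => q w * ((t ^ (content w).1 * monom x (content w).2))) := by
      refine Summable.of_norm_bounded hsumm fun w => ?_
      rw [← prod_word w (⇑x) t, Real.norm_eq_abs, abs_mul, Finset.abs_prod]
      refine mul_le_mul (hq w) ?_ (Finset.prod_nonneg fun _ _ => abs_nonneg _) (by positivity)
      refine (Finset.prod_le_prod (fun _ _ => abs_nonneg _) fun j _ => ho (w.2 j)).trans ?_
      simp
    have hmem : ((x, t) : EuclideanSpace ℝ (Fin m) × ℝ) ∈ Metric.eball 0 r := by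
      have : ‖((x, t) : EuclideanSpace ℝ (Fin m) × ℝ)‖ < ρ := by
        rw [← sum_stdVec x t]
        refine (norm_sum_le _ _).trans_lt ?_
        have : ∀ o ∈ (Finset.univ : Finset (Option (Fin m))),
            ‖(o.elim t x : ℝ) • stdVec o‖ ≤ δ := by
          intro o _
          rw [norm_smul, Real.norm_eq_abs]
          exact (mul_le_mul (ho o) (norm_stdVec o) (norm_nonneg _) hδ0.le).trans_eq (mul_one _)
        refine (Finset.sum_le_card_nsmul _ _ _ this).trans_lt ?_
        simp only [Finset.card_univ, Fintype.card_option, Fintype.card_fin, nsmul_eq_mul]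
        push_cast
        rw [hδ]
        field_simp
        norm_num
      rw [Metric.mem_eball, edist_zero_right]
      refine lt_trans ?_ hρr
      rw [enorm_eq_nnnorm]
      exact_mod_cast this
    have h1 := hp.hasSum hmem
    rw [zero_add] at h1
    have h2 := hs.hasSum.sigma fun n => hasSum_fintype _
    have h3 : ∀ n, p n (fun _ => (x, t)) =
        ∑ φ : Fin n → Option (Fin m), q ⟨n, φ⟩ *
          ((t ^ (content ⟨n, φ⟩).1 * monom x (content ⟨n, φ⟩).2)) := by
      intro n
      rw [← sum_stdVec x t, ContinuousMultilinearMap.map_sum]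
      refine Finset.sum_congr rfl fun φ _ => ?_
      rw [ContinuousMultilinearMap.map_smul_univ, ← prod_word ⟨n, φ⟩ (⇑x) t, smul_eq_mul, mul_comm]
    have h4 := hs.hasSum
    rwa [h2.unique (hasSum_of_eq h1 fun n => (h3 n).symm)] at h4
  -- grouping the words by content
  have hfib : ∀ P : ℕ × (Fin m → ℕ), Summable fun w : {w : Word m // content w = P} => q w.1 := by
    intro P
    have h1 := (hword (WithLp.toLp 2 fun _ => δ) δ (fun i => (abs_of_pos hδ0).le)
      (abs_of_pos hδ0).le).summable.comp_injective
      (Subtype.val_injective (p := fun w : Word m => content w = P))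
    have hne : δ ^ P.1 * monom (fun _ => δ) P.2 ≠ 0 :=
      mul_ne_zero (by positivity) (Finset.prod_ne_zero_iff.2 fun i _ => by positivity)
    rw [← summable_mul_right_iff hne]
    refine h1.congr fun w => ?_
    simp only [Function.comp, w.2]
  refine ⟨δ, hδ0, fun P => ∑' w : {w : Word m // content w = P}, q w.1, fun x t hx ht => ?_⟩
  have h1 := (Equiv.sigmaFiberEquiv (content (m := m))).hasSum_iff.2 (hword x t hx ht)
  refine h1.sigma fun P => ?_
  refine hasSum_of_eq ((hfib P).hasSum.mul_right _) fun w => ?_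
  obtain ⟨w, rfl⟩ := w
  rfl

/-! ### Uniform sign pieces on vertical lines -/

lemma W_le_pow {σ : ℕ} {δ : ℝ} (hδ : (1 / 2 : ℝ) ^ σ ≤ δ) (α : Fin m → ℕ) :
    W σ α ≤ monom (fun _ => δ) α := by
  rw [W_eq_prod, monom]
  refine Finset.prod_le_prod (fun i _ => by positivity) fun i _ => ?_
  refine pow_le_pow_left₀ (by positivity) (le_trans ?_ hδ) _
  rw [one_div, inv_pow]
  gcongr
  exact_mod_cast (Nat.prime_nth_prime i).two_le

lemma PiecesBy.congr {n : ℕ} {J : Set ℝ} {h g : ℝ → ℝ} (H : PiecesBy n J h)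
    (hg : ∀ t ∈ J, g t = h t) : PiecesBy n J g := by
  obtain ⟨F, hc, hJ, hF⟩ := H
  refine ⟨F, hc, hJ, fun I hI => ⟨(hF I hI).1, ?_⟩⟩
  have hIJ : I ⊆ J := by rw [hJ]; exact Set.subset_biUnion_of_mem (u := fun I => I) hI
  refine (hF I hI).2.imp (fun H t ht => ?_) (fun H t ht => ?_)
  · rw [hg t (hIJ ht)]; exact H t ht
  · rw [hg t (hIJ ht)]; exact H t ht

/-- The uniform bound for a single function; the number `q` of pieces depends neither on the vertical
line nor on the level `s`. -/
theorem exists_pieces {f : EuclideanSpace ℝ (Fin m) × ℝ → ℝ} (hf : AnalyticAt ℝ f 0) :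
    ∃ η₀ > (0 : ℝ), ∃ q : ℕ, ∀ η, 0 < η → η ≤ η₀ →
      ∀ x ∈ Metric.ball (0 : EuclideanSpace ℝ (Fin m)) η, ∀ s : ℝ,
        PiecesBy q (Ioo (-η) η) (fun t => f (x, t) - s) := by
  obtain ⟨δ, hδ, c, hc⟩ := exists_expansion hf
  -- absolute convergence of the expansion at the corner of the polydisc
  have habs : Summable fun P : ℕ × (Fin m → ℕ) => |c P| * (δ ^ P.1 * monom (fun _ => δ) P.2) := by
    refine (hc (WithLp.toLp 2 fun _ => δ) δ (fun i => (abs_of_pos hδ).le)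
      (abs_of_pos hδ).le).summable.abs.congr fun P => ?_
    have : 0 ≤ monom (fun _ : Fin m => δ) P.2 := Finset.prod_nonneg fun _ _ => by positivity
    rw [abs_mul, abs_of_nonneg (mul_nonneg (by positivity) this)]
  set M := ∑' P : ℕ × (Fin m → ℕ), |c P| * (δ ^ P.1 * monom (fun _ => δ) P.2) with hM
  have hMnn : 0 ≤ M := tsum_nonneg fun P => mul_nonneg (abs_nonneg _)
    (mul_nonneg (by positivity) (Finset.prod_nonneg fun _ _ => by positivity))
  obtain ⟨σ₀, hσ₀⟩ := exists_pow_lt_of_lt_one hδ (show (1 / 2 : ℝ) < 1 by norm_num)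
  have hterm : ∀ σ, σ₀ ≤ σ → ∀ (k : ℕ) (α : Fin m → ℕ), |c (k, α)| * W σ α ≤
      (δ ^ k)⁻¹ * (|c (k, α)| * (δ ^ k * monom (fun _ => δ) α)) := by
    intro σ hσ k α
    calc |c (k, α)| * W σ α ≤ |c (k, α)| * monom (fun _ => δ) α :=
          mul_le_mul_of_nonneg_left ((W_anti hσ α).trans (W_le_pow hσ₀.le α)) (abs_nonneg _)
      _ = _ := by field_simp
  have hrow : ∀ k : ℕ, Summable fun α : Fin m → ℕ =>
      |c (k, α)| * (δ ^ k * monom (fun _ => δ) α) := fun k =>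
    habs.comp_injective (i := fun α : Fin m → ℕ => (k, α)) (Prod.mk_right_injective k)
  have hconv : ∀ σ, σ₀ ≤ σ → ∀ k : ℕ, Conv σ fun α : Fin m → ℕ => c (k, α) := fun σ hσ k =>
    Summable.of_nonneg_of_le (fun _ => mul_nonneg (abs_nonneg _) (W_pos _ _).le)
      (hterm σ hσ k) ((hrow k).mul_left _)
  have hnrm : ∀ σ, σ₀ ≤ σ → ∀ k : ℕ, nrm σ (fun α : Fin m → ℕ => c (k, α)) ≤
      (M + 1) * (1 / δ) ^ k := by
    intro σ hσ k
    have h1 := hasSum_le (hterm σ hσ k) (hconv σ hσ k).hasSum_nrm ((hrow k).hasSum.mul_left _)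
    have h2 : ∑' α : Fin m → ℕ, |c (k, α)| * (δ ^ k * monom (fun _ => δ) α) ≤ M :=
      Summable.tsum_le_tsum_of_inj (fun α : Fin m → ℕ => (k, α)) (Prod.mk_right_injective k)
        (fun P _ => mul_nonneg (abs_nonneg _)
          (mul_nonneg (by positivity) (Finset.prod_nonneg fun _ _ => by positivity)))
        (fun _ => le_rfl) (hrow k) habs
    refine h1.trans ?_
    rw [one_div, inv_pow, mul_comm]
    gcongr
    linarith
  -- The constant term is left out, so that the level `s` plays no role.
  obtain ⟨σ, hσ, C, hC, N, hcore⟩ := core (a := fun k α => c (k + 1, α))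
    (fun k => hconv σ₀ le_rfl (k + 1))
  obtain ⟨η₁, hη₁, hpieces⟩ := pieces_ser N (C * (M + 1) / δ) (2 / δ) (by positivity)
    (by positivity)
  obtain ⟨η₂, hη₂, hbox⟩ : ∃ η₂ > (0 : ℝ), ∀ x : EuclideanSpace ℝ (Fin m), ‖x‖ < η₂ →
      Box (σ + 1) x := by
    have : ∀ᶠ y : ℝ in nhds 0, ∀ i : Fin m, y < ((Nat.nth Nat.Prime i : ℝ) ^ (σ + 1))⁻¹ := by
      rw [Filter.eventually_all]
      intro i
      have : (0 : ℝ) < Nat.nth Nat.Prime i := by exact_mod_cast (Nat.prime_nth_prime i).pos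
      exact gt_mem_nhds (by positivity)
    obtain ⟨ε, hε, hb⟩ := Metric.eventually_nhds_iff.1 this
    refine ⟨ε, hε, fun x hx i => ((PiLp.norm_apply_le x i).trans (hb ?_ i).le)⟩
    simpa using hx
  refine ⟨min (min η₁ η₂) (δ / 4), by positivity, 2 * 2 ^ N, fun η h0 hη x hx s => ?_⟩
  have e1 : η ≤ η₁ := hη.trans ((min_le_left _ _).trans (min_le_left _ _))
  have e2 : η ≤ η₂ := hη.trans ((min_le_left _ _).trans (min_le_right _ _))
  have e3 : η ≤ δ / 4 := hη.trans (min_le_right _ _)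
  rw [mem_ball_zero_iff] at hx
  have hB := hbox x (hx.trans_le e2)
  have hBσ : Box σ x := hB.anti (by omega)
  set b : ℕ → ℝ := fun k => ev (fun α : Fin m → ℕ => c (k, α)) x with hb
  have hxδ : ∀ i, |x i| ≤ δ := fun i => by
    have := PiLp.norm_apply_le x i
    rw [Real.norm_eq_abs] at this
    linarith
  -- the restriction of `f` to the vertical line is a power series
  have hser : ∀ t ∈ Ioo (-η) η, f (x, t) = ser b t := by
    intro t ht
    have htδ : |t| ≤ δ := abs_le.2 ⟨by linarith [ht.1], by linarith [ht.2]⟩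
    refine ((hc x t hxδ htδ).prod_fiberwise fun k => ?_).tsum_eq.symm
    refine hasSum_of_eq (((hconv σ hσ k).hasSum_ev hBσ).mul_right (t ^ k)) fun α => ?_
    ring
  have hbb : ∀ k, |b k| ≤ (M + 1) * (1 / δ) ^ k := by
    intro k
    refine le_trans ?_ (hnrm σ hσ k)
    refine tsum_of_norm_bounded (f := fun α => c (k, α) * monom x α)
      (hconv σ hσ k).hasSum_nrm fun α => ?_
    rw [Real.norm_eq_abs, abs_mul]
    exact mul_le_mul_of_nonneg_left (hBσ.abs_monom_le α) (abs_nonneg _)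
  have hderiv : PiecesBy (2 ^ N) (Ioo (-η) η) (ser fun k => (k + 1) * b (k + 1)) := by
    obtain ⟨j, hjN, hj⟩ := Finset.exists_max_image (Finset.range (N + 1)) (fun j => |b (j + 1)|)
      ⟨0, by simp⟩
    have hmax := hcore x hB |b (j + 1)| fun i hi => hj i (by simpa using Nat.lt_succ_of_le hi)
    by_cases hA : b (j + 1) = 0
    · refine (piecesBy_one ordConnected_Ioo (Or.inr fun t _ => ?_)).mono Nat.one_le_two_pow
      have hz : ∀ k, b (k + 1) = 0 := by
        intro k
        have := hmax k
        rw [hA, abs_zero, mul_zero, zero_mul] at this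
        exact abs_nonpos_iff.1 this
      simp [ser, hz]
    · refine hpieces η h0 e1 j (by simpa [Nat.lt_succ_iff] using hjN) _ |b (j + 1)|
        (abs_pos.2 hA) (fun k => ?_) ?_
      · rw [abs_mul, abs_of_nonneg (by positivity)]
        calc ((k : ℝ) + 1) * |b (k + 1)|
            ≤ 2 ^ k * (C * |b (j + 1)| * ((M + 1) * (1 / δ) ^ (k + 1))) := by
              gcongr
              · exact succ_le_two_pow k
              · exact (hmax k).trans (mul_le_mul_of_nonneg_left (hnrm σ hσ (k + 1))
                  (by positivity))
          _ = C * (M + 1) / δ * |b (j + 1)| * (2 / δ) ^ k := by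
              rw [div_pow, div_pow]; field_simp; ring
      · rw [abs_mul, abs_of_nonneg (show (0 : ℝ) ≤ (j : ℝ) + 1 by positivity)]
        exact le_mul_of_one_le_left (abs_nonneg _) (by linarith [(Nat.cast_nonneg j : (0:ℝ) ≤ j)])
  refine (hderiv.of_deriv (h := fun t => ser b t - s) fun t ht => ?_).congr
    fun t ht => by rw [hser t ht]
  refine (hasDerivAt_ser (by positivity) hbb ?_ ht).sub_const s
  rw [mul_one_div, div_mul_eq_mul_div, div_le_one hδ]
  linarith

end

/-- **Corollary 2.1.2.** Let `f 1, ..., f l` be real analytic on a neighborhood `U` of the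
origin of `ℝⁿ = ℝ^{n-1} × ℝ` (with `m = n - 1`), none identically zero near the origin. Then
there are `η > 0` and a positive integer `p` such that for every choice of reals `s i` and
every `x'` in the `(n-1)`-dimensional ball `B(0,η)`, the set
`{xₙ : |xₙ| < η and f i (x', xₙ) < s i for each i}` is a union of at most `p` intervals
(i.e. of `p` order-connected subsets of `ℝ`, some possibly empty). -/
theorem stmt5 (m l : ℕ) (f : Fin l → (EuclideanSpace ℝ (Fin m) × ℝ → ℝ))
    (U : Set (EuclideanSpace ℝ (Fin m) × ℝ))
    (hU : U ∈ nhds (0 : EuclideanSpace ℝ (Fin m) × ℝ))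
    (hf : ∀ i, AnalyticOnNhd ℝ (f i) U)
    (hnz : ∀ i, ¬ ∀ᶠ x in nhds (0 : EuclideanSpace ℝ (Fin m) × ℝ), f i x = 0) :
    ∃ η > (0 : ℝ), ∃ p : ℕ, 0 < p ∧
      ∀ (s : Fin l → ℝ), ∀ x' ∈ Metric.ball (0 : EuclideanSpace ℝ (Fin m)) η,
        ∃ I : Fin p → Set ℝ, (∀ j, (I j).OrdConnected) ∧
          {t : ℝ | |t| < η ∧ ∀ i, f i (x', t) < s i} = ⋃ j, I j := by
  classical
  choose η₀ hη₀ q hq using fun i => exists_pieces (hf i 0 (mem_of_mem_nhds hU))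
  obtain ⟨η, hη, hηle⟩ : ∃ η > (0 : ℝ), ∀ i, η ≤ η₀ i := by
    have : ∀ᶠ y : ℝ in nhdsWithin 0 (Ioi 0), ∀ i, y < η₀ i := by
      rw [Filter.eventually_all]
      exact fun i => nhdsWithin_le_nhds (gt_mem_nhds (hη₀ i))
    obtain ⟨y, hy, hy0⟩ := (this.and self_mem_nhdsWithin).exists
    exact ⟨y, hy0, fun i => (hy i).le⟩
  refine ⟨η, hη, ∏ i, q i + 1, Nat.succ_pos _, fun s x hx => ?_⟩
  choose F hFc hFJ hF using fun i => hq i η hη (hηle i) x hx (s i)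
  -- one interval for each choice of a piece with negative sign for every `i`
  let G : Finset (Set ℝ) :=
    (Fintype.piFinset fun i => (F i).filter fun I => ∀ t ∈ I, f i (x, t) - s i < 0).image
      fun φ => Ioo (-η) η ∩ ⋂ i, φ i
  have hGc : G.card ≤ ∏ i, q i := by
    refine Finset.card_image_le.trans ?_
    rw [Fintype.card_piFinset]
    exact Finset.prod_le_prod' fun i _ => (Finset.card_filter_le _ _).trans (hFc i)
  have hGo : ∀ I ∈ G, I.OrdConnected := by
    intro I hI
    obtain ⟨φ, hφ, rfl⟩ := Finset.mem_image.1 hI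
    rw [Fintype.mem_piFinset] at hφ
    exact ordConnected_Ioo.inter
      (ordConnected_iInter fun i => (hF i _ (Finset.mem_filter.1 (hφ i)).1).1)
  have hGU : {t : ℝ | |t| < η ∧ ∀ i, f i (x, t) < s i} = ⋃ I ∈ G, I := by
    ext t
    simp only [Set.mem_iUnion, exists_prop, mem_ofPred_eq]
    constructor
    · rintro ⟨ht, hlt⟩
      have htJ : t ∈ Ioo (-η) η := abs_lt.1 ht
      have hex : ∀ i, ∃ I ∈ F i, t ∈ I := fun i => by
        have := htJ
        rw [hFJ i] at this
        simpa using this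
      choose φ hφ htφ using hex
      refine ⟨_, Finset.mem_image.2 ⟨φ, Fintype.mem_piFinset.2 fun i =>
        Finset.mem_filter.2 ⟨hφ i, ?_⟩, rfl⟩, htJ, mem_iInter.2 htφ⟩
      refine (hF i _ (hφ i)).2.resolve_right fun h => ?_
      have := h t (htφ i)
      linarith [hlt i]
    · rintro ⟨I, hI, ht⟩
      obtain ⟨φ, hφ, rfl⟩ := Finset.mem_image.1 hI
      rw [Fintype.mem_piFinset] at hφ
      refine ⟨abs_lt.2 ht.1, fun i => ?_⟩
      have := (Finset.mem_filter.1 (hφ i)).2 t (mem_iInter.1 ht.2 i)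
      linarith
  -- enumerate `G`, padding with empty sets
  refine ⟨fun j => if h : (j : ℕ) < G.card then (G.equivFin.symm ⟨j, h⟩ : Set ℝ) else ∅,
    fun j => ?_, ?_⟩
  · dsimp only
    split_ifs with h
    · exact hGo _ (Subtype.prop _)
    · exact ordConnected_empty
  · rw [hGU]
    ext t
    simp only [Set.mem_iUnion, exists_prop]
    constructor
    · rintro ⟨I, hI, ht⟩
      have hlt := (G.equivFin ⟨I, hI⟩).2
      refine ⟨⟨G.equivFin ⟨I, hI⟩, by omega⟩, ?_⟩
      rw [dif_pos hlt]
      simpa using ht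
    · rintro ⟨j, hj⟩
      split_ifs at hj with h
      · exact ⟨_, Subtype.prop _, hj⟩
      · exact absurd hj (notMem_empty t)
end

section
/- Let (E,μ) be a measure space and g a bounded measurable function on E such that for some constants C > 0 and δ > 0, for all a > 0 one has μ({x ∈ E : |g(x)| < a}) ≤ C a^δ. Let ε > 0 with δ < ε. Then there is a constant D > 0, depending only on δ and ε, such that for all λ ≠ 0, ∫_E min(1, |λ g(x)|^{−ε}) dμ(x) ≤ C·D·|λ|^{−δ}. -/
open MeasureTheory

/-!
The proof is a dyadic decomposition in the size of `u = |λ g(x)|`. If `u < 2`, the integrand is at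
most `1`; if `2 ^ n ≤ u < 2 ^ (n + 1)`, it is at most `2 ^ (-ε n)`. Hence the integrand is bounded
by `∑ n, 2 ^ (-ε n) · 𝟙 {|g| < 2 ^ (n + 1) / |λ|}`. Integrating term by term and using the sublevel
set hypothesis gives `C |λ| ^ (-δ) 2 ^ δ ∑ n, 2 ^ ((δ - ε) n)`, a geometric series that converges
because `δ < ε`. This yields `D = 2 ^ δ / (1 - 2 ^ (δ - ε))`.
-/

/-- Every real `u` lies below some `2 ^ (n + 1)` for which `min 1 (u ^ (-ε))` is at most
`2 ^ (-ε n)`. For `u < 1` the index is `n = 0`, which covers the convention that the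
integrand is `1` where `g` vanishes. -/
lemma exists_dyadic_bound {ε : ℝ} (hε : 0 < ε) (u : ℝ) :
    ∃ n : ℕ, u < 2 ^ (n + 1) ∧ (min 1 (u ^ (-ε)) ≤ ((2 : ℝ) ^ (-ε)) ^ n) ∧ (u < 1 → n = 0) := by
  rcases lt_or_ge u 1 with h | h
  · exact ⟨0, by norm_num; linarith, by simp, fun _ => rfl⟩
  · obtain ⟨n, hn1, hn2⟩ := exists_nat_pow_near h (one_lt_two)
    refine ⟨n, hn2, (min_le_right _ _).trans ?_, fun h' => absurd h' (not_lt.mpr h)⟩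
    have h2 : ((2 : ℝ) ^ (-ε)) ^ n = ((2 : ℝ) ^ n) ^ (-ε) := by
      rw [← Real.rpow_natCast, ← Real.rpow_natCast, ← Real.rpow_mul (by norm_num),
        ← Real.rpow_mul (by norm_num), mul_comm]
    rw [h2]
    exact Real.rpow_le_rpow_of_nonpos (by positivity) hn1 (by linarith)

/-- **Lemma 3.1, case δ < ε.** Let `0 < δ < ε`. There is a constant `D > 0` depending only on
`δ` and `ε` such that: for every measure space `(E,μ)`, every bounded measurable `g : E → ℝ`,
and every `C > 0` with `μ{x : |g(x)| < a} ≤ C aᵟ` for all `a > 0`, one has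
`∫_E min(1, |λ g|^{-ε}) dμ ≤ C·D·|λ|^{-δ}` for all `λ ≠ 0`. The integrand is interpreted as
`1` at points where `g(x) = 0` (since `|λ g(x)|^{-ε}` is `+∞` there). -/
theorem stmt7 (δ ε : ℝ) (hδ : 0 < δ) (hδε : δ < ε) :
    ∃ D : ℝ, 0 < D ∧
      ∀ (E : Type*) [MeasurableSpace E] (μ : Measure E) (g : E → ℝ), Measurable g →
      (∃ M₀ : ℝ, ∀ x, |g x| ≤ M₀) →
      ∀ C : ℝ, 0 < C →
      (∀ a : ℝ, 0 < a → μ {x | |g x| < a} ≤ ENNReal.ofReal (C * a ^ δ)) →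
      ∀ lam : ℝ, lam ≠ 0 →
        (∫⁻ x, ENNReal.ofReal
            (if g x = 0 then (1 : ℝ) else min 1 (|lam * g x| ^ (-ε))) ∂μ) ≤
          ENNReal.ofReal (C * D * |lam| ^ (-δ)) := by
  have hq0 : (0 : ℝ) < 2 ^ (δ - ε) := by positivity
  have hq1 : (2 : ℝ) ^ (δ - ε) < 1 :=
    Real.rpow_lt_one_of_one_lt_of_neg (by norm_num) (by linarith)
  refine ⟨2 ^ δ * (1 - 2 ^ (δ - ε))⁻¹,
    mul_pos (by positivity) (inv_pos.mpr (by linarith)), ?_⟩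
  intro E _ μ g hg _ C hC hμ lam hlam
  have hs : 0 < |lam| := abs_pos.mpr hlam
  let A : ℕ → Set E := fun n => {x | |g x| < 2 ^ (n + 1) / |lam|}
  have hA : ∀ n, MeasurableSet (A n) := fun n => measurableSet_lt hg.abs measurable_const
  let c : ℕ → ENNReal := fun n => ENNReal.ofReal (((2 : ℝ) ^ (-ε)) ^ n)
  have hpt : ∀ x, ENNReal.ofReal (if g x = 0 then (1 : ℝ) else min 1 (|lam * g x| ^ (-ε)))
      ≤ ∑' n, (A n).indicator (fun _ => c n) x := by
    intro x
    obtain ⟨n, hn, hb, h0⟩ := exists_dyadic_bound (hδ.trans hδε) |lam * g x|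
    have hx : x ∈ A n := by
      change |g x| < 2 ^ (n + 1) / |lam|
      rw [lt_div_iff₀ hs, mul_comm, ← abs_mul]
      exact hn
    refine le_trans ?_ (ENNReal.le_tsum n)
    rw [Set.indicator_of_mem hx]
    apply ENNReal.ofReal_le_ofReal
    split_ifs with hgx
    · rw [h0 (by simp [hgx])]
      simp
    · exact hb
  have hterm : ∀ n, c n * μ (A n) ≤
      ENNReal.ofReal (C * 2 ^ δ * |lam| ^ (-δ) * ((2 : ℝ) ^ (δ - ε)) ^ n) := by
    intro n
    calc c n * μ (A n)
        ≤ c n * ENNReal.ofReal (C * (2 ^ (n + 1) / |lam|) ^ δ) := by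
          gcongr
          exact hμ _ (by positivity)
      _ = _ := by
          rw [← ENNReal.ofReal_mul (by positivity)]
          congr 1
          have h1 : ((2 : ℝ) ^ (n + 1)) ^ δ = (2 ^ δ) ^ n * 2 ^ δ := by
            rw [← pow_succ, ← Real.rpow_natCast, ← Real.rpow_natCast,
              ← Real.rpow_mul (by norm_num), ← Real.rpow_mul (by norm_num), mul_comm]
          rw [Real.div_rpow (by positivity) hs.le, h1, Real.rpow_neg hs.le, sub_eq_add_neg,
            Real.rpow_add (by norm_num), mul_pow]
          ring
  calc _ ≤ ∫⁻ x, ∑' n, (A n).indicator (fun _ => c n) x ∂μ := lintegral_mono hpt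
    _ = ∑' n, c n * μ (A n) := by
        rw [lintegral_tsum fun n => (measurable_const.indicator (hA n)).aemeasurable]
        exact tsum_congr fun n => lintegral_indicator_const (hA n) _
    _ ≤ ∑' n, ENNReal.ofReal (C * 2 ^ δ * |lam| ^ (-δ) * ((2 : ℝ) ^ (δ - ε)) ^ n) :=
        ENNReal.tsum_le_tsum hterm
    _ = _ := by
        rw [← ENNReal.ofReal_tsum_of_nonneg (fun n => by positivity)
          ((summable_geometric_of_lt_one hq0.le hq1).mul_left _), tsum_mul_left,
          tsum_geometric_of_lt_one hq0.le hq1]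
        congr 1
        ring
end

section
/- Let (E,μ) be a measure space and g a bounded measurable function on E such that for some constants C > 0 and δ > 0, for all a > 0 one has μ({x ∈ E : |g(x)| < a}) ≤ C a^δ. Let M = sup_E |g| and take ε = δ. Then there is a constant D > 0, depending only on ε, such that for all λ ≠ 0, ∫_E min(1, |λ g(x)|^{−ε}) dμ(x) ≤ C·D·(1 + log₊(M|λ|))·|λ|^{−δ}. -/
/-!
The proof is an exponential version of the layer-cake argument. Put `L = |lam|` and
`M = essSup |g|`. Where `L |g| < 1` the integrand is at most `1`, and this set has measure at
most `C L ^ (-δ)`. Almost every other point lies in a shell `exp k ≤ L |g| < exp (k + 1)` with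
`k < N`, where `N = ⌊log₊ (M L)⌋₊ + 1`. There the integrand is at most `exp (-k δ)`, while the
shell has measure at most `C (exp (k + 1) / L) ^ δ`, so each shell contributes at most
`C exp δ L ^ (-δ)`, independently of `k`. The number of shells is at most `1 + log₊ (M L)`,
and the bound follows with `D = 1 + exp δ`.
-/

open MeasureTheory

/-- The integrand, as a function of `t = |lam * g x|`, is dominated by a step function with
steps at the powers of `e`, as long as `t` stays in the range covered by `N` shells. -/
lemma integrand_le_steps {δ t : ℝ} (hδ : 0 < δ) {N : ℕ} (hN : 1 ≤ t → Real.log t < N) :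
    ENNReal.ofReal (if t = 0 then (1 : ℝ) else min 1 (t ^ (-δ))) ≤
      (if t < 1 then 1 else 0) +
        ∑ k ∈ Finset.range N,
          if t < Real.exp (k + 1) then ENNReal.ofReal (Real.exp (-(k * δ))) else 0 := by
  by_cases h1 : t < 1
  · rw [if_pos h1]
    refine le_trans ?_ le_self_add
    rw [← ENNReal.ofReal_one]
    apply ENNReal.ofReal_le_ofReal
    split_ifs
    · exact le_rfl
    · exact min_le_left _ _
  · push Not at h1
    have ht : 0 < t := by linarith
    have hlog : 0 ≤ Real.log t := Real.log_nonneg h1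
    set k := ⌊Real.log t⌋₊ with hk
    have hk1 : (k : ℝ) ≤ Real.log t := Nat.floor_le hlog
    have hk2 : Real.log t < k + 1 := Nat.lt_floor_add_one _
    have hkN : k ∈ Finset.range N :=
      Finset.mem_range.2 (by exact_mod_cast hk1.trans_lt (hN h1))
    refine le_trans ?_ le_add_self
    refine le_trans ?_ (Finset.single_le_sum (fun _ _ => zero_le) hkN)
    rw [if_pos ((Real.log_lt_iff_lt_exp ht).1 hk2), if_neg ht.ne']
    apply ENNReal.ofReal_le_ofReal
    refine (min_le_right _ _).trans ?_
    rw [Real.rpow_def_of_pos ht, Real.exp_le_exp]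
    nlinarith

/-- **Lemma 3.1, case ε = δ.** Let `δ > 0` and take `ε = δ`. There is a constant `D > 0`
depending only on `δ` such that: for every measure space `(E,μ)`, every bounded measurable
`g : E → ℝ`, and every `C > 0` with `μ{x : |g(x)| < a} ≤ C aᵟ` for all `a > 0`, writing
`M = esssup_E |g|`, one has `∫_E min(1, |λ g|^{-δ}) dμ ≤ C·D·(1 + log₊(M|λ|))·|λ|^{-δ}` for
all `λ ≠ 0`. The integrand is interpreted as `1` where `g(x) = 0`, and
`log₊ t = max (log t) 0`. -/
theorem stmt8 (δ : ℝ) (hδ : 0 < δ) :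
    ∃ D : ℝ, 0 < D ∧
      ∀ (E : Type*) [MeasurableSpace E] (μ : Measure E) (g : E → ℝ), Measurable g →
      (∃ M₀ : ℝ, ∀ x, |g x| ≤ M₀) →
      ∀ C : ℝ, 0 < C →
      (∀ a : ℝ, 0 < a → μ {x | |g x| < a} ≤ ENNReal.ofReal (C * a ^ δ)) →
      ∀ lam : ℝ, lam ≠ 0 →
        (∫⁻ x, ENNReal.ofReal
            (if g x = 0 then (1 : ℝ) else min 1 (|lam * g x| ^ (-δ))) ∂μ) ≤
          ENNReal.ofReal (C * D *
            (1 + max (Real.log (essSup (fun x => |g x|) μ * |lam|)) 0) * |lam| ^ (-δ)) := by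
  refine ⟨1 + Real.exp δ, by positivity, ?_⟩
  intro E _ μ g hg ⟨M₀, hM₀⟩ C hC hμ lam hlam
  have hL : 0 < |lam| := abs_pos.2 hlam
  have hc : 0 < C * |lam| ^ (-δ) := by positivity
  set ℓ := max (Real.log (essSup (fun x => |g x|) μ * |lam|)) 0 with hℓ
  have hℓ0 : 0 ≤ ℓ := le_max_right _ _
  set N := ⌊ℓ⌋₊ + 1 with hN
  have hN1 : ℓ < N := by rw [hN]; push_cast; exact Nat.lt_floor_add_one _
  have hN2 : (N : ℝ) ≤ 1 + ℓ := by
    rw [hN]; push_cast; linarith [Nat.floor_le hℓ0]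
  have hbdd : ∀ᵐ x ∂μ, |g x| ≤ essSup (fun x => |g x|) μ :=
    ae_le_essSup (Filter.isBoundedUnder_of ⟨M₀, hM₀⟩)
  have hmeas : ∀ r : ℝ, MeasurableSet {x | |lam * g x| < r} := fun r =>
    measurableSet_lt (by fun_prop) measurable_const
  have hset : ∀ s : ℝ, μ {x | |lam * g x| < Real.exp s} ≤
      ENNReal.ofReal (C * |lam| ^ (-δ) * Real.exp (s * δ)) := by
    intro s
    have h := hμ (Real.exp s / |lam|) (by positivity)
    have e1 : {x | |lam * g x| < Real.exp s} = {x | |g x| < Real.exp s / |lam|} := by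
      ext x
      simp only [Set.mem_ofPred_eq, abs_mul]
      rw [lt_div_iff₀ hL, mul_comm]
    rw [e1]
    convert h using 2
    rw [Real.div_rpow (Real.exp_pos _).le hL.le, Real.rpow_neg hL.le, ← Real.exp_mul]
    ring
  calc _ ≤ ∫⁻ x, ((if |lam * g x| < 1 then 1 else 0) +
        ∑ k ∈ Finset.range N, if |lam * g x| < Real.exp (k + 1) then
          ENNReal.ofReal (Real.exp (-(k * δ))) else 0) ∂μ := by
        apply lintegral_mono_ae
        filter_upwards [hbdd] with x hx
        have h0 : g x = 0 ↔ |lam * g x| = 0 := by simp [hlam]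
        simp only [h0]
        apply integrand_le_steps hδ
        intro h1
        refine lt_of_le_of_lt ((Real.log_le_log (by linarith) ?_).trans (le_max_left _ _)) hN1
        rw [abs_mul, mul_comm]
        gcongr
    _ = μ {x | |lam * g x| < 1} + ∑ k ∈ Finset.range N,
          ENNReal.ofReal (Real.exp (-(k * δ))) * μ {x | |lam * g x| < Real.exp (k + 1)} := by
        have hind : ∀ (r : ℝ) (c : ENNReal), (fun x => if |lam * g x| < r then c else 0) =
            {x | |lam * g x| < r}.indicator (fun _ => c) := by
          intro r c; ext x; simp [Set.indicator]
        have hm : ∀ (r : ℝ) (c : ENNReal),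
            Measurable (fun x => if |lam * g x| < r then c else 0) := fun r c =>
          Measurable.ite (hmeas r) measurable_const measurable_const
        rw [lintegral_add_left (hm _ _), lintegral_finsetSum _ (fun k _ => hm _ _)]
        simp only [hind, lintegral_indicator_const (hmeas _), one_mul]
    _ ≤ ENNReal.ofReal (C * |lam| ^ (-δ)) + ∑ k ∈ Finset.range N,
          ENNReal.ofReal (C * |lam| ^ (-δ) * Real.exp δ) := by
        gcongr with k _
        · simpa using hset 0
        · refine (mul_le_mul_right (hset (k + 1)) _).trans_eq ?_
          rw [← ENNReal.ofReal_mul (Real.exp_pos _).le]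
          congr 1
          rw [mul_left_comm, ← Real.exp_add]
          ring_nf
    _ = ENNReal.ofReal (C * |lam| ^ (-δ) * (1 + N * Real.exp δ)) := by
        rw [← ENNReal.ofReal_sum_of_nonneg (fun _ _ => by positivity),
          ← ENNReal.ofReal_add hc.le (Finset.sum_nonneg fun _ _ => by positivity)]
        congr 1
        simp
        ring
    _ ≤ _ := by
        apply ENNReal.ofReal_le_ofReal
        have h2 : 1 + N * Real.exp δ ≤ (1 + Real.exp δ) * (1 + ℓ) := by
          nlinarith [Real.exp_pos δ]
        calc _ ≤ C * |lam| ^ (-δ) * ((1 + Real.exp δ) * (1 + ℓ)) := by gcongr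
          _ = _ := by ring
end

section
/- Let (E,μ) be a measure space and g a bounded measurable function on E such that for some constants C > 0 and δ > 0, for all a > 0 one has μ({x ∈ E : |g(x)| < a}) ≤ C a^δ. Let M = sup_E |g| and let ε > 0 with δ > ε. Then there is a constant D > 0, depending only on δ and ε, such that for all λ ≠ 0, ∫_E min(1, |λ g(x)|^{−ε}) dμ(x) ≤ C( |λ|^{−δ} + D·|λ|^{−ε}·M^{δ−ε} ). -/
open MeasureTheory

/-!
Write `L = |λ|` and `M = esssup |g|`. On `{|g| < 1/L}` the integrand is at most `1`, and this set
has measure at most `C L^{-δ}`. On the rest the integrand is at most `L^{-ε} |g|^{-ε}`, which is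
summed over the dyadic shells `M 2^{-k-1} < |g| ≤ M 2^{-k}`: they cover almost all of `E` because
`g` vanishes only on a null set, the `k`-th one has measure at most `C (2 M 2^{-k})^δ`, and
`|g|^{-ε} ≤ (M 2^{-k-1})^{-ε}` on it. As `δ > ε`, the resulting series is geometric with ratio
`2^{-(δ-ε)}`, which gives the bound with `D = 2^{δ+ε} / (1 - 2^{-(δ-ε)})`.
-/

/-- The value of a single term of the dyadic sum. -/
lemma dyadic_term (δ ε C L M : ℝ) (hM : 0 < M) (k : ℕ) :
    (L ^ (-ε) * (M * (1 / 2) ^ (k + 1)) ^ (-ε)) * (C * (2 * (M * (1 / 2) ^ k)) ^ δ) =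
      (C * L ^ (-ε) * M ^ (δ - ε) * 2 ^ (δ + ε)) * (((1 / 2 : ℝ) ^ (δ - ε)) ^ k) := by
  have hk : (0 : ℝ) < (1 / 2) ^ k := by positivity
  have e1 : M * (1 / 2) ^ (k + 1) = (M * (1 / 2) ^ k) * 2⁻¹ := by ring
  have h2 : ((2 : ℝ)⁻¹) ^ (-ε) = 2 ^ ε := by
    rw [Real.inv_rpow (by norm_num), Real.rpow_neg (by norm_num), inv_inv]
  have hp : ((1 / 2 : ℝ) ^ (δ - ε)) ^ k = ((1 / 2 : ℝ) ^ k) ^ (δ - ε) := by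
    rw [← Real.rpow_natCast, ← Real.rpow_natCast, ← Real.rpow_mul (by norm_num),
      ← Real.rpow_mul (by norm_num), mul_comm]
  have hX : (0 : ℝ) < M * (1 / 2) ^ k := by positivity
  have hq : M ^ (δ - ε) * ((1 / 2 : ℝ) ^ k) ^ (δ - ε) =
      (M * (1 / 2) ^ k) ^ δ * (M * (1 / 2) ^ k) ^ (-ε) := by
    rw [← Real.mul_rpow hM.le hk.le, ← Real.rpow_add hX, sub_eq_add_neg]
  rw [e1, Real.mul_rpow hX.le (by norm_num), h2, Real.mul_rpow (by norm_num) hX.le, hp,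
    Real.rpow_add (by norm_num : (0 : ℝ) < 2)]
  linear_combination (-(C * L ^ (-ε) * 2 ^ δ * 2 ^ ε)) * hq

/-- The sublevel estimate forces the zero set of `g` to be null. -/
lemma zero_set_null {E : Type*} [MeasurableSpace E] (μ : Measure E) (g : E → ℝ) (δ C : ℝ)
    (hδ : 0 < δ)
    (h : ∀ a : ℝ, 0 < a → μ {x | |g x| < a} ≤ ENNReal.ofReal (C * a ^ δ)) :
    ∀ᵐ x ∂μ, g x ≠ 0 := by
  have hlim : Filter.Tendsto (fun a : ℝ => ENNReal.ofReal (C * a ^ δ))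
      (nhdsWithin 0 (Set.Ioi 0)) (nhds 0) := by
    have hc : Continuous fun a : ℝ => ENNReal.ofReal (C * a ^ δ) :=
      ENNReal.continuous_ofReal.comp
        (continuous_const.mul (Real.continuous_rpow_const hδ.le))
    have := hc.tendsto 0
    simp only [Real.zero_rpow hδ.ne', mul_zero, ENNReal.ofReal_zero] at this
    exact this.mono_left nhdsWithin_le_nhds
  have h0 : μ {x | g x = 0} ≤ 0 := by
    refine ge_of_tendsto hlim ?_
    filter_upwards [self_mem_nhdsWithin] with a ha
    refine le_trans (measure_mono ?_) (h a ha)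
    intro x hx
    have hx' : g x = 0 := hx
    simpa [hx'] using ha
  rw [ae_iff]
  simpa using h0

/-- Pointwise domination of the integrand by the low part and the dyadic shells; the shells are
enlarged to sublevel sets, to which the hypothesis on `μ` applies directly. -/
lemma integrand_le (ε L M t : ℝ) (hε : 0 < ε) (hL : 0 < L) (ht : 0 < t) (htM : t ≤ M) :
    ENNReal.ofReal (min 1 ((L * t) ^ (-ε))) ≤
      (Set.Iio L⁻¹).indicator (fun _ => (1 : ENNReal)) t +
      ∑' k : ℕ, (Set.Iio (2 * (M * (1 / 2) ^ k))).indicator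
        (fun _ => ENNReal.ofReal (L ^ (-ε) * (M * (1 / 2) ^ (k + 1)) ^ (-ε))) t := by
  have hM : 0 < M := ht.trans_le htM
  by_cases hlt : t < L⁻¹
  · refine le_trans ?_ le_self_add
    rw [Set.indicator_of_mem (show t ∈ Set.Iio L⁻¹ from hlt)]
    exact ENNReal.ofReal_le_one.2 (min_le_left _ _)
  · refine le_trans ?_ le_add_self
    obtain ⟨n, hn1, hn2⟩ := exists_nat_pow_near_of_lt_one (div_pos ht hM)
      ((div_le_one hM).2 htM) (by norm_num : (0 : ℝ) < 1 / 2) (by norm_num)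
    rw [lt_div_iff₀ hM] at hn1
    rw [div_le_iff₀ hM] at hn2
    refine le_trans ?_ (ENNReal.le_tsum n)
    have hp : 0 < M * (1 / 2) ^ n := by positivity
    rw [Set.indicator_of_mem (show t ∈ Set.Iio (2 * (M * (1 / 2) ^ n)) by
      rw [Set.mem_Iio]; linarith)]
    refine ENNReal.ofReal_le_ofReal ((min_le_right _ _).trans ?_)
    rw [Real.mul_rpow hL.le ht.le]
    refine mul_le_mul_of_nonneg_left ?_ (by positivity)
    exact Real.rpow_le_rpow_of_nonpos (by positivity) (by linarith) (by linarith)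

/-- **Lemma 3.1, case δ > ε.** Let `δ > ε > 0`. There is a constant `D > 0` depending only on
`δ` and `ε` such that: for every measure space `(E,μ)`, every bounded measurable `g : E → ℝ`,
and every `C > 0` with `μ{x : |g(x)| < a} ≤ C aᵟ` for all `a > 0`, writing `M = esssup_E |g|`,
one has `∫_E min(1, |λ g|^{-ε}) dμ ≤ C(|λ|^{-δ} + D·|λ|^{-ε}·M^{δ-ε})` for all `λ ≠ 0`.
The integrand is interpreted as `1` where `g(x) = 0`. -/
theorem stmt9 (δ ε : ℝ) (hε : 0 < ε) (hδε : ε < δ) :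
    ∃ D : ℝ, 0 < D ∧
      ∀ (E : Type*) [MeasurableSpace E] (μ : Measure E) (g : E → ℝ), Measurable g →
      (∃ M₀ : ℝ, ∀ x, |g x| ≤ M₀) →
      ∀ C : ℝ, 0 < C →
      (∀ a : ℝ, 0 < a → μ {x | |g x| < a} ≤ ENNReal.ofReal (C * a ^ δ)) →
      ∀ lam : ℝ, lam ≠ 0 →
        (∫⁻ x, ENNReal.ofReal
            (if g x = 0 then (1 : ℝ) else min 1 (|lam * g x| ^ (-ε))) ∂μ) ≤
          ENNReal.ofReal (C * (|lam| ^ (-δ) +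
            D * |lam| ^ (-ε) * (essSup (fun x => |g x|) μ) ^ (δ - ε))) := by
  have hq0 : (0 : ℝ) < (1 / 2) ^ (δ - ε) := by positivity
  have hq1 : (1 / 2 : ℝ) ^ (δ - ε) < 1 :=
    Real.rpow_lt_one (by norm_num) (by norm_num) (by linarith)
  have hq : 0 < 1 - (1 / 2 : ℝ) ^ (δ - ε) := by linarith
  refine ⟨2 ^ (δ + ε) * (1 - (1 / 2 : ℝ) ^ (δ - ε))⁻¹, by positivity, ?_⟩
  intro E _ μ g hg hbdd C hC hμ lam hlam
  obtain ⟨M₀, hM₀⟩ := hbdd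
  have hL : 0 < |lam| := abs_pos.2 hlam
  rcases eq_or_ne μ 0 with rfl | hne
  · simp
  have : (ae μ).NeBot := ae_neBot.2 hne
  have hg0 := zero_set_null μ g δ C (hε.trans hδε) hμ
  have hle : ∀ᵐ x ∂μ, |g x| ≤ essSup (fun x => |g x|) μ :=
    ae_le_essSup (Filter.isBoundedUnder_of ⟨M₀, hM₀⟩)
  generalize essSup (fun x => |g x|) μ = M at hle ⊢
  have hM : 0 < M := by
    obtain ⟨x, hx0, hx⟩ := (hg0.and hle).exists
    exact (abs_pos.2 hx0).trans_le hx
  have hga : Measurable fun x => |g x| := hg.abs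
  calc (∫⁻ x, ENNReal.ofReal
            (if g x = 0 then (1 : ℝ) else min 1 (|lam * g x| ^ (-ε))) ∂μ)
      ≤ ∫⁻ x, ((Set.Iio |lam|⁻¹).indicator (fun _ => (1 : ENNReal)) |g x| +
          ∑' k : ℕ, (Set.Iio (2 * (M * (1 / 2) ^ k))).indicator
            (fun _ => ENNReal.ofReal (|lam| ^ (-ε) * (M * (1 / 2) ^ (k + 1)) ^ (-ε)))
            |g x|) ∂μ := by
        refine lintegral_mono_ae ?_
        filter_upwards [hg0, hle] with x hx0 hx
        rw [if_neg hx0, abs_mul]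
        exact integrand_le ε |lam| M |g x| hε hL (abs_pos.2 hx0) hx
    _ = μ {x | |g x| < |lam|⁻¹} + ∑' k : ℕ,
          ENNReal.ofReal (|lam| ^ (-ε) * (M * (1 / 2) ^ (k + 1)) ^ (-ε)) *
            μ {x | |g x| < 2 * (M * (1 / 2) ^ k)} := by
        have hind : ∀ (a : ℝ) (c : ENNReal),
            ∫⁻ x, (Set.Iio a).indicator (fun _ => c) |g x| ∂μ = c * μ {x | |g x| < a} := by
          intro a c
          exact lintegral_indicator_const (μ := μ) (hga measurableSet_Iio) c
        have hmeas : ∀ (a : ℝ) (c : ENNReal),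
            Measurable fun x => (Set.Iio a).indicator (fun _ => c) |g x| := fun a c =>
          (measurable_const.indicator measurableSet_Iio).comp hga
        rw [lintegral_add_left (hmeas _ _), lintegral_tsum fun k => (hmeas _ _).aemeasurable]
        simp only [hind, one_mul]
    _ ≤ ENNReal.ofReal (C * |lam| ^ (-δ)) + ∑' k : ℕ, ENNReal.ofReal
          ((C * |lam| ^ (-ε) * M ^ (δ - ε) * 2 ^ (δ + ε)) *
            (((1 / 2 : ℝ) ^ (δ - ε)) ^ k)) := by
        refine add_le_add ?_ (ENNReal.tsum_le_tsum fun k => ?_)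
        · rw [Real.rpow_neg hL.le, ← Real.inv_rpow hL.le]
          exact hμ _ (inv_pos.2 hL)
        · rw [← dyadic_term δ ε C |lam| M hM k,
            ENNReal.ofReal_mul (p := |lam| ^ (-ε) * (M * (1 / 2) ^ (k + 1)) ^ (-ε))
              (by positivity)]
          exact mul_le_mul_right (hμ _ (by positivity)) _
    _ = _ := by
        rw [← ENNReal.ofReal_tsum_of_nonneg (fun k => by positivity)
            ((summable_geometric_of_lt_one hq0.le hq1).mul_left _),
          tsum_mul_left, tsum_geometric_of_lt_one hq0.le hq1,
          ← ENNReal.ofReal_add (by positivity) (by positivity)]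
        congr 1
        ring
end

section
/- Let p ≥ 1 be an integer. There exists a constant C_p > 0 with the following property. Let f be a real polynomial of degree l ≥ 1 and [a,b] a compact interval such that |f^{(p)}(x)| > 1 for all x ∈ [a,b]. Then for all λ ≠ 0, ∫_a^b min(1, |f''(x)| / (|λ| (f'(x))²)) dx + min( b − a, 1 / (|λ| sup_{x∈[a,b]} |f'(x)|) ) ≤ l·C_p·|λ|^{−1/p}. -/
open Set MeasureTheory Polynomial

/-!
Write `L = |lam|`, `δ = L ^ (-1/p)` and `τ = δ ^ (p-1)`, so that `1 / (L * τ) = δ`.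

* On an interval where `|f'| ≤ τ`, the lower bound on `|f⁽ᵖ⁾|` forces the length to be at most
  `6 ^ (p-1) * δ` (`length_lt_of_small`, a van der Corput type sublevel estimate that follows
  from iterating the mean value theorem on thirds of the interval). There the integrand is
  bounded by `1`.
* On an interval where `|f'| ≥ τ` and `f''` has constant sign, `|f''| / f'²` is, up to sign, the
  derivative of `-1 / f'`, so the integral is at most `2 / (L * τ) = 2 * δ`
  (`integral_large_piece`).

The roots of `f''`, `f' - τ` and `f' + τ` cut `[a, b]` into at most `4 * l` intervals of these
two kinds, whence the bound for the integral (`integral_le_of_pieces`). The second summand is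
bounded by `b - a` if `|f'| ≤ τ` throughout, and by `1 / (L * τ) = δ` otherwise.
-/

/-- If `|g⁽ᑫ⁾| > m` on an interval of length `d`, then `|g|` exceeds `(d / 6 ^ q) ^ q * m`
somewhere on it. In the induction step the lower bound on the derivative of `h = g⁽ᑫ⁾`
prevents `|h|` from being at most `m * d / 6` both at a point of the left third and at a point
of the right third. -/
lemma exists_large_value (q : ℕ) : ∀ (g : ℝ[X]) (u v m : ℝ), u < v → 0 < m →
    (∀ x ∈ Icc u v, m < |((derivative^[q]) g).eval x|) →
    ∃ x ∈ Icc u v, ((v - u) / 6 ^ q) ^ q * m < |g.eval x| := by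
  induction q with
  | zero =>
    intro g u v m huv hm h
    exact ⟨u, ⟨le_rfl, huv.le⟩, by simpa using h u ⟨le_rfl, huv.le⟩⟩
  | succ q ih =>
    intro g u v m huv hm h
    set d := v - u with hd
    have hd0 : 0 < d := by linarith
    have key : (∀ x ∈ Icc u (u + d / 3), m * d / 6 < |((derivative^[q]) g).eval x|) ∨
        (∀ x ∈ Icc (v - d / 3) v, m * d / 6 < |((derivative^[q]) g).eval x|) := by
      by_contra hcon
      push Not at hcon
      obtain ⟨⟨x, hx, hx'⟩, ⟨y, hy, hy'⟩⟩ := hcon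
      have hxy : x < y := by linarith [hx.2, hy.1]
      obtain ⟨z, hz, hz'⟩ := exists_hasDerivAt_eq_slope
        (fun x => ((derivative^[q]) g).eval x)
        (fun x => (derivative ((derivative^[q]) g)).eval x) hxy
        (Polynomial.continuous _).continuousOn
        (fun w _ => Polynomial.hasDerivAt _ w)
      have hm' := h z ⟨by linarith [hx.1, hz.1], by linarith [hy.2, hz.2]⟩
      rw [Function.iterate_succ_apply', hz', abs_div, abs_of_pos (sub_pos.2 hxy),
        lt_div_iff₀ (sub_pos.2 hxy)] at hm'
      have h1 := abs_sub (((derivative^[q]) g).eval y) (((derivative^[q]) g).eval x)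
      have h2 : m * (d / 3) ≤ m * (y - x) :=
        mul_le_mul_of_nonneg_left (by linarith [hx.2, hy.1]) hm.le
      linarith
    have hpow : (d / 6 ^ (q + 1)) ^ (q + 1) * m ≤ (d / 3 / 6 ^ q) ^ q * (m * d / 6) := by
      have h6 : (1 : ℝ) ≤ 6 ^ q := one_le_pow₀ (by norm_num)
      have e1 : d / 6 ^ (q + 1) ≤ d / 3 / 6 ^ q := by
        rw [div_div, pow_succ]
        apply div_le_div_of_nonneg_left hd0.le (by positivity)
        nlinarith
      have e2 : d / 6 ^ (q + 1) ≤ d / 6 := by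
        apply div_le_div_of_nonneg_left hd0.le (by positivity)
        rw [pow_succ]
        nlinarith
      have e3 := pow_le_pow_left₀ (by positivity) e1 q
      calc (d / 6 ^ (q + 1)) ^ (q + 1) * m
          = (d / 6 ^ (q + 1)) ^ q * (d / 6 ^ (q + 1)) * m := by rw [pow_succ]
        _ ≤ (d / 3 / 6 ^ q) ^ q * (d / 6) * m := by gcongr
        _ = _ := by ring
    rcases key with hk | hk
    · obtain ⟨x, hx, hx'⟩ := ih g u (u + d / 3) (m * d / 6) (by linarith) (by positivity) hk
      refine ⟨x, ⟨hx.1, by linarith [hx.2]⟩, lt_of_le_of_lt hpow ?_⟩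
      simpa using hx'
    · obtain ⟨x, hx, hx'⟩ := ih g (v - d / 3) v (m * d / 6) (by linarith) (by positivity) hk
      refine ⟨x, ⟨by linarith [hx.1], hx.2⟩, lt_of_le_of_lt hpow ?_⟩
      simpa using hx'

/-- An interval on which `|g| ≤ δ ^ q` and `|g⁽ᑫ⁾| > 1` has length less than `6 ^ q * δ`. For
`q = 0` the hypotheses are contradictory. -/
lemma length_lt_of_small (q : ℕ) (g : ℝ[X]) (u v δ : ℝ) (huv : u < v) (hδ : 0 < δ)
    (h : ∀ x ∈ Icc u v, 1 < |((derivative^[q]) g).eval x|)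
    (hs : ∀ x ∈ Icc u v, |g.eval x| ≤ δ ^ q) : v - u < 6 ^ q * δ := by
  obtain ⟨x, hx, hx'⟩ := exists_large_value q g u v 1 huv one_pos h
  rw [mul_one] at hx'
  have := lt_of_pow_lt_pow_left₀ q hδ.le (hx'.trans_le (hs x hx))
  rw [div_lt_iff₀ (by positivity)] at this
  linarith

lemma sign_of_no_roots (P : ℝ[X]) (u v : ℝ) (h : ∀ z ∈ Ioo u v, z ∉ P.roots) :
    (∀ x ∈ Icc u v, 0 ≤ P.eval x) ∨ (∀ x ∈ Icc u v, P.eval x ≤ 0) := by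
  by_contra hcon
  push Not at hcon
  obtain ⟨⟨x, hx, hx'⟩, ⟨y, hy, hy'⟩⟩ := hcon
  have hP : P ≠ 0 := by
    rintro rfl
    simp at hx'
  have hc : Continuous fun x => P.eval x := P.continuous
  rcases lt_trichotomy x y with hxy | hxy | hxy
  · obtain ⟨z, hz, hz'⟩ := intermediate_value_Ioo hxy.le hc.continuousOn ⟨hx', hy'⟩
    exact h z ⟨hx.1.trans_lt hz.1, hz.2.trans_le hy.2⟩ ((mem_roots hP).2 hz')
  · subst hxy
    linarith
  · obtain ⟨z, hz, hz'⟩ := intermediate_value_Ioo' hxy.le hc.continuousOn ⟨hx', hy'⟩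
    exact h z ⟨hy.1.trans_lt hz.1, hz.2.trans_le hx.2⟩ ((mem_roots hP).2 hz')

/-- A finite set `S` cuts `[a, b]` into at most `#S + 1` intervals, so a bound `K` for the
integral over every subinterval that avoids `S` gives `(#S + 1) * K` in total. -/
lemma integral_le_of_pieces (F : ℝ → ℝ) (hF : ∀ u v, IntervalIntegrable F volume u v) (K : ℝ)
    (hK : 0 ≤ K) (n : ℕ) : ∀ (S : Finset ℝ), S.card = n → ∀ (a b : ℝ), a ≤ b →
    (∀ u v, a ≤ u → u < v → v ≤ b → (∀ z ∈ Ioo u v, z ∉ S) → ∫ x in u..v, F x ≤ K) →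
    ∫ x in a..b, F x ≤ (n + 1) * K := by
  induction n using Nat.strong_induction_on with
  | _ n ih =>
    intro S hS a b hab h
    by_cases hex : ∃ s ∈ S, s ∈ Ioo a b
    · obtain ⟨s, hsS, hs⟩ := hex
      have hdisj : Disjoint (S.filter (· < s)) (S.filter (s < ·)) := by
        rw [Finset.disjoint_filter]
        intro x _ h1 h2
        exact lt_asymm h1 h2
      have hcard : (S.filter (· < s)).card + (S.filter (s < ·)).card < n := by
        rw [← Finset.card_union_of_disjoint hdisj, ← hS]
        apply Finset.card_lt_card
        refine ⟨fun x hx => ?_, fun hsub => ?_⟩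
        · simp only [Finset.mem_union, Finset.mem_filter] at hx
          tauto
        · simpa using hsub hsS
      have i1 := ih _ (by omega) (S.filter (· < s)) rfl a s hs.1.le
        (fun u v h1 h2 h3 h4 => h u v h1 h2 (h3.trans hs.2.le) fun z hz hzS =>
          h4 z hz (Finset.mem_filter.2 ⟨hzS, hz.2.trans_le h3⟩))
      have i2 := ih _ (by omega) (S.filter (s < ·)) rfl s b hs.2.le
        (fun u v h1 h2 h3 h4 => h u v (hs.1.le.trans h1) h2 h3 fun z hz hzS =>
          h4 z hz (Finset.mem_filter.2 ⟨hzS, h1.trans_lt hz.1⟩))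
      rw [← intervalIntegral.integral_add_adjacent_intervals (hF a s) (hF s b)]
      have hc : (((S.filter (· < s)).card : ℝ) + (S.filter (s < ·)).card + 1) ≤ n := by
        exact_mod_cast hcard
      nlinarith
    · push Not at hex
      have hn : (0 : ℝ) ≤ n * K := by positivity
      rcases hab.eq_or_lt with rfl | hab'
      · simp only [intervalIntegral.integral_same]
        positivity
      · have := h a b le_rfl hab' le_rfl (fun z hz hzS => hex z hzS hz)
        linarith

/-- The integrand of the theorem, with `L = |lam|`. -/
noncomputable def kern (f : ℝ[X]) (L : ℝ) (x : ℝ) : ℝ :=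
  if (derivative f).eval x = 0 then (1 : ℝ)
  else min 1 (|(derivative (derivative f)).eval x| / (L * ((derivative f).eval x) ^ 2))

lemma kern_le_one (f : ℝ[X]) (L x : ℝ) : kern f L x ≤ 1 := by
  unfold kern
  split_ifs
  · exact le_rfl
  · exact min_le_left _ _

lemma kern_nonneg (f : ℝ[X]) (L x : ℝ) (hL : 0 < L) : 0 ≤ kern f L x := by
  unfold kern
  split_ifs
  · exact zero_le_one
  · exact le_min zero_le_one (by positivity)

lemma kern_integrable (f : ℝ[X]) (L : ℝ) (hL : 0 < L) (u v : ℝ) :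
    IntervalIntegrable (kern f L) volume u v := by
  have hm : Measurable (kern f L) := by
    unfold kern
    have h1 : Measurable fun x => (derivative f).eval x := (Polynomial.continuous _).measurable
    have h2 : Measurable fun x => (derivative (derivative f)).eval x :=
      (Polynomial.continuous _).measurable
    refine Measurable.ite (measurableSet_eq_fun h1 measurable_const) measurable_const ?_
    exact measurable_const.min (h2.abs.div (measurable_const.mul (h1.pow_const 2)))
  refine (intervalIntegrable_const (c := (1 : ℝ))).mono_fun hm.aestronglyMeasurable ?_
  filter_upwards with x
  rw [Real.norm_of_nonneg (kern_nonneg f L x hL), norm_one]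
  exact kern_le_one f L x

/-- Where `|f'| ≥ τ` and `f''` has constant sign, the integrand is at most
`±(-1 / (L * f'))'`, whose integral telescopes. -/
lemma integral_large_piece (f : ℝ[X]) (L τ u v : ℝ) (hL : 0 < L) (hτ : 0 < τ) (huv : u < v)
    (hl : ∀ x ∈ Icc u v, τ ≤ |(derivative f).eval x|)
    (hs : (∀ x ∈ Icc u v, 0 ≤ (derivative (derivative f)).eval x) ∨
      (∀ x ∈ Icc u v, (derivative (derivative f)).eval x ≤ 0)) :
    ∫ x in u..v, kern f L x ≤ 2 * (1 / (L * τ)) := by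
  obtain ⟨ε, hε, hs⟩ : ∃ ε : ℝ, |ε| = 1 ∧ ∀ x ∈ Icc u v,
      |(derivative (derivative f)).eval x| = ε * (derivative (derivative f)).eval x := by
    rcases hs with hs | hs
    · exact ⟨1, by simp, fun x hx => by rw [abs_of_nonneg (hs x hx), one_mul]⟩
    · exact ⟨-1, by simp, fun x hx => by rw [abs_of_nonpos (hs x hx), neg_one_mul]⟩
  have hne : ∀ x ∈ Icc u v, (derivative f).eval x ≠ 0 := by
    intro x hx h0
    have := hl x hx
    rw [h0, abs_zero] at this
    linarith
  set G : ℝ → ℝ := fun x => ε * (-(1 / L) * ((derivative f).eval x)⁻¹) with hG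
  set G' : ℝ → ℝ := fun x => ε * (-(1 / L) *
    (-(derivative (derivative f)).eval x / ((derivative f).eval x) ^ 2)) with hG'
  have hder : ∀ x ∈ uIcc u v, HasDerivAt G (G' x) x := by
    intro x hx
    rw [uIcc_of_le huv.le] at hx
    exact (((Polynomial.hasDerivAt (derivative f) x).inv (hne x hx)).const_mul _).const_mul _
  have hint : IntervalIntegrable G' volume u v := by
    apply ContinuousOn.intervalIntegrable
    rw [uIcc_of_le huv.le]
    refine continuousOn_const.mul (continuousOn_const.mul (ContinuousOn.div ?_ ?_ ?_))
    · exact (Polynomial.continuous _).neg.continuousOn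
    · exact ((Polynomial.continuous _).pow 2).continuousOn
    · exact fun x hx => pow_ne_zero 2 (hne x hx)
  have hle : ∫ x in u..v, kern f L x ≤ ∫ x in u..v, G' x := by
    apply intervalIntegral.integral_mono_on huv.le (kern_integrable f L hL u v) hint
    intro x hx
    unfold kern
    rw [if_neg (hne x hx)]
    refine (min_le_right _ _).trans (le_of_eq ?_)
    have := hne x hx
    rw [hs x hx]
    simp only [hG']
    field_simp
  rw [intervalIntegral.integral_eq_sub_of_hasDerivAt hder hint] at hle
  have hGb : ∀ x ∈ Icc u v, |G x| ≤ 1 / (L * τ) := by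
    intro x hx
    simp only [hG, abs_mul, hε, abs_neg, abs_inv, one_mul, abs_div, abs_one, abs_of_pos hL]
    rw [one_div_mul_eq_div, ← one_div, div_div, mul_comm]
    exact one_div_le_one_div_of_le (by positivity) (mul_le_mul_of_nonneg_left (hl x hx) hL.le)
  have h1 := hGb u ⟨le_rfl, huv.le⟩
  have h2 := hGb v ⟨huv.le, le_rfl⟩
  linarith [(abs_le.1 h1).1, (abs_le.1 h2).2]

lemma integral_small_piece (f : ℝ[X]) (L u v : ℝ) (hL : 0 < L) (huv : u < v) :
    ∫ x in u..v, kern f L x ≤ v - u := by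
  have := intervalIntegral.integral_mono_on huv.le (kern_integrable f L hL u v)
    (intervalIntegrable_const (c := (1 : ℝ))) (fun x _ => kern_le_one f L x)
  simpa using this

lemma integral_bound (q : ℕ) (f : ℝ[X]) (hf : 1 ≤ f.natDegree) (a b L δ : ℝ) (hab : a ≤ b)
    (hL : 0 < L) (hδ : 0 < δ) (hLδ : 1 / (L * δ ^ q) = δ)
    (h : ∀ x ∈ Icc a b, 1 < |((derivative^[q]) (derivative f)).eval x|) :
    ∫ x in a..b, kern f L x ≤ 4 * f.natDegree * ((6 ^ q + 2) * δ) := by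
  classical
  set τ := δ ^ q with hτ
  have hτ0 : 0 < τ := by positivity
  set S : Finset ℝ := (derivative (derivative f)).roots.toFinset ∪
    ((derivative f - C τ).roots.toFinset ∪ (derivative f + C τ).roots.toFinset) with hS
  have hcard : S.card ≤ 3 * f.natDegree := by
    have key : ∀ P : ℝ[X], P.natDegree ≤ f.natDegree →
        P.roots.toFinset.card ≤ f.natDegree := fun P hP =>
      (Multiset.toFinset_card_le _).trans ((card_roots' P).trans hP)
    have d1 : (derivative f).natDegree ≤ f.natDegree :=
      (natDegree_derivative_le f).trans (Nat.sub_le _ _)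
    have c1 := key (derivative (derivative f))
      (((natDegree_derivative_le _).trans (Nat.sub_le _ _)).trans d1)
    have c2 := key (derivative f - C τ) (by rw [natDegree_sub_C]; exact d1)
    have c3 := key (derivative f + C τ) (by rw [natDegree_add_C]; exact d1)
    have u1 := Finset.card_union_le (derivative (derivative f)).roots.toFinset
      ((derivative f - C τ).roots.toFinset ∪ (derivative f + C τ).roots.toFinset)
    have u2 := Finset.card_union_le (derivative f - C τ).roots.toFinset
      (derivative f + C τ).roots.toFinset
    rw [hS]
    omega
  have hmain := integral_le_of_pieces (kern f L) (kern_integrable f L hL) ((6 ^ q + 2) * δ)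
    (by positivity) S.card S rfl a b hab ?_
  · refine hmain.trans (mul_le_mul_of_nonneg_right ?_ (by positivity))
    have : S.card + 1 ≤ 4 * f.natDegree := by omega
    exact_mod_cast this
  · intro u v hau huv hvb hz
    have hsub : ∀ x ∈ Icc u v, x ∈ Icc a b := fun x hx =>
      ⟨hau.trans hx.1, hx.2.trans hvb⟩
    have s1 := sign_of_no_roots (derivative (derivative f)) u v fun z hz1 hz2 =>
      hz z hz1 (by simp only [hS, Finset.mem_union, Multiset.mem_toFinset]; exact Or.inl hz2)
    have s2 := sign_of_no_roots (derivative f - C τ) u v fun z hz1 hz2 =>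
      hz z hz1 (by
        simp only [hS, Finset.mem_union, Multiset.mem_toFinset]; exact Or.inr (Or.inl hz2))
    have s3 := sign_of_no_roots (derivative f + C τ) u v fun z hz1 hz2 =>
      hz z hz1 (by
        simp only [hS, Finset.mem_union, Multiset.mem_toFinset]; exact Or.inr (Or.inr hz2))
    simp only [eval_sub, eval_add, eval_C] at s2 s3
    have h6 : (0 : ℝ) ≤ 6 ^ q * δ := by positivity
    have large : (∀ x ∈ Icc u v, τ ≤ |(derivative f).eval x|) →
        ∫ x in u..v, kern f L x ≤ (6 ^ q + 2) * δ := by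
      intro hl
      have := integral_large_piece f L τ u v hL hτ0 huv hl s1
      rw [hLδ] at this
      linarith
    rcases s2 with s2 | s2
    · exact large fun x hx => le_abs.2 (Or.inl (by linarith [s2 x hx]))
    · rcases s3 with s3 | s3
      · have hlen := length_lt_of_small q (derivative f) u v δ huv hδ
          (fun x hx => h x (hsub x hx))
          (fun x hx => abs_le.2 ⟨by linarith [s3 x hx], by linarith [s2 x hx]⟩)
        linarith [integral_small_piece f L u v hL huv]
      · exact large fun x hx => le_abs.2 (Or.inr (by linarith [s3 x hx]))

lemma second_term_bound (q : ℕ) (f : ℝ[X]) (a b L δ : ℝ) (hab : a ≤ b)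
    (hL : 0 < L) (hδ : 0 < δ) (hLδ : 1 / (L * δ ^ q) = δ)
    (h : ∀ x ∈ Icc a b, 1 < |((derivative^[q]) (derivative f)).eval x|) :
    (if sSup ((fun x => |(derivative f).eval x|) '' Icc a b) = 0 then b - a
      else min (b - a) (1 / (L * sSup ((fun x => |(derivative f).eval x|) '' Icc a b)))) ≤
    (6 ^ q + 2) * δ := by
  set M := sSup ((fun x => |(derivative f).eval x|) '' Icc a b) with hM
  have h6 : (0 : ℝ) ≤ 6 ^ q * δ := by positivity
  have hτ0 : 0 < δ ^ q := by positivity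
  by_cases hs : ∀ x ∈ Icc a b, |(derivative f).eval x| ≤ δ ^ q
  · have hlen : b - a ≤ (6 ^ q + 2) * δ := by
      rcases hab.eq_or_lt with rfl | hab'
      · rw [sub_self]
        positivity
      · linarith [length_lt_of_small q (derivative f) a b δ hab' hδ h hs]
    split_ifs
    · exact hlen
    · exact (min_le_left _ _).trans hlen
  · push Not at hs
    obtain ⟨x, hx, hx'⟩ := hs
    have hbdd : BddAbove ((fun x => |(derivative f).eval x|) '' Icc a b) :=
      (isCompact_Icc.image (Polynomial.continuous _).abs).bddAbove
    have hMx : δ ^ q ≤ M := hx'.le.trans (le_csSup hbdd (mem_image_of_mem _ hx))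
    rw [if_neg (by linarith)]
    refine (min_le_right _ _).trans ?_
    have : 1 / (L * M) ≤ 1 / (L * δ ^ q) :=
      one_div_le_one_div_of_le (by positivity) (mul_le_mul_of_nonneg_left hMx hL.le)
    rw [hLδ] at this
    linarith

/-- **Theorem 4.1.** For each integer `p ≥ 1` there is a constant `C_p > 0` such that: if `f`
is a real polynomial of degree `l ≥ 1` and `[a,b]` is a compact interval with `|f⁽ᵖ⁾(x)| > 1`
on `[a,b]`, then for all `λ ≠ 0`,
`∫_a^b min(1, |f''|/(|λ|(f')²)) + min(b-a, 1/(|λ| sup_{[a,b]}|f'|)) ≤ l·C_p·|λ|^{-1/p}`.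
Here `|f''(x)|/(|λ|(f'(x))²)` is interpreted as `+∞` (so the min is `1`) where `f'(x) = 0`,
and `1/(|λ| sup|f'|)` as `+∞` (so the min is `b - a`) if `f'` vanishes identically on
`[a,b]`. -/
theorem stmt12 (p : ℕ) (hp : 1 ≤ p) :
    ∃ Cp : ℝ, 0 < Cp ∧
      ∀ (f : Polynomial ℝ) (l : ℕ), f.natDegree = l → 1 ≤ l →
      ∀ (a b : ℝ), a ≤ b →
      (∀ x ∈ Icc a b, 1 < |((derivative^[p]) f).eval x|) →
      ∀ lam : ℝ, lam ≠ 0 →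
        (∫ x in a..b,
            if (derivative f).eval x = 0 then (1 : ℝ)
            else min 1 (|(derivative (derivative f)).eval x| /
              (|lam| * ((derivative f).eval x) ^ 2))) +
          (if sSup ((fun x => |(derivative f).eval x|) '' Icc a b) = 0 then b - a
           else min (b - a)
             (1 / (|lam| * sSup ((fun x => |(derivative f).eval x|) '' Icc a b)))) ≤
        (l : ℝ) * Cp * |lam| ^ (-(1 : ℝ) / (p : ℝ)) := by
  obtain ⟨q, rfl⟩ : ∃ q, p = q + 1 := ⟨p - 1, by omega⟩
  refine ⟨5 * (6 ^ q + 2), by positivity, ?_⟩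
  intro f l hfl hl a b hab h lam hlam
  have hL : 0 < |lam| := abs_pos.2 hlam
  set δ : ℝ := |lam| ^ (-(1 : ℝ) / ((q + 1 : ℕ) : ℝ)) with hδdef
  have hδ : 0 < δ := Real.rpow_pos_of_pos hL _
  have hpow : δ ^ (q + 1) = |lam|⁻¹ := by
    rw [hδdef, ← Real.rpow_natCast, ← Real.rpow_mul hL.le, div_mul_cancel₀ _ (by positivity),
      Real.rpow_neg_one]
  have hLδ : 1 / (|lam| * δ ^ q) = δ := by
    rw [div_eq_iff (by positivity)]
    have : |lam| * δ ^ (q + 1) = 1 := by rw [hpow]; exact mul_inv_cancel₀ hL.ne'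
    rw [← this]
    ring
  have h' : ∀ x ∈ Icc a b, 1 < |((derivative^[q]) (derivative f)).eval x| := h
  have t1 := integral_bound q f (by omega) a b |lam| δ hab hL hδ hLδ h'
  have t2 := second_term_bound q f a b |lam| δ hab hL hδ hLδ h'
  rw [hfl] at t1
  have hl' : (1 : ℝ) ≤ l := by exact_mod_cast hl
  have hK : 0 ≤ (6 ^ q + 2) * δ := by positivity
  refine (add_le_add t1 t2).trans ?_
  nlinarith [mul_le_mul_of_nonneg_right hl' hK]
end

section
/- Let f be a C² real-valued function on a compact interval [c,d] such that f' is nonvanishing on [c,d], |f''(x)|/(f'(x))² < 1 for all x ∈ (c,d), and sup_{x∈[c,d]} |f'(x)| > 2·inf_{x∈[c,d]} |f'(x)|. Then for every y ∈ [c,d], 1/|f'(y)| < 3 ∫_c^d |f''(x)| / (f'(x))² dx. -/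
open Set MeasureTheory

/-!
The function `1 / f'` has derivative `-f'' / (f')²`, so its variation over `[c, d]` is at most
`I = ∫ |f''| / (f')²` (`abs_inv_sub_inv_le_integral`). If `m` and `M` are the minimum and the
maximum of `|f'|`, attained by compactness, this gives `1/m - 1/M ≤ I`. Since `M > 2m`, it follows
that `1/m < I + 1/(2m)`, hence `1/|f'(y)| ≤ 1/m < 2I ≤ 3I` for every `y`.
-/

/-- The variation of `1 / g` between two points of `[c, d]` is at most `∫ |g'| / g²`. -/
lemma abs_inv_sub_inv_le_integral {c d : ℝ} {g g' : ℝ → ℝ}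
    (hg : ContinuousOn g (Icc c d)) (hg' : ContinuousOn g' (Icc c d))
    (hne : ∀ x ∈ Icc c d, g x ≠ 0) (hder : ∀ x ∈ Ioo c d, HasDerivAt g (g' x) x)
    {s t : ℝ} (hs : s ∈ Icc c d) (ht : t ∈ Icc c d) (hst : s ≤ t) :
    |(g t)⁻¹ - (g s)⁻¹| ≤ ∫ x in c..d, |g' x| / g x ^ 2 := by
  have hcd : c ≤ d := hs.1.trans hs.2
  have hsub : Icc s t ⊆ Icc c d := Icc_subset_Icc hs.1 ht.2
  have hcont : ContinuousOn (fun x => -g' x / g x ^ 2) (Icc c d) :=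
    hg'.neg.div (hg.pow 2) fun x hx => pow_ne_zero 2 (hne x hx)
  have habs : ∀ x, |g' x| / g x ^ 2 = |(-g' x / g x ^ 2)| := fun x => by
    rw [abs_div, abs_neg, abs_of_nonneg (sq_nonneg (g x))]
  have hftc : ∫ x in s..t, -g' x / g x ^ 2 = (g t)⁻¹ - (g s)⁻¹ :=
    intervalIntegral.integral_eq_sub_of_hasDerivAt_of_le hst
      ((hg.inv₀ hne).mono hsub)
      (fun x hx => (hder x ⟨hs.1.trans_lt hx.1, hx.2.trans_le ht.2⟩).fun_inv
        (hne x (hsub (Ioo_subset_Icc_self hx))))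
      ((hcont.mono hsub).intervalIntegrable_of_Icc hst)
  simp_rw [habs]
  rw [← hftc]
  refine (intervalIntegral.abs_integral_le_integral_abs hst).trans ?_
  exact intervalIntegral.integral_mono_interval hs.1 hst ht.2
    (Filter.Eventually.of_forall fun x => abs_nonneg _)
    (hcont.abs.intervalIntegrable_of_Icc hcd)

/-- **Lemma 5.1.** Let `f` be `C²` on a compact interval `[c,d]` with `f'` nonvanishing on
`[c,d]`, `|f''(x)|/(f'(x))² < 1` on `(c,d)`, and `sup_{[c,d]}|f'| > 2·inf_{[c,d]}|f'|`
(a "type 1" interval). Then every `y ∈ [c,d]` satisfies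
`1/|f'(y)| < 3 ∫_c^d |f''(x)|/(f'(x))² dx`. -/
theorem stmt13 (c d : ℝ) (hcd : c ≤ d) (f : ℝ → ℝ)
    (hf : ContDiffOn ℝ 2 f (Icc c d))
    (hf' : ∀ x ∈ Icc c d, iteratedDerivWithin 1 f (Icc c d) x ≠ 0)
    (hratio : ∀ x ∈ Ioo c d,
      |iteratedDerivWithin 2 f (Icc c d) x| / (iteratedDerivWithin 1 f (Icc c d) x) ^ 2 < 1)
    (htype1 : sSup ((fun x => |iteratedDerivWithin 1 f (Icc c d) x|) '' Icc c d) >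
      2 * sInf ((fun x => |iteratedDerivWithin 1 f (Icc c d) x|) '' Icc c d)) :
    ∀ y ∈ Icc c d,
      1 / |iteratedDerivWithin 1 f (Icc c d) y| <
        3 * ∫ x in c..d,
          |iteratedDerivWithin 2 f (Icc c d) x| / (iteratedDerivWithin 1 f (Icc c d) x) ^ 2 := by
  intro y hy
  rcases hcd.eq_or_lt with rfl | hlt
  · -- On a one-point interval `sup = inf ≥ 0`, against `sup > 2 * inf`.
    simp only [Icc_self, image_singleton, csSup_singleton, csInf_singleton] at htype1
    linarith [abs_nonneg (iteratedDerivWithin 1 f {c} c)]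
  have hu : UniqueDiffOn ℝ (Icc c d) := uniqueDiffOn_Icc hlt
  have hg : ContinuousOn (iteratedDerivWithin 1 f (Icc c d)) (Icc c d) :=
    hf.continuousOn_iteratedDerivWithin (by norm_num) hu
  have hg' : ContinuousOn (iteratedDerivWithin 2 f (Icc c d)) (Icc c d) :=
    hf.continuousOn_iteratedDerivWithin (by norm_num) hu
  have hder : ∀ x ∈ Ioo c d, HasDerivAt (iteratedDerivWithin 1 f (Icc c d))
      (iteratedDerivWithin 2 f (Icc c d) x) x := fun x hx => by
    rw [show iteratedDerivWithin 2 f (Icc c d) x = _ from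
      congrFun (iteratedDerivWithin_succ (n := 1)) x]
    exact (hf.differentiableOn_iteratedDerivWithin (m := 1) (by norm_num) hu x
      (Ioo_subset_Icc_self hx)).hasDerivWithinAt.hasDerivAt (Icc_mem_nhds hx.1 hx.2)
  have key : ∀ s ∈ Icc c d, ∀ t ∈ Icc c d, s ≤ t → _ := fun s hs t ht hst =>
    abs_inv_sub_inv_le_integral hg hg' hf' hder hs ht hst
  generalize iteratedDerivWithin 1 f (Icc c d) = g at *
  generalize (∫ x in c..d, |iteratedDerivWithin 2 f (Icc c d) x| / g x ^ 2) = I at *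
  have hne : (Icc c d).Nonempty := ⟨y, hy⟩
  obtain ⟨a, ha, hsa, hamin⟩ := isCompact_Icc.exists_sInf_image_eq_and_le hne hg.abs
  obtain ⟨b, hb, hsb, hbmax⟩ := isCompact_Icc.exists_sSup_image_eq_and_ge hne hg.abs
  have hM : 2 * |g a| < |g b| := by
    rw [← hsa, ← hsb]; exact htype1
  have hI : |(g a)⁻¹ - (g b)⁻¹| ≤ I := by
    rcases le_total a b with h | h
    · rw [abs_sub_comm]; exact key a ha b hb h
    · exact key b hb a ha h
  have hm0 : 0 < |g a| := abs_pos.2 (hf' a ha)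
  have hvar : |g a|⁻¹ - |g b|⁻¹ ≤ I := by
    rw [← abs_inv, ← abs_inv]
    exact (abs_sub_abs_le_abs_sub _ _).trans hI
  have hMinv : |g b|⁻¹ < (2 * |g a|)⁻¹ := inv_strictAnti₀ (by positivity) hM
  rw [mul_inv] at hMinv
  have hy' : 1 / |g y| ≤ |g a|⁻¹ := by
    rw [one_div]; exact inv_anti₀ hm0 (hamin y hy)
  linarith [abs_nonneg ((g a)⁻¹ - (g b)⁻¹)]
end

section
/- Let f be a C² real-valued function on a compact interval [c,d] with c < d, such that f'(x) ≠ 0 for all x ∈ (c,d) and |f''(x)|/(f'(x))² < 1 for all x ∈ (c,d). Then f'(c) ≠ 0 and f'(d) ≠ 0. -/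
/-!
On `(c, d)` the function `1 / f'` has derivative `-f'' / f'²`, of absolute value less than `1`, so it
is `1`-Lipschitz there and hence bounded by some `M`. Thus `1 ≤ M * |f'|` on `(c, d)`, and by
continuity of `f'` this persists at the endpoints, where `f'` therefore cannot vanish.
-/

open Set

/-- Let `f` be `C²` on a compact interval `[c,d]`, `c < d`, with `f'(x) ≠ 0` and
`|f''(x)|/(f'(x))² < 1` for all `x` in the open interval `(c,d)`. Then `f'(c) ≠ 0` and
`f'(d) ≠ 0` (derivatives at the endpoints are the one-sided derivatives). -/
theorem stmt14 (c d : ℝ) (hcd : c < d) (f : ℝ → ℝ)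
    (hf : ContDiffOn ℝ 2 f (Icc c d))
    (hf' : ∀ x ∈ Ioo c d, iteratedDerivWithin 1 f (Icc c d) x ≠ 0)
    (hratio : ∀ x ∈ Ioo c d,
      |iteratedDerivWithin 2 f (Icc c d) x| / (iteratedDerivWithin 1 f (Icc c d) x) ^ 2 < 1) :
    iteratedDerivWithin 1 f (Icc c d) c ≠ 0 ∧ iteratedDerivWithin 1 f (Icc c d) d ≠ 0 := by
  set g := iteratedDerivWithin 1 f (Icc c d) with hg
  have huniq : UniqueDiffOn ℝ (Icc c d) := uniqueDiffOn_Icc hcd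
  have hcont : ContinuousOn g (Icc c d) :=
    hf.continuousOn_iteratedDerivWithin (by norm_num) huniq
  have hdiff : DifferentiableOn ℝ g (Icc c d) :=
    hf.differentiableOn_iteratedDerivWithin (by norm_num) huniq
  have hderiv : ∀ x ∈ Ioo c d,
      HasDerivAt g (iteratedDerivWithin 2 f (Icc c d) x) x := by
    intro x hx
    have h := (hdiff x (Ioo_subset_Icc_self hx)).hasDerivWithinAt
    rw [hg, ← iteratedDerivWithin_succ] at h
    exact h.hasDerivAt (Icc_mem_nhds hx.1 hx.2)
  obtain ⟨m, hm⟩ := nonempty_Ioo.2 hcd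
  have hlip : ∀ x ∈ Ioo c d, |(g x)⁻¹ - (g m)⁻¹| ≤ 1 * |x - m| := fun x hx =>
    (convex_Ioo c d).norm_image_sub_le_of_norm_hasDerivWithin_le (f := fun y => (g y)⁻¹)
      (fun y hy => ((hderiv y hy).fun_inv (hf' y hy)).hasDerivWithinAt)
      (fun y hy => by
        rw [Real.norm_eq_abs, abs_div, abs_neg, abs_of_nonneg (sq_nonneg (g y))]
        exact (hratio y hy).le) hm hx
  set M := |(g m)⁻¹| + (d - c)
  have hM : ∀ x ∈ Ioo c d, 1 ≤ M * |g x| := by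
    intro x hx
    have h1 : |(g x)⁻¹| ≤ M := by
      have h2 : |x - m| ≤ d - c := abs_le.2 ⟨by linarith [hx.1, hm.2], by linarith [hx.2, hm.1]⟩
      have h3 := abs_sub_abs_le_abs_sub (g x)⁻¹ (g m)⁻¹
      have h4 := hlip x hx
      simp only [M]
      linarith
    calc 1 = |(g x)⁻¹| * |g x| := by
          rw [← abs_mul, inv_mul_cancel₀ (hf' x hx), abs_one]
      _ ≤ M * |g x| := by gcongr
  have hM' : ∀ x ∈ Icc c d, 1 ≤ M * |g x| := by
    intro x hx
    have hcl : closure (Ioo c d) = Icc c d := closure_Ioo hcd.ne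
    exact le_on_closure hM continuousOn_const
      (by rw [hcl]; exact continuousOn_const.mul hcont.abs) (by rwa [hcl])
  have hne : ∀ x ∈ Icc c d, g x ≠ 0 := by
    intro x hx h0
    have := hM' x hx
    rw [h0] at this
    norm_num at this
  exact ⟨hne c (left_mem_Icc.2 hcd.le), hne d (right_mem_Icc.2 hcd.le)⟩
end

section
/- Let f be a C² real-valued function on a compact interval [c,d] such that f' is nonvanishing on [c,d], |f''(x)|/(f'(x))² < 1 for all x ∈ (c,d), and sup_{x∈[c,d]} |f'(x)| > 2·inf_{x∈[c,d]} |f'(x)|. Let φ : [c,d] → ℂ be C¹. Then |∫_c^d e^{i f(x)} φ(x) dx| ≤ (7‖φ‖_{L^∞} + 3‖φ'‖_{L^1}) ∫_c^d min(1, |f''(x)| / (f'(x))²) dx. -/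
open Set MeasureTheory

/-!
Write `g = f'`, `h = |f''| / g²`, `m = min |g|` and `J = ∫ h`; on the interior `min 1 h = h`.
Since `|(1/g)'| = h`, the oscillation of `1/g` over `[c,d]` is at most `J`
(`abs_sub_le_integral_abs_deriv`). Comparing the points where `|g|` is smallest and largest, and
using `max |g| > 2 m`, this gives `1/m ≤ 1/(2m) + J`, i.e. `1/m ≤ 2 J`. Integrating
`e^{if} φ = (e^{if})' φ / (i g)` by parts, the boundary terms contribute at most
`2 ‖φ‖_∞ / m ≤ 4 J ‖φ‖_∞` and the remaining integral at most `‖φ'‖_1 / m + ‖φ‖_∞ J`. In total the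
integral is at most `(5 ‖φ‖_∞ + 2 ‖φ'‖_1) J`, which is stronger than the claim.
-/

lemma abs_sub_le_integral_abs_deriv {c d : ℝ} {u v : ℝ → ℝ}
    (hu : ContinuousOn u (Icc c d)) (hv : ContinuousOn v (Icc c d))
    (huv : ∀ x ∈ Ioo c d, HasDerivAt u (v x) x) {a b : ℝ} (ha : a ∈ Icc c d) (hb : b ∈ Icc c d) :
    |u b - u a| ≤ ∫ x in c..d, |v x| := by
  wlog hab : a ≤ b generalizing a b
  · rw [abs_sub_comm]
    exact this hb ha (le_of_not_ge hab)
  have hsub : Icc a b ⊆ Icc c d := Icc_subset_Icc ha.1 hb.2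
  have hftc : ∫ x in a..b, v x = u b - u a :=
    intervalIntegral.integral_eq_sub_of_hasDerivAt_of_le hab (hu.mono hsub)
      (fun x hx => huv x ⟨ha.1.trans_lt hx.1, hx.2.trans_le hb.2⟩)
      ((hv.mono hsub).intervalIntegrable_of_Icc hab)
  rw [← hftc]
  refine (intervalIntegral.abs_integral_le_integral_abs hab).trans ?_
  refine intervalIntegral.integral_mono_interval ha.1 hab hb.2
    (Filter.Eventually.of_forall fun x => abs_nonneg _) ?_
  exact hv.abs.intervalIntegrable_of_Icc (ha.1.trans ha.2)

/-- The estimate in terms of plain derivative data: `g = f'`, `k = f''`, `ψ = φ'`, with `S` a bound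
for `‖φ‖` and `A` a bound for `1 / |g|`. -/
lemma norm_integral_exp_mul_le {c d : ℝ} (hcd : c ≤ d) {f g k : ℝ → ℝ} {φ ψ : ℝ → ℂ} {S A : ℝ}
    (hf : ContinuousOn f (Icc c d)) (hg : ContinuousOn g (Icc c d))
    (hk : ContinuousOn k (Icc c d)) (hφ : ContinuousOn φ (Icc c d))
    (hψ : ContinuousOn ψ (Icc c d)) (hg0 : ∀ x ∈ Icc c d, g x ≠ 0)
    (hfg : ∀ x ∈ Ioo c d, HasDerivAt f (g x) x) (hgk : ∀ x ∈ Ioo c d, HasDerivAt g (k x) x)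
    (hφψ : ∀ x ∈ Ioo c d, HasDerivAt φ (ψ x) x)
    (hS : ∀ x ∈ Icc c d, ‖φ x‖ ≤ S) (hA : ∀ x ∈ Icc c d, |g x|⁻¹ ≤ A) :
    ‖∫ x in c..d, Complex.exp (Complex.I * (f x : ℂ)) * φ x‖ ≤
      2 * (S * A) + (A * (∫ x in c..d, ‖ψ x‖) + S * ∫ x in c..d, |k x| / g x ^ 2) := by
  set E : ℝ → ℂ := fun x => Complex.exp (Complex.I * (f x : ℂ)) with hE
  have hEn : ∀ x, ‖E x‖ = 1 := fun x => by
    rw [hE]; simp only [mul_comm Complex.I]; exact Complex.norm_exp_ofReal_mul_I _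
  have hEc : ContinuousOn E (Icc c d) := by
    have : ContinuousOn (fun x => (f x : ℂ)) (Icc c d) :=
      Complex.continuous_ofReal.comp_continuousOn hf
    exact Complex.continuous_exp.comp_continuousOn (continuousOn_const.mul this)
  have hgc : ContinuousOn (fun x => (g x : ℂ)) (Icc c d) :=
    Complex.continuous_ofReal.comp_continuousOn hg
  have hkc : ContinuousOn (fun x => (k x : ℂ)) (Icc c d) :=
    Complex.continuous_ofReal.comp_continuousOn hk
  have hg0c : ∀ x ∈ Icc c d, (g x : ℂ) ≠ 0 := fun x hx => by exact_mod_cast hg0 x hx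
  have hIg : ∀ x ∈ Icc c d, Complex.I * (g x : ℂ) ≠ 0 := fun x hx =>
    mul_ne_zero Complex.I_ne_zero (hg0c x hx)
  set F : ℝ → ℂ := fun x => E x * (φ x / (Complex.I * g x)) with hF
  set R : ℝ → ℂ := fun x => E x * (ψ x / (Complex.I * g x) - φ x * k x / (Complex.I * g x ^ 2))
    with hR
  have hFc : ContinuousOn F (Icc c d) :=
    hEc.mul (hφ.div (continuousOn_const.mul hgc) hIg)
  have hRc : ContinuousOn R (Icc c d) := by
    refine hEc.mul ((hψ.div (continuousOn_const.mul hgc) hIg).sub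
      ((hφ.mul hkc).div (continuousOn_const.mul (hgc.pow 2)) ?_))
    exact fun x hx => mul_ne_zero Complex.I_ne_zero (pow_ne_zero 2 (hg0c x hx))
  have hmain : ∀ x ∈ Ioo c d, HasDerivAt F (E x * φ x + R x) x := by
    intro x hx
    have h0 := hg0c x (Ioo_subset_Icc_self hx)
    have hE' : HasDerivAt E (E x * (Complex.I * g x)) x :=
      ((hfg x hx).ofReal_comp.const_mul Complex.I).cexp
    have hG' : HasDerivAt (fun x => Complex.I * (g x : ℂ)) (Complex.I * k x) x :=
      (hgk x hx).ofReal_comp.const_mul Complex.I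
    refine (hE'.mul ((hφψ x hx).div hG' (hIg x (Ioo_subset_Icc_self hx)))).congr_deriv ?_
    have hI := Complex.I_ne_zero
    simp only [hR, Pi.div_apply]
    field_simp
  have hint1 : IntervalIntegrable (fun x => E x * φ x) volume c d :=
    (hEc.mul hφ).intervalIntegrable_of_Icc hcd
  have hint2 : IntervalIntegrable R volume c d := hRc.intervalIntegrable_of_Icc hcd
  have hftc := intervalIntegral.integral_eq_sub_of_hasDerivAt_of_le hcd hFc hmain (hint1.add hint2)
  rw [intervalIntegral.integral_add hint1 hint2] at hftc
  have hval : ∫ x in c..d, E x * φ x = F d - F c - ∫ x in c..d, R x := by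
    rw [← hftc]; ring
  have hcm : c ∈ Icc c d := left_mem_Icc.2 hcd
  have hdm : d ∈ Icc c d := right_mem_Icc.2 hcd
  have hS0 : 0 ≤ S := (norm_nonneg _).trans (hS c hcm)
  have hFb : ∀ x ∈ Icc c d, ‖F x‖ ≤ S * A := by
    intro x hx
    have : ‖F x‖ = ‖φ x‖ * |g x|⁻¹ := by
      simp [hF, hEn, div_eq_mul_inv]
    rw [this]
    exact mul_le_mul (hS x hx) (hA x hx) (by positivity) hS0
  have hhc : ContinuousOn (fun x => |k x| / g x ^ 2) (Icc c d) :=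
    hk.abs.div (hg.pow 2) fun x hx => pow_ne_zero 2 (hg0 x hx)
  have hi3 : IntervalIntegrable (fun x => A * ‖ψ x‖) volume c d :=
    (continuousOn_const.mul hψ.norm).intervalIntegrable_of_Icc hcd
  have hi4 : IntervalIntegrable (fun x => S * (|k x| / g x ^ 2)) volume c d :=
    (continuousOn_const.mul hhc).intervalIntegrable_of_Icc hcd
  have hRb : ‖∫ x in c..d, R x‖ ≤
      A * (∫ x in c..d, ‖ψ x‖) + S * ∫ x in c..d, |k x| / g x ^ 2 := by
    rw [← intervalIntegral.integral_const_mul, ← intervalIntegral.integral_const_mul,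
      ← intervalIntegral.integral_add hi3 hi4]
    refine (intervalIntegral.norm_integral_le_integral_norm hcd).trans ?_
    refine intervalIntegral.integral_mono_on hcd hint2.norm (hi3.add hi4) fun x hx => ?_
    have h1 : ‖ψ x / (Complex.I * g x)‖ = |g x|⁻¹ * ‖ψ x‖ := by
      simp [div_eq_mul_inv, mul_comm]
    have h2 : ‖φ x * k x / (Complex.I * g x ^ 2)‖ = ‖φ x‖ * (|k x| / g x ^ 2) := by
      simp [mul_div_assoc]
    simp only [hR, norm_mul, hEn, one_mul]
    refine (norm_sub_le _ _).trans ?_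
    rw [h1, h2]
    exact add_le_add (mul_le_mul_of_nonneg_right (hA x hx) (norm_nonneg _))
      (mul_le_mul_of_nonneg_right (hS x hx) (by positivity))
  rw [hval]
  have := norm_sub_le (F d - F c) (∫ x in c..d, R x)
  have := norm_sub_le (F d) (F c)
  linarith [hFb c hcm, hFb d hdm]

/-- **Estimate (5.12') for type 1 intervals.** Let `f` be `C²` on a compact interval `[c,d]`
with `f'` nonvanishing on `[c,d]`, `|f''(x)|/(f'(x))² < 1` on `(c,d)`, and
`sup_{[c,d]}|f'| > 2·inf_{[c,d]}|f'|`. Let `φ : [c,d] → ℂ` be `C¹`. Then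
`|∫_c^d e^{i f} φ| ≤ (7‖φ‖_∞ + 3‖φ'‖_{L¹}) ∫_c^d min(1, |f''|/(f')²)`. -/
theorem stmt15 (c d : ℝ) (hcd : c ≤ d) (f : ℝ → ℝ)
    (hf : ContDiffOn ℝ 2 f (Icc c d))
    (hf' : ∀ x ∈ Icc c d, iteratedDerivWithin 1 f (Icc c d) x ≠ 0)
    (hratio : ∀ x ∈ Ioo c d,
      |iteratedDerivWithin 2 f (Icc c d) x| / (iteratedDerivWithin 1 f (Icc c d) x) ^ 2 < 1)
    (htype1 : sSup ((fun x => |iteratedDerivWithin 1 f (Icc c d) x|) '' Icc c d) >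
      2 * sInf ((fun x => |iteratedDerivWithin 1 f (Icc c d) x|) '' Icc c d))
    (φ : ℝ → ℂ) (hφ : ContDiffOn ℝ 1 φ (Icc c d)) :
    ‖∫ x in c..d, Complex.exp (Complex.I * (f x : ℂ)) * φ x‖ ≤
      (7 * sSup ((fun x => ‖φ x‖) '' Icc c d) +
        3 * ∫ x in c..d, ‖derivWithin φ (Icc c d) x‖) *
      ∫ x in c..d, min 1
        (|iteratedDerivWithin 2 f (Icc c d) x| / (iteratedDerivWithin 1 f (Icc c d) x) ^ 2) := by
  rcases hcd.eq_or_lt with rfl | hlt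
  · simp
  have hU : UniqueDiffOn ℝ (Icc c d) := uniqueDiffOn_Icc hlt
  have hkc : ContinuousOn (iteratedDerivWithin 2 f (Icc c d)) (Icc c d) :=
    hf.continuousOn_iteratedDerivWithin le_rfl hU
  have hgc : ContinuousOn (iteratedDerivWithin 1 f (Icc c d)) (Icc c d) :=
    hf.continuousOn_iteratedDerivWithin (by norm_num) hU
  have hψc : ContinuousOn (derivWithin φ (Icc c d)) (Icc c d) :=
    hφ.continuousOn_derivWithin hU le_rfl
  have hfg : ∀ x ∈ Ioo c d, HasDerivAt f (iteratedDerivWithin 1 f (Icc c d) x) x := by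
    intro x hx
    rw [iteratedDerivWithin_one]
    exact ((hf.differentiableOn (by norm_num) x
      (Ioo_subset_Icc_self hx)).hasDerivWithinAt).hasDerivAt (Icc_mem_nhds hx.1 hx.2)
  have hgk : ∀ x ∈ Ioo c d, HasDerivAt (iteratedDerivWithin 1 f (Icc c d))
      (iteratedDerivWithin 2 f (Icc c d) x) x := by
    intro x hx
    rw [iteratedDerivWithin_succ (n := 1)]
    exact ((hf.differentiableOn_iteratedDerivWithin (m := 1) (by norm_num) hU x
      (Ioo_subset_Icc_self hx)).hasDerivWithinAt).hasDerivAt (Icc_mem_nhds hx.1 hx.2)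
  have hφψ : ∀ x ∈ Ioo c d, HasDerivAt φ (derivWithin φ (Icc c d) x) x := fun x hx =>
    ((hφ.differentiableOn (by norm_num) x
      (Ioo_subset_Icc_self hx)).hasDerivWithinAt).hasDerivAt (Icc_mem_nhds hx.1 hx.2)
  -- The values at the two endpoints, where the ratio may equal `1`, form a null set.
  have hmin : ∫ x in c..d, min 1
        (|iteratedDerivWithin 2 f (Icc c d) x| / (iteratedDerivWithin 1 f (Icc c d) x) ^ 2) =
      ∫ x in c..d,
        |iteratedDerivWithin 2 f (Icc c d) x| / (iteratedDerivWithin 1 f (Icc c d) x) ^ 2 := by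
    rw [intervalIntegral.integral_of_le hcd, intervalIntegral.integral_of_le hcd,
      integral_Ioc_eq_integral_Ioo, integral_Ioc_eq_integral_Ioo]
    exact setIntegral_congr_fun measurableSet_Ioo fun x hx => min_eq_right (hratio x hx).le
  rw [hmin]
  generalize iteratedDerivWithin 2 f (Icc c d) = k at *
  generalize iteratedDerivWithin 1 f (Icc c d) = g at *
  generalize derivWithin φ (Icc c d) = ψ at *
  have hne : (Icc c d).Nonempty := nonempty_Icc.2 hcd
  have hSb : ∀ x ∈ Icc c d, ‖φ x‖ ≤ sSup ((fun x => ‖φ x‖) '' Icc c d) := fun x hx =>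
    le_csSup (isCompact_Icc.bddAbove_image hφ.continuousOn.norm) (mem_image_of_mem _ hx)
  obtain ⟨x₀, hx₀, hx₀e, hx₀m⟩ := isCompact_Icc.exists_sInf_image_eq_and_le hne hgc.abs
  obtain ⟨x₁, hx₁, hx₁e, -⟩ := isCompact_Icc.exists_sSup_image_eq_and_ge hne hgc.abs
  rw [hx₀e, hx₁e] at htype1
  have hpos : 0 < |g x₀| := abs_pos.2 (hf' x₀ hx₀)
  have hosc : |(g x₀)⁻¹ - (g x₁)⁻¹| ≤ ∫ x in c..d, |k x| / g x ^ 2 := by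
    have := abs_sub_le_integral_abs_deriv (u := fun x => (g x)⁻¹) (v := fun x => -k x / g x ^ 2)
      (hgc.inv₀ hf') (hkc.neg.div (hgc.pow 2) fun x hx => pow_ne_zero 2 (hf' x hx))
      (fun x hx => (hgk x hx).inv (hf' x (Ioo_subset_Icc_self hx))) hx₁ hx₀
    simpa [abs_div] using this
  have hA0 : |g x₀|⁻¹ ≤ 2 * ∫ x in c..d, |k x| / g x ^ 2 := by
    have h1 : |g x₁|⁻¹ ≤ |g x₀|⁻¹ / 2 := by
      rw [div_eq_mul_inv, ← mul_inv]
      exact inv_anti₀ (by positivity) (by linarith)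
    have h2 := abs_sub_abs_le_abs_sub (g x₀)⁻¹ (g x₁)⁻¹
    rw [abs_inv, abs_inv] at h2
    linarith
  have hA : ∀ x ∈ Icc c d, |g x|⁻¹ ≤ 2 * ∫ x in c..d, |k x| / g x ^ 2 := fun x hx =>
    (inv_anti₀ hpos (hx₀m x hx)).trans hA0
  refine (norm_integral_exp_mul_le hcd hf.continuousOn hgc hkc hφ.continuousOn hψc hf' hfg hgk hφψ
    hSb hA).trans ?_
  have hS0 := (norm_nonneg _).trans (hSb x₀ hx₀)
  have hJ0 : 0 ≤ ∫ x in c..d, |k x| / g x ^ 2 := (abs_nonneg _).trans hosc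
  have hP0 : 0 ≤ ∫ x in c..d, ‖ψ x‖ :=
    intervalIntegral.integral_nonneg hcd fun x _ => norm_nonneg _
  nlinarith [mul_nonneg hS0 hJ0, mul_nonneg hP0 hJ0]
end
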